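/- arXiv:2107.06674 — 8 statements merged into one kernel-verified Lean document; each statement's English description precedes it below -/
import Mathlib

section
/- Let G be a finite group, N a normal subgroup of G, and A ⊆ G a nonempty symmetric subset. Let K ≥ 1 be a real number and k ≥ 1 a natural number. Suppose |A^3| ≤ K·|A|, that A^k contains some left coset xN of N, and that every group homomorphism from N to GL_d(ℂ) with nontrivial image satisfies d ≥ K^{3k}. Then A^3 contains a left coset of N. In particular, if A^k = G and every group homomorphism from G to GL_d(ℂ) with nontrivial image satisfies d ≥ K^{3k}, then A^3 = G. -/
open scoped Pointwise
open Matrix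

set_option synthInstance.maxHeartbeats 400000
set_option maxHeartbeats 1000000


section aux
open scoped ComplexOrder

lemma aux_trace {n : Type} [Fintype n] [DecidableEq n] (H : Matrix n n ℂ) (hH : H.PosSemidef) (μ : ℝ) (hμ : 0 ≤ μ) :
    μ * (Module.finrank ℂ (Module.End.eigenspace (Matrix.toLin' H) (μ : ℂ)) : ℝ) ≤ (H.trace).re := by
  have hs := isSymmetric_toEuclideanLin_iff.mpr hH.1
  have h1 := hs.card_filter_eigenvalues_eq finrank_euclideanSpace (μ : ℂ)
  have h2 : Module.finrank ℂ (Module.End.eigenspace (Matrix.toLin' H) (μ : ℂ)) ≤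
      Module.finrank ℂ (Module.End.eigenspace (Matrix.toEuclideanLin H) (μ : ℂ)) := by
    rw [← LinearEquiv.finrank_map_eq (WithLp.linearEquiv 2 ℂ (n → ℂ)).symm]
    apply Submodule.finrank_mono
    rintro _ ⟨v, hv, rfl⟩
    have hv' : H *ᵥ v = (μ : ℂ) • v := by
      simpa using hv
    rw [Module.End.mem_eigenspace_iff]
    ext i
    simpa using congrFun hv' i
  have h3 : H.trace.re = ∑ i, hH.1.eigenvalues i := by
    rw [hH.1.trace_eq_sum_eigenvalues]; simp
  have h4 : ∑ i, hH.1.eigenvalues i = ∑ i, hs.eigenvalues finrank_euclideanSpace i := by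
    unfold IsHermitian.eigenvalues IsHermitian.eigenvalues₀
    exact Equiv.sum_comp (Fintype.equivOfCardEq (Fintype.card_fin _)).symm (hs.eigenvalues finrank_euclideanSpace)
  have h5 : ∀ i, 0 ≤ hs.eigenvalues finrank_euclideanSpace i := by
    intro i
    have := hH.eigenvalues_nonneg (Fintype.equivOfCardEq (Fintype.card_fin _) i)
    simpa [IsHermitian.eigenvalues, IsHermitian.eigenvalues₀] using this
  rw [h3, h4]
  calc _ ≤ μ * (Module.finrank ℂ (Module.End.eigenspace (Matrix.toEuclideanLin H) (μ : ℂ)) : ℝ) := by gcongr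
    _ = ∑ i ∈ Finset.univ.filter (fun i => ((hs.eigenvalues finrank_euclideanSpace i : ℝ) : ℂ) = (μ:ℂ)), μ := by
      rw [← h1]; simp [mul_comm]
    _ = ∑ i ∈ Finset.univ.filter (fun i => ((hs.eigenvalues finrank_euclideanSpace i : ℝ) : ℂ) = (μ:ℂ)), hs.eigenvalues finrank_euclideanSpace i := by
      apply Finset.sum_congr rfl
      intro i hi
      simp only [Finset.mem_filter] at hi
      exact_mod_cast hi.2.symm
    _ ≤ _ := Finset.sum_le_sum_of_subset_of_nonneg (Finset.filter_subset _ _) (fun i _ _ => h5 i)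

noncomputable def rtr (N : Type) [Group N] : N →* Module.End ℂ (N → ℂ) where
  toFun u := LinearMap.funLeft ℂ ℂ (fun g => g * u)
  map_one' := by ext; simp
  map_mul' a b := by ext; simp [LinearMap.funLeft, mul_assoc, Function.comp_def]

lemma aux_dim {N : Type} [Group N] [Fintype N] (c : ℝ)
    (hqr : ∀ (d : ℕ) (φ : N →* GL (Fin d) ℂ), φ.range ≠ ⊥ → c ≤ (d : ℝ))
    (E : Submodule ℂ (N → ℂ)) (hE : ∀ u, ∀ v ∈ E, rtr N u v ∈ E)
    (v : N → ℂ) (hv : v ∈ E) (u : N) (hu : rtr N u v ≠ v) : c ≤ (Module.finrank ℂ E : ℝ) := by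
  let ρ : N →* Module.End ℂ E :=
    { toFun := fun u => (rtr N u).restrict (hE u)
      map_one' := by ext; simp
      map_mul' := fun a b => by ext; simp }
  let φ : N →* Matrix (Fin (Module.finrank ℂ E)) (Fin (Module.finrank ℂ E)) ℂ :=
    ((LinearMap.toMatrixAlgEquiv (Module.finBasis ℂ E) : _ →* _)).comp ρ
  apply hqr _ φ.toHomUnits
  intro h
  have h1 : φ.toHomUnits u = 1 := by
    rw [← Subgroup.mem_bot, ← h]; exact ⟨u, rfl⟩
  have h2 : φ u = 1 := by simpa using congrArg Units.val h1
  have h3 : ρ u = 1 := by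
    apply (LinearMap.toMatrixAlgEquiv (Module.finBasis ℂ E)).injective
    simpa [φ] using h2
  apply hu
  have := congrArg Subtype.val (LinearMap.congr_fun h3 ⟨v, hv⟩)
  simpa [ρ] using this

lemma aux_norm {N : Type} [Group N] [Fintype N] [DecidableEq N] (c : ℝ) (hc : 0 < c)
    (hqr : ∀ (d : ℕ) (φ : N →* GL (Fin d) ℂ), φ.range ≠ ⊥ → c ≤ (d : ℝ))
    (F : N → ℂ) (hF : ∑ g, F g = 0) (v : N → ℂ) :
    c * ∑ g, ‖∑ h, F (g * h⁻¹) * v h‖ ^ 2 ≤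
      (Fintype.card N * ∑ g, ‖F g‖ ^ 2) * ∑ g, ‖v g‖ ^ 2 := by
  let M : Matrix N N ℂ := Matrix.of fun g h => F (g * h⁻¹)
  let H : Matrix N N ℂ := Mᴴ * M
  have hH : H.PosSemidef := posSemidef_conjTranspose_mul_self M
  have htr : H.trace.re = Fintype.card N * ∑ g, ‖F g‖ ^ 2 := by
    have : H.trace = ∑ h, ∑ g, ((‖F (g * h⁻¹)‖ ^ 2 : ℝ) : ℂ) := by
      simp [H, M, Matrix.trace, Matrix.mul_apply, ← Complex.conj_mul']
    rw [this]
    have : ∀ h : N, ∑ g, ((‖F (g * h⁻¹)‖ ^ 2 : ℝ) : ℂ) = ∑ g, ((‖F g‖ ^ 2 : ℝ) : ℂ) := fun h =>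
      Equiv.sum_comp (Equiv.mulRight h⁻¹) (fun g => ((‖F g‖ ^ 2 : ℝ) : ℂ))
    simp only [this]
    rw [← Complex.ofReal_sum]
    simp only [Finset.sum_const, Finset.card_univ, nsmul_eq_mul]
    rw [← Complex.ofReal_natCast, ← Complex.ofReal_mul, Complex.ofReal_re]
  -- commutation
  have hMc : ∀ u w, M *ᵥ (rtr N u w) = rtr N u (M *ᵥ w) := by
    intro u w
    ext g
    simp only [M, rtr, Matrix.mulVec, dotProduct, MonoidHom.coe_mk, OneHom.coe_mk, LinearMap.funLeft_apply, of_apply]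
    rw [← Equiv.sum_comp (Equiv.mulRight u) (fun x => F (g * u * x⁻¹) * w x)]
    simp [mul_assoc]
  have hMc' : ∀ u w, Mᴴ *ᵥ (rtr N u w) = rtr N u (Mᴴ *ᵥ w) := by
    intro u w
    ext g
    simp only [M, rtr, Matrix.mulVec, dotProduct, MonoidHom.coe_mk, OneHom.coe_mk, LinearMap.funLeft_apply, of_apply, conjTranspose_apply]
    rw [← Equiv.sum_comp (Equiv.mulRight u) (fun x => star (F (x * (g * u)⁻¹)) * w x)]
    simp [mul_assoc]
  have hHc : ∀ u w, H *ᵥ (rtr N u w) = rtr N u (H *ᵥ w) := by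
    intro u w
    simp only [H, ← Matrix.mulVec_mulVec, hMc, hMc']
  have hconst : ∀ w : N → ℂ, (∀ u, rtr N u w = w) → H *ᵥ w = 0 := by
    intro w hw
    have hw' : ∀ u, w u = w 1 := by
      intro u
      have := congrFun (hw u) 1
      simpa [rtr, LinearMap.funLeft_apply] using this
    have : M *ᵥ w = 0 := by
      ext g
      simp only [M, Matrix.mulVec, dotProduct, of_apply, hw', ← Finset.sum_mul]
      have := Equiv.sum_comp ((Equiv.inv N).trans (Equiv.mulLeft g)) F
      simp only [Equiv.trans_apply, Equiv.inv_apply, Equiv.coe_mulLeft] at this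
      rw [this, hF]
      simp
    simp only [H, ← Matrix.mulVec_mulVec, this, Matrix.mulVec_zero]
  have hTr0 : 0 ≤ H.trace.re := by rw [htr]; positivity
  have hev : ∀ (μ : ℝ) (w : N → ℂ), w ≠ 0 → H *ᵥ w = (μ : ℂ) • w → μ * c ≤ H.trace.re := by
    intro μ w hw0 hw
    rcases le_or_gt μ 0 with hμ | hμ
    · exact le_trans (mul_nonpos_of_nonpos_of_nonneg hμ hc.le) hTr0
    refine le_trans ?_ (aux_trace H hH μ hμ.le)
    refine mul_le_mul_of_nonneg_left ?_ hμ.le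
    have hmem : w ∈ Module.End.eigenspace (Matrix.toLin' H) (μ : ℂ) := by
      rw [Module.End.mem_eigenspace_iff]; simpa using hw
    have : ∃ u, rtr N u w ≠ w := by
      by_contra! hcon
      have := hconst w hcon
      rw [hw] at this
      rcases smul_eq_zero.mp this with h | h
      · exact hμ.ne' (by exact_mod_cast h)
      · exact hw0 h
    obtain ⟨u, hu⟩ := this
    refine aux_dim c hqr _ ?_ w hmem u hu
    intro u x hx
    rw [Module.End.mem_eigenspace_iff, Matrix.toLin'_apply] at hx ⊢
    rw [hHc, hx, map_smul]
  set t := H.trace.re with ht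
  have hherm : (((t / c : ℝ) : ℂ) • (1 : Matrix N N ℂ) - H).IsHermitian := by
    apply IsHermitian.sub _ hH.1
    simp [IsHermitian, conjTranspose_smul]
  have hpos : (((t / c : ℝ) : ℂ) • (1 : Matrix N N ℂ) - H).PosSemidef := by
    rw [hherm.posSemidef_iff_eigenvalues_nonneg]
    intro i
    have h1 := hherm.mulVec_eigenvectorBasis i
    have h0 : (⇑(hherm.eigenvectorBasis i) : N → ℂ) ≠ 0 := by
      intro h
      apply hherm.eigenvectorBasis.orthonormal.ne_zero i
      ext j; exact congrFun h j
    have h2 := hev (t / c - hherm.eigenvalues i) _ h0 (by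
      rw [Matrix.sub_mulVec, Matrix.smul_mulVec, Matrix.one_mulVec] at h1
      push_cast
      rw [sub_smul]
      rw [eq_sub_iff_add_eq, ← eq_sub_iff_add_eq', ]
      ext j
      have := congrFun h1 j
      simp at this ⊢
      rw [this])
    rw [sub_mul, div_mul_cancel₀ _ hc.ne'] at h2
    have : 0 ≤ hherm.eigenvalues i * c := by linarith
    exact nonneg_of_mul_nonneg_left this hc
  have hfin := hpos.re_dotProduct_nonneg v
  rw [Matrix.sub_mulVec, Matrix.smul_mulVec, Matrix.one_mulVec, dotProduct_sub, dotProduct_smul] at hfin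
  have e1 : star v ⬝ᵥ v = ((∑ g, ‖v g‖ ^ 2 : ℝ) : ℂ) := by
    simp [dotProduct, Complex.conj_mul']
  have e2 : star v ⬝ᵥ (H *ᵥ v) = ((∑ g, ‖∑ h, F (g * h⁻¹) * v h‖ ^ 2 : ℝ) : ℂ) := by
    have : star v ⬝ᵥ (H *ᵥ v) = star (M *ᵥ v) ⬝ᵥ (M *ᵥ v) := by
      simp only [H]
      rw [← Matrix.mulVec_mulVec, Matrix.dotProduct_mulVec, Matrix.star_mulVec]
    rw [this]
    simp [dotProduct, ← Complex.conj_mul', M, Matrix.mulVec]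
  rw [e1, e2, smul_eq_mul, ← Complex.ofReal_mul, ← Complex.ofReal_sub] at hfin
  simp only [RCLike.re_to_complex, Complex.ofReal_re] at hfin
  rw [← htr]
  have : c * (t / c * ∑ g, ‖v g‖ ^ 2) = t * ∑ g, ‖v g‖ ^ 2 := by field_simp
  rw [← this]
  apply mul_le_mul_of_nonneg_left _ hc.le
  linarith

end aux

lemma aux_gowers {N : Type} [Group N] [Fintype N] [DecidableEq N] (c : ℝ) (hc : 0 < c)
    (hqr : ∀ (d : ℕ) (φ : N →* GL (Fin d) ℂ), φ.range ≠ ⊥ → c ≤ (d : ℝ))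
    (X Y Z : Finset N)
    (h : (Fintype.card N : ℝ) ^ 3 < c * (X.card * Y.card * Z.card)) (g : N) :
    ∃ x ∈ X, ∃ y ∈ Y, ∃ z ∈ Z, x * y * z = g := by
  by_contra! hcon
  set n : ℝ := (Fintype.card N : ℝ) with hn
  have hn0 : 0 < n := by rw [hn]; exact_mod_cast Fintype.card_pos
  set a : ℝ := (X.card : ℝ)
  set b : ℝ := (Y.card : ℝ)
  set e : ℝ := (Z.card : ℝ)
  have ha : 0 ≤ a := by positivity
  have hb : 0 ≤ b := by positivity
  have he : 0 ≤ e := by positivity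
  let F : N → ℂ := fun x => (((if x ∈ X then 1 else 0) - a / n : ℝ) : ℂ)
  let v : N → ℂ := fun y => (((if y ∈ Y then 1 else 0) : ℝ) : ℂ)
  have hF : ∑ x, F x = 0 := by
    simp only [F]
    rw [← Complex.ofReal_sum, Finset.sum_sub_distrib]
    simp only [Finset.sum_const, Finset.card_univ, nsmul_eq_mul, Finset.sum_boole, ← hn]
    rw [mul_div_cancel₀ _ hn0.ne']
    simp [a]
  have key := aux_norm c hc hqr F hF v
  have hF2 : ∑ x, ‖F x‖ ^ 2 ≤ a := by
    have : ∀ x, ‖F x‖ ^ 2 = (if x ∈ X then 1 else 0) * (1 - 2 * (a / n)) + (a / n) ^ 2 := by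
      intro x
      simp only [F, Complex.norm_real, Real.norm_eq_abs, sq_abs]
      split_ifs <;> ring
    simp only [this]
    rw [Finset.sum_add_distrib, ← Finset.sum_mul]
    simp only [Finset.sum_const, Finset.card_univ, nsmul_eq_mul, Finset.sum_boole, ← hn]
    have h1 : n * (a / n) ^ 2 = a * (a / n) := by field_simp
    rw [h1]
    have h2 : 0 ≤ a * (a / n) := by positivity
    have h3 : ((Finset.univ.filter (· ∈ X)).card : ℝ) = a := by simp [a]
    rw [h3]
    linarith
  have hv2 : ∑ x, ‖v x‖ ^ 2 = b := by
    have : ∀ x, ‖v x‖ ^ 2 = if x ∈ Y then 1 else 0 := by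
      intro x
      simp only [v]
      split_ifs <;> simp
    simp only [this, Finset.sum_boole]
    simp [b]
  have hval : ∀ z ∈ Z, ∑ y, F (g * z⁻¹ * y⁻¹) * v y = ((- (a / n * b) : ℝ) : ℂ) := by
    intro z hz
    have : ∀ y, F (g * z⁻¹ * y⁻¹) * v y = (((if y ∈ Y then 1 else 0) * (-(a / n)) : ℝ) : ℂ) := by
      intro y
      simp only [F, v]
      by_cases hy : y ∈ Y
      · have hx : g * z⁻¹ * y⁻¹ ∉ X := by
          intro hx
          exact hcon _ hx y hy z hz (by group)
        simp [hy, hx]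
      · simp [hy]
    simp only [this]
    rw [← Complex.ofReal_sum, ← Finset.sum_mul, Finset.sum_boole]
    congr 1
    have h3 : ((Finset.univ.filter (· ∈ Y)).card : ℝ) = b := by simp [b]
    rw [h3]; ring
  have hlow : e * (a / n * b) ^ 2 ≤ ∑ g, ‖∑ h, F (g * h⁻¹) * v h‖ ^ 2 := by
    have hinj : Function.Injective (fun z : N => g * z⁻¹) := by
      intro p q hpq
      simpa using hpq
    calc e * (a / n * b) ^ 2 = ∑ z ∈ Z, ‖∑ y, F (g * z⁻¹ * y⁻¹) * v y‖ ^ 2 := by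
          rw [Finset.sum_congr rfl (fun z hz => by rw [hval z hz])]
          simp only [Complex.norm_real, Real.norm_eq_abs, sq_abs, Finset.sum_const, nsmul_eq_mul, e]
          ring
      _ = ∑ w ∈ Z.image (fun z : N => g * z⁻¹), ‖∑ y, F (w * y⁻¹) * v y‖ ^ 2 := by
          rw [Finset.sum_image (fun p _ q _ hpq => hinj hpq)]
      _ ≤ _ := Finset.sum_le_sum_of_subset_of_nonneg (Finset.subset_univ _) (fun _ _ _ => by positivity)
  rw [hv2] at key
  have k1 : c * (e * (a / n * b) ^ 2) ≤ n * a * b :=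
    calc _ ≤ _ := mul_le_mul_of_nonneg_left hlow hc.le
      _ ≤ _ := key
      _ ≤ _ := by gcongr
  have hab : 0 < a * b := by
    have h0 : 0 < c * (a * b * e) := lt_trans (by positivity) h
    have h1 : 0 < a * b * e := pos_of_mul_pos_right h0 hc.le
    exact pos_of_mul_pos_left h1 he
  have k2 : c * (e * (a / n * b) ^ 2) * n ^ 2 = (c * (a * b * e)) * (a * b) := by
    field_simp
  have k3 : (c * (a * b * e)) * (a * b) ≤ n ^ 3 * (a * b) := by
    rw [← k2]
    calc _ ≤ n * a * b * n ^ 2 := by gcongr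
      _ = _ := by ring
  have := le_of_mul_le_mul_right k3 hab
  linarith

lemma aux_pigeon {G : Type} [Group G] [Fintype G] [DecidableEq G] (N : Subgroup G) [N.Normal]
    (A : Finset G) (hne : A.Nonempty) (hsym : A⁻¹ = A)
    (K : ℝ) (k : ℕ) (hk : 2 ≤ k)
    (htrip : ((A ^ 3).card : ℝ) ≤ K * (A.card : ℝ))
    (x : G) (hx : ∀ u ∈ N, x * u ∈ A ^ k) :
    ∃ z ∈ A, ∃ B : Finset N, (∀ u ∈ B, z * (u : G) ∈ A) ∧
      (Nat.card N : ℝ) ≤ K ^ (k - 1) * B.card := by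
  classical
  have h1 : ((A ^ (k + 1)).card : ℝ) ≤ K ^ (k - 1) * A.card :=
    Finset.small_pow_of_small_tripling (by omega) htrip hsym
  let Q : Finset (G ⧸ N) := A.image (fun a : G => (a : G ⧸ N))
  have hs : ∀ q : G ⧸ N, ∃ a : G, q ∈ Q → a ∈ A ∧ (a : G ⧸ N) = q := by
    intro q
    by_cases hq : q ∈ Q
    · obtain ⟨a, ha, rfl⟩ := Finset.mem_image.mp hq
      exact ⟨a, fun _ => ⟨ha, rfl⟩⟩
    · exact ⟨1, fun h => absurd h hq⟩
  choose s hs using hs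
  have h2 : Q.card * Nat.card N ≤ (A ^ (k + 1)).card := by
    rw [Nat.card_eq_fintype_card, ← Finset.card_univ (α := N), ← Finset.card_product]
    apply Finset.card_le_card_of_injOn (fun p => s p.1 * (x * (p.2 : G)))
    · intro p hp
      have hp1 : p.1 ∈ Q := (Finset.mem_product.mp hp).1
      rw [pow_succ']
      exact Finset.mul_mem_mul (hs _ hp1).1 (hx _ p.2.2)
    · rintro ⟨q, u⟩ hp ⟨q', u'⟩ hp' heq
      have hp1 : q ∈ Q := (Finset.mem_product.mp hp).1
      have hp2 : q' ∈ Q := (Finset.mem_product.mp hp').1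
      simp only at heq
      have e1 : q = q' := by
        have := congrArg (fun g : G => (g : G ⧸ N)) heq
        simp only [QuotientGroup.mk_mul, (hs _ hp1).2, (hs _ hp2).2,
          (QuotientGroup.eq_one_iff (u : G)).mpr u.2, (QuotientGroup.eq_one_iff (u' : G)).mpr u'.2] at this
        simpa using this
      subst e1
      simpa using heq
  by_contra! hcon
  have h3 : ∀ q ∈ Q, K ^ (k - 1) * ((A.filter (fun a : G => (a : G ⧸ N) = q)).card : ℝ) < Nat.card N := by
    intro q hq
    have hB := hcon (s q) (hs q hq).1 (Finset.univ.filter (fun u : N => s q * (u : G) ∈ A)) (by simp)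
    have : (A.filter (fun a : G => (a : G ⧸ N) = q)).card = (Finset.univ.filter (fun u : N => s q * (u : G) ∈ A)).card := by
      symm
      apply Finset.card_bij (fun (u : N) _ => s q * (u : G))
      · intro u hu
        simp only [Finset.mem_filter, Finset.mem_univ, true_and] at hu ⊢
        refine ⟨hu, ?_⟩
        rw [QuotientGroup.mk_mul, (QuotientGroup.eq_one_iff (u : G)).mpr u.2, mul_one, (hs q hq).2]
      · intro u _ u' _ h
        simpa using h
      · intro a ha
        simp only [Finset.mem_filter] at ha
        have : (s q)⁻¹ * a ∈ N := by
          rw [← QuotientGroup.eq, (hs q hq).2, ha.2]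
        exact ⟨⟨_, this⟩, by simp [ha.1], by simp⟩
    rw [this]; exact hB
  have h4 : K ^ (k - 1) * (A.card : ℝ) < Q.card * Nat.card N := by
    have : A.card = ∑ q ∈ Q, (A.filter (fun a : G => (a : G ⧸ N) = q)).card :=
      Finset.card_eq_sum_card_image _ _
    rw [this]
    push_cast
    rw [Finset.mul_sum]
    calc _ < ∑ q ∈ Q, (Nat.card N : ℝ) := Finset.sum_lt_sum_of_nonempty (hne.image _) h3
      _ = _ := by simp
  have h5 : (Q.card * Nat.card N : ℝ) ≤ (A ^ (k + 1)).card := by exact_mod_cast h2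
  linarith

lemma aux_main {G : Type} [Group G] [Fintype G] [DecidableEq G] (N : Subgroup G) [N.Normal]
    (A : Finset G) (hne : A.Nonempty) (hsym : A⁻¹ = A)
    (K : ℝ) (hK : 1 ≤ K) (k : ℕ) (hk : 1 ≤ k)
    (htrip : ((A ^ 3).card : ℝ) ≤ K * (A.card : ℝ))
    (x : G) (hx : ∀ u ∈ N, x * u ∈ A ^ k)
    (hqr : ∀ (d : ℕ) (φ : ↥N →* GL (Fin d) ℂ), φ.range ≠ ⊥ → K ^ (3 * k) ≤ (d : ℝ)) :
    ∃ y : G, ∀ u ∈ N, y * u ∈ A ^ 3 := by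
  classical
  have m3 : ∀ a ∈ A, ∀ b ∈ A, ∀ c ∈ A, a * b * c ∈ A ^ 3 := by
    intro a ha b hb c hc
    rw [pow_succ, pow_two]
    exact Finset.mul_mem_mul (Finset.mul_mem_mul ha hb) hc
  rcases hk.eq_or_lt with rfl | hk
  · obtain ⟨a, ha⟩ := hne
    have ha' : a⁻¹ ∈ A := by rw [← hsym]; exact Finset.inv_mem_inv ha
    refine ⟨x, fun u hu => ?_⟩
    have h1 : x * u ∈ A := by simpa using hx u hu
    simpa using m3 _ ha _ ha' _ h1
  obtain ⟨z, hz, B, hB, hc⟩ := aux_pigeon N A hne hsym K k hk htrip x hx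
  refine ⟨z ^ 3, ?_⟩
  rw [Nat.card_eq_fintype_card] at hc
  rcases hK.eq_or_lt with rfl | hK1
  · have : B = Finset.univ := by
      rw [← Finset.card_eq_iff_eq_univ]
      apply le_antisymm (Finset.card_le_univ _)
      simpa using hc
    intro u hu
    have h1 := hB ⟨u, hu⟩ (by simp [this])
    have := m3 z hz z hz _ h1
    convert this using 1
    simp only [pow_succ, pow_zero, one_mul, mul_assoc]
  have hn0 : (0 : ℝ) < Fintype.card N := by exact_mod_cast Fintype.card_pos
  have hm : (0 : ℝ) < B.card :=
    pos_of_mul_pos_right (lt_of_lt_of_le hn0 hc) (by positivity)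
  have hlt : (Fintype.card N : ℝ) < K ^ k * B.card := by
    refine lt_of_le_of_lt hc ?_
    apply mul_lt_mul_of_pos_right _ hm
    exact pow_lt_pow_right₀ hK1 (by omega)
  let f1 : MulAut N := MulAut.conjNormal (z ^ 2)⁻¹
  let f2 : MulAut N := MulAut.conjNormal z⁻¹
  have hg := aux_gowers (K ^ (3 * k)) (by positivity) hqr (B.image f1) (B.image f2) B (by
    rw [Finset.card_image_of_injective _ f1.injective, Finset.card_image_of_injective _ f2.injective]
    calc _ < (K ^ k * B.card : ℝ) ^ 3 := by gcongr
      _ = _ := by rw [mul_comm 3 k, pow_mul]; ring)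
  intro u hu
  obtain ⟨_, hx1, _, hy1, w, hw, he⟩ := hg ⟨u, hu⟩
  obtain ⟨p, hp, rfl⟩ := Finset.mem_image.mp hx1
  obtain ⟨q, hq, rfl⟩ := Finset.mem_image.mp hy1
  have he' := congrArg (Subtype.val) he
  simp only [f1, f2, Subgroup.coe_mul, MulAut.conjNormal_apply] at he'
  rw [← he']
  convert m3 _ (hB p hp) _ (hB q hq) _ (hB w hw) using 1
  group

/-- If `A` is a nonempty symmetric `K`-tripling subset of a finite group `G`, `A^k`
contains a coset of a normal subgroup `N` with `deg_ℂ(N) ≥ K^{3k}`, then `A³` contains a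
coset of `N`. In particular, if `A^k = G` and `deg_ℂ(G) ≥ K^{3k}` then `A³ = G`. -/
theorem gowers_trick
    (G : Type) [Group G] [Finite G] (N : Subgroup G) [N.Normal]
    (A : Set G) (hne : A.Nonempty) (hsym : A⁻¹ = A)
    (K : ℝ) (hK : 1 ≤ K) (k : ℕ) (hk : 1 ≤ k)
    (htrip : ((A ^ 3).ncard : ℝ) ≤ K * (A.ncard : ℝ))
    (hcoset : ∃ x : G, x • (N : Set G) ⊆ A ^ k)
    (hqr : ∀ (d : ℕ) (φ : ↥N →* GL (Fin d) ℂ), φ.range ≠ ⊥ → K ^ (3 * k) ≤ (d : ℝ)) :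
    (∃ y : G, y • (N : Set G) ⊆ A ^ 3) ∧
      (N = ⊤ → A ^ k = Set.univ → A ^ 3 = Set.univ) := by
  classical
  cases nonempty_fintype G
  have hA : ((A.toFinset : Finset G) : Set G) = A := by simp
  have hpow : ∀ m : ℕ, ((A.toFinset ^ m : Finset G) : Set G) = A ^ m := by
    intro m; rw [Finset.coe_pow, hA]
  have hmem : ∀ (m : ℕ) (g : G), g ∈ A.toFinset ^ m ↔ g ∈ A ^ m := by
    intro m g; rw [← hpow, Finset.mem_coe]
  have hfirst : ∃ y : G, y • (N : Set G) ⊆ A ^ 3 := by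
    obtain ⟨x, hx⟩ := hcoset
    obtain ⟨y, hy⟩ := aux_main N A.toFinset (by simpa using hne)
      (by apply Finset.coe_injective; rw [Finset.coe_inv, hA, hsym]) K hK k hk
      (by rw [← Set.ncard_coe_finset, ← Set.ncard_coe_finset, hpow, hA]; exact htrip) x
      (fun u hu => (hmem _ _).mpr (hx ⟨u, hu, rfl⟩)) hqr
    refine ⟨y, ?_⟩
    rintro _ ⟨u, hu, rfl⟩
    exact (hmem _ _).mp (hy u hu)
  refine ⟨hfirst, ?_⟩
  rintro hN -
  obtain ⟨y, hy⟩ := hfirst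
  rw [Set.eq_univ_iff_forall]
  intro g
  exact hy ⟨y⁻¹ * g, by simp [hN], by simp⟩
end

section
/- There is an absolute constant C ≥ 1 with the following property. Let G be a nontrivial finite perfect group (G = [G,G]), let N be a solvable normal subgroup of G, and suppose G admits a group homomorphism to GL_d(ℂ) with nontrivial image. Then the quotient G/N admits a group homomorphism to GL_e(ℂ) with nontrivial image for some e ≤ C·d². (Equivalently, deg_ℂ(G) ≥ c·deg_ℂ(G/Sol(G))^{1/2} for an absolute constant c > 0, where deg_ℂ denotes the minimal dimension of a nontrivial complex representation and Sol(G) is the soluble radical of G.) -/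
open Matrix

set_option synthInstance.maxHeartbeats 400000
set_option maxHeartbeats 1000000


namespace MinDeg

lemma perfect_trivial {G M : Type*} [Group G] [Monoid M]
    (hp : ⁅(⊤ : Subgroup G), (⊤ : Subgroup G)⁆ = ⊤) (f : G →* M)
    (hc : ∀ a b, f a * f b = f b * f a) (g : G) : f g = 1 := by
  have h : (⊤ : Subgroup G) ≤ f.toHomUnits.ker := by
    rw [← hp, Subgroup.commutator_le]
    intro a _ b _
    rw [MonoidHom.mem_ker, map_commutatorElement, commutatorElement_eq_one_iff_mul_comm]
    ext
    exact hc a b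
  have := h (Subgroup.mem_top g)
  rw [MonoidHom.mem_ker] at this
  exact congrArg Units.val this

lemma indep_eigen {L M ι X : Type*} [Field L] [AddCommGroup M] [Module L M]
    (v : ι → M) (hv : ∀ i, v i ≠ 0) (T : X → M →ₗ[L] M) (χ : ι → X → L)
    (hT : ∀ i x, T x (v i) = χ i x • v i) (hχ : ∀ i j, (∀ x, χ i x = χ j x) → i = j) :
    LinearIndependent L v := by
  classical
  rw [linearIndependent_iff']
  intro s
  induction s using Finset.induction_on with
  | empty => simp
  | insert a s ha ih =>
    intro c hc
    have key : ∀ i ∈ s, c i = 0 := by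
      intro i hi
      have hne : i ≠ a := fun h => ha (h ▸ hi)
      have : ∃ x, χ i x ≠ χ a x := by
        by_contra! h
        exact hne (hχ i a h)
      obtain ⟨x, hx⟩ := this
      have h1 := congrArg (T x) hc
      have h2 := congrArg (fun m => χ a x • m) hc
      simp only [map_sum, map_smul, hT, map_zero, smul_zero, Finset.smul_sum] at h1 h2
      have h3 : ∑ j ∈ s, (c j * (χ j x - χ a x)) • v j = 0 := by
        rw [Finset.sum_insert ha] at h1 h2
        have h4 : ∑ j ∈ s, (c j * (χ j x - χ a x)) • v j
            = ∑ j ∈ s, c j • χ j x • v j - ∑ j ∈ s, χ a x • c j • v j := by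
          rw [← Finset.sum_sub_distrib]
          refine Finset.sum_congr rfl fun j _ => ?_
          simp only [smul_smul, ← sub_smul]
          congr 1; ring
        rw [h4]
        have h5 : c a • χ a x • v a = χ a x • c a • v a := smul_comm _ _ _
        rw [h5] at h1
        exact sub_eq_zero.2 (add_left_cancel (h1.trans h2.symm))
      have := ih _ h3 i hi
      rcases mul_eq_zero.1 this with h | h
      · exact h
      · exact absurd (sub_eq_zero.1 h) hx
    intro i hi
    rcases Finset.mem_insert.1 hi with rfl | hi
    · rw [Finset.sum_insert ha, Finset.sum_eq_zero (fun j hj => by rw [key j hj, zero_smul]),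
        add_zero] at hc
      exact (smul_eq_zero.1 hc).resolve_right (hv i)
    · exact key i hi

lemma indep_ann {L M R : Type*} [Field L] [AddCommGroup M] [Module L M] [CommRing R]
    (act : R →+* Module.End L M) (X : Set (Ideal R)) (hX : ∀ P ∈ X, P.IsMaximal)
    (v : X → M) (hv : ∀ i, v i ≠ 0) (hP : ∀ i : X, ∀ r ∈ i.1, act r (v i) = 0) :
    LinearIndependent L v := by
  classical
  have main : ∀ s : Finset X, ∀ w : X → M, (∀ i : X, ∀ r ∈ i.1, act r (w i) = 0) →
      ∑ i ∈ s, w i = 0 → ∀ i ∈ s, w i = 0 := by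
    intro s
    induction s using Finset.induction_on with
    | empty => simp
    | insert a s ha ih =>
      intro w hw hs
      have key : ∀ i ∈ s, w i = 0 := by
        intro i hi
        have hne : i.1 ≠ a.1 := fun h => ha (Subtype.ext h ▸ hi)
        have h1 : ∀ r ∈ a.1, act r (w i) = 0 := by
          intro r hr
          refine ih (fun j => act r (w j)) ?_ ?_ i hi
          · intro j t ht
            rw [← Module.End.mul_apply, ← map_mul, mul_comm, map_mul, Module.End.mul_apply,
              hw j t ht, map_zero]
          · have := congrArg (act r) hs
            rwa [Finset.sum_insert ha, map_add, hw a r hr, zero_add, map_zero, map_sum] at this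
        have := hX _ i.2
        have := hX _ a.2
        have hco := Ideal.isCoprime_of_isMaximal hne
        obtain ⟨x, hx, y, hy, hxy⟩ := (Ideal.isCoprime_iff_exists).1 hco
        have : act (x + y) (w i) = 0 := by
          rw [map_add, LinearMap.add_apply, hw i x hx, h1 y hy, add_zero]
        rwa [hxy, map_one] at this
      intro i hi
      rcases Finset.mem_insert.1 hi with rfl | hi
      · rwa [Finset.sum_insert ha, Finset.sum_eq_zero key, add_zero] at hs
      · exact key i hi
  rw [linearIndependent_iff']
  intro s c hc i hi
  have := main s (fun i => c i • v i) (fun i r hr => by rw [map_smul, hP i r hr, smul_zero]) hc i hi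
  exact (smul_eq_zero.1 this).resolve_right (hv i)

lemma core_field {G L V R : Type} [Group G] [Field L] [AddCommGroup V] [Module L V]
    [FiniteDimensional L V] [Nontrivial V] [CommRing R] [Algebra L R] [Module.Finite L R]
    (ρ : G →* Module.End L V)
    (hirr : ∀ W : Submodule L V, (∀ g, ∀ w ∈ W, ρ g w ∈ W) → W = ⊥ ∨ W = ⊤)
    (hperm : ∀ (X : Type) [Finite X] (φ : G →* Equiv.Perm X),
      Nat.card X ≤ Module.finrank L V → ∀ g, φ g = 1)
    (act : R →ₐ[L] Module.End L V) (hinj : Function.Injective act)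
    (σ : G →* (R →ₐ[L] R)) (hσ : ∀ g r, act (σ g r) * ρ g = ρ g * act r) : IsField R := by
  classical
  have hσ1 : ∀ g r, σ g (σ g⁻¹ r) = r := by
    intro g r
    rw [← AlgHom.mul_apply, ← map_mul, mul_inv_cancel, map_one, AlgHom.one_apply]
  have hσ2 : ∀ g r, σ g⁻¹ (σ g r) = r := by
    intro g r
    rw [← AlgHom.mul_apply, ← map_mul, inv_mul_cancel, map_one, AlgHom.one_apply]
  let X : Set (Ideal R) := {P | P.IsMaximal ∧ ∃ v : V, v ≠ 0 ∧ ∀ r ∈ P, act r v = 0}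
  have hXne : X.Nonempty := by
    letI : Module R V := Module.compHom V (act : R →+* Module.End L V)
    have : IsArtinianRing R := isArtinian_of_tower L inferInstance
    obtain ⟨P, hP⟩ := associatedPrimes.nonempty R V
    have hP' := (Submodule.isAssociatedPrime_iff (N := (⊥ : Submodule R V))).1 hP
    obtain ⟨hprime, x, hx⟩ := hP'
    refine ⟨P, Ideal.IsPrime.isMaximal' hprime, x, ?_, ?_⟩
    · rintro rfl
      apply hprime.ne_top
      rw [hx, Ideal.eq_top_iff_one, Submodule.mem_colon_singleton]
      simp
    · intro r hr
      rw [hx, Submodule.mem_colon_singleton] at hr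
      exact (Submodule.mem_bot R).1 hr
  choose v hv0 hv using fun P : X => P.2.2
  have hli : LinearIndependent L v :=
    indep_ann (act : R →+* Module.End L V) X (fun P hP => hP.1) v hv0 hv
  have hfin : Finite X := hli.finite
  have hcard : Nat.card X ≤ Module.finrank L V := by
    letI := Fintype.ofFinite X
    rw [Nat.card_eq_fintype_card]
    exact hli.fintype_card_le_finrank
  letI : MulAction G X :=
    { smul := fun g P => ⟨Ideal.comap (σ g⁻¹) P.1, by
        obtain ⟨P, hP, w, hw, hPw⟩ := P
        refine ⟨?_, ρ g w, ?_, ?_⟩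
        · exact Ideal.comap_isMaximal_of_surjective (σ g⁻¹) (fun r => ⟨σ g r, hσ2 g r⟩)
        · intro h
          apply hw
          have : ρ g⁻¹ (ρ g w) = 0 := by rw [h, map_zero]
          rwa [← Module.End.mul_apply, ← map_mul, inv_mul_cancel, map_one] at this
        · intro r hr
          have h1 := hPw _ (Ideal.mem_comap.1 hr)
          have h2 := congrArg (fun f : Module.End L V => f w) (hσ g (σ g⁻¹ r))
          simp only [Module.End.mul_apply, hσ1, h1, map_zero] at h2
          exact h2⟩
      one_smul := by
        rintro ⟨P, hP⟩
        apply Subtype.ext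
        change Ideal.comap (σ 1⁻¹) P = P
        ext r
        rw [Ideal.mem_comap, inv_one, map_one, AlgHom.one_apply]
      mul_smul := by
        rintro g h ⟨P, hP⟩
        apply Subtype.ext
        change Ideal.comap (σ (g * h)⁻¹) P = Ideal.comap (σ g⁻¹) (Ideal.comap (σ h⁻¹) P)
        ext r
        rw [Ideal.mem_comap, Ideal.mem_comap, Ideal.mem_comap, _root_.mul_inv_rev, map_mul,
          AlgHom.mul_apply] }
  have htriv := hperm X (MulAction.toPermHom G X) hcard
  obtain ⟨P, hP⟩ := hXne
  have hfix : ∀ g, ∀ r ∈ P, σ g r ∈ P := by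
    intro g r hr
    have h1 : g⁻¹ • (⟨P, hP⟩ : X) = ⟨P, hP⟩ :=
      congrArg (fun f : Equiv.Perm X => f ⟨P, hP⟩) (htriv g⁻¹)
    have h2 : Ideal.comap (σ g⁻¹⁻¹) P = P := congrArg Subtype.val h1
    rw [inv_inv] at h2
    rw [← h2] at hr
    exact hr
  let W : Submodule L V :=
    { carrier := {w | ∀ r ∈ P, act r w = 0}
      zero_mem' := fun r _ => map_zero _
      add_mem' := fun {a b} ha hb r hr => by rw [map_add, ha r hr, hb r hr, add_zero]
      smul_mem' := fun c a ha r hr => by rw [map_smul, ha r hr, smul_zero] }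
  have hW : W = ⊤ := by
    refine (hirr W ?_).resolve_left ?_
    · intro g w hw r hr
      have h1 := hw _ (hfix g⁻¹ r hr)
      have h2 := congrArg (fun f : Module.End L V => f w) (hσ g (σ g⁻¹ r))
      simp only [Module.End.mul_apply, hσ1, h1, map_zero] at h2
      exact h2
    · intro h
      obtain ⟨w, hw, hPw⟩ := hP.2
      have : w ∈ W := hPw
      rw [h] at this
      exact hw ((Submodule.mem_bot L).1 this)
  have hPbot : P = ⊥ := by
    rw [eq_bot_iff]
    intro r hr
    have : act r = 0 := by
      ext w
      have : w ∈ W := hW ▸ Submodule.mem_top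
      exact this r hr
    exact (Submodule.mem_bot R).2 (hinj (this.trans (map_zero act).symm))
  have hmax := hP.1
  rw [hPbot] at hmax
  have : Nontrivial R := act.toRingHom.domain_nontrivial
  by_contra h
  exact Ring.ne_bot_of_isMaximal_of_not_isField hmax h rfl

lemma comm_scalar {G L V : Type} [Group G] [Field L] [AddCommGroup V] [Module L V]
    [FiniteDimensional L V] [Nontrivial V]
    (hp : ⁅(⊤ : Subgroup G), (⊤ : Subgroup G)⁆ = ⊤)
    (ρ : G →* Module.End L V)
    (hirr : ∀ W : Submodule L V, (∀ g, ∀ w ∈ W, ρ g w ∈ W) → W = ⊥ ∨ W = ⊤)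
    (hschur : ∀ f : Module.End L V, (∀ g, f * ρ g = ρ g * f) → ∃ c : L, f = algebraMap L _ c)
    (haut : ∀ (R : Type) [CommRing R] [Algebra L R] [Module.Finite L R], IsField R →
      ∀ s t : R →ₐ[L] R, s * t = t * s)
    (hperm : ∀ (X : Type) [Finite X] (φ : G →* Equiv.Perm X),
      Nat.card X ≤ Module.finrank L V → ∀ g, φ g = 1)
    (K : Subgroup G) [K.Normal] (hK : ∀ a ∈ K, ∀ b ∈ K, ρ a * ρ b = ρ b * ρ a) :
    ∀ a ∈ K, ∃ c : L, ρ a = algebraMap L _ c := by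
  have hinv1 : ∀ g, ρ g * ρ g⁻¹ = 1 := fun g => by rw [← map_mul, mul_inv_cancel, map_one]
  have hinv2 : ∀ g, ρ g⁻¹ * ρ g = 1 := fun g => by rw [← map_mul, inv_mul_cancel, map_one]
  let S : Set (Module.End L V) := ρ '' K
  let R := Algebra.adjoin L S
  letI : CommRing R := Algebra.adjoinCommRingOfComm L (s := S) (by
    rintro _ ⟨a, ha, rfl⟩ _ ⟨b, hb, rfl⟩
    exact hK a ha b hb)
  have hstab : ∀ g, ∀ r ∈ R, ρ g * r * ρ g⁻¹ ∈ R := by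
    intro g r hr
    induction hr using Algebra.adjoin_induction with
    | mem x hx =>
      obtain ⟨a, ha, rfl⟩ := hx
      apply Algebra.subset_adjoin
      exact ⟨g * a * g⁻¹, Subgroup.Normal.conj_mem inferInstance a ha g, by simp only [map_mul]⟩
    | algebraMap c =>
      rw [← Algebra.commutes, mul_assoc, hinv1, mul_one]
      exact R.algebraMap_mem c
    | add x y _ _ hx hy =>
      rw [mul_add, add_mul]; exact R.add_mem hx hy
    | mul x y _ _ hx hy =>
      have : ρ g * (x * y) * ρ g⁻¹ = (ρ g * x * ρ g⁻¹) * (ρ g * y * ρ g⁻¹) := by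
        calc ρ g * (x * y) * ρ g⁻¹ = ρ g * x * 1 * y * ρ g⁻¹ := by simp only [mul_assoc, one_mul]
          _ = _ := by rw [← hinv2 g]; simp only [mul_assoc]
      rw [this]; exact R.mul_mem hx hy
  let σ : G →* (R →ₐ[L] R) :=
    { toFun := fun g => AlgHom.ofLinearMap
        { toFun := fun r => ⟨ρ g * r.1 * ρ g⁻¹, hstab g r.1 r.2⟩
          map_add' := fun a b => Subtype.ext (by
            change ρ g * (a.1 + b.1) * ρ g⁻¹ = ρ g * a.1 * ρ g⁻¹ + ρ g * b.1 * ρ g⁻¹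
            rw [mul_add, add_mul])
          map_smul' := fun c a => Subtype.ext (by
            change ρ g * (c • a.1) * ρ g⁻¹ = c • (ρ g * a.1 * ρ g⁻¹)
            rw [mul_smul_comm, smul_mul_assoc]) }
        (Subtype.ext (by
            change ρ g * 1 * ρ g⁻¹ = 1
            rw [mul_one, hinv1]))
        (fun x y => Subtype.ext (by
            change ρ g * (x.1 * y.1) * ρ g⁻¹ = (ρ g * x.1 * ρ g⁻¹) * (ρ g * y.1 * ρ g⁻¹)
            calc ρ g * (x.1 * y.1) * ρ g⁻¹ = ρ g * x.1 * 1 * y.1 * ρ g⁻¹ := by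
                  simp only [mul_assoc, one_mul]
              _ = _ := by rw [← hinv2 g]; simp only [mul_assoc]))
      map_one' := by
        ext r : 1
        apply Subtype.ext
        change ρ 1 * r.1 * ρ 1⁻¹ = r.1
        rw [inv_one, map_one, one_mul, mul_one]
      map_mul' := fun g h => by
        ext r : 1
        apply Subtype.ext
        change ρ (g * h) * r.1 * ρ (g * h)⁻¹ = ρ g * (ρ h * r.1 * ρ h⁻¹) * ρ g⁻¹
        rw [_root_.mul_inv_rev, map_mul, map_mul]; simp only [mul_assoc] }
  have hσv : ∀ g (r : R), (σ g r).1 = ρ g * r.1 * ρ g⁻¹ := fun g r => rfl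
  have hfield : IsField R := by
    refine core_field ρ hirr hperm R.val Subtype.val_injective σ ?_
    intro g r
    change (σ g r).1 * ρ g = ρ g * r.1
    rw [hσv, mul_assoc, hinv2, mul_one]
  intro a ha
  apply hschur
  intro g
  have h1 := perfect_trivial hp σ (fun x y => haut R hfield _ _) g
  have h2 := hσv g ⟨ρ a, Algebra.subset_adjoin ⟨a, ha, rfl⟩⟩
  rw [h1] at h2
  change ρ a = ρ g * ρ a * ρ g⁻¹ at h2
  conv_lhs => rw [h2]
  rw [mul_assoc, hinv2, mul_one]

lemma solv_bot {Q : Type*} [Group Q] (E : Subgroup Q) [Group.IsSolvable E] (h : ⁅E, E⁆ = E) :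
    E = ⊥ := by
  by_contra hE
  have := (Subgroup.nontrivial_iff_ne_bot E).2 hE
  have h2 : ⁅E, E⁆ < E := by
    nth_rewrite 3 [← E.range_subtype]
    nth_rewrite 1 2 [← E.range_subtype]
    rw [MonoidHom.range_eq_map, ← Subgroup.map_commutator, Subgroup.map_subtype_lt_map_subtype]
    exact Group.IsSolvable.commutator_lt_top_of_nontrivial E
  exact h2.ne h

lemma stage {G L V : Type} [Group G] [Finite G] [Field L] [AddCommGroup V] [Module L V]
    [FiniteDimensional L V] [Nontrivial V]
    (hp : ⁅(⊤ : Subgroup G), (⊤ : Subgroup G)⁆ = ⊤)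
    (ρ : G →* Module.End L V)
    (hirr : ∀ W : Submodule L V, (∀ g, ∀ w ∈ W, ρ g w ∈ W) → W = ⊥ ∨ W = ⊤)
    (hschur : ∀ f : Module.End L V, (∀ g, f * ρ g = ρ g * f) → ∃ c : L, f = algebraMap L _ c)
    (haut : ∀ (R : Type) [CommRing R] [Algebra L R] [Module.Finite L R], IsField R →
      ∀ s t : R →ₐ[L] R, s * t = t * s)
    (hperm : ∀ (X : Type) [Finite X] (φ : G →* Equiv.Perm X),
      Nat.card X ≤ Module.finrank L V → ∀ g, φ g = 1)
    (N : Subgroup G) [N.Normal] [Group.IsSolvable N]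
    (hN : ¬ ∀ a ∈ N, ∃ c : L, ρ a = algebraMap L _ c) :
    ∃ (Z : Subgroup G) (_ : Z.Normal) (E : Subgroup (G ⧸ Z)), E.Normal ∧ E ≠ ⊥ ∧
      (∀ a ∈ E, ∀ b ∈ E, a * b = b * a) ∧
      (∀ M : Subgroup (G ⧸ Z), M.Normal → M ≤ E → M = ⊥ ∨ M = E) ∧
      Nat.card E ≤ Module.finrank L V ^ 2 ∧ ¬ (∀ g : G ⧸ Z, ∀ a ∈ E, g * a = a * g) := by
  classical
  have hinv1 : ∀ g, ρ g * ρ g⁻¹ = 1 := fun g => by rw [← map_mul, mul_inv_cancel, map_one]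
  have hinv2 : ∀ g, ρ g⁻¹ * ρ g = 1 := fun g => by rw [← map_mul, inv_mul_cancel, map_one]
  have hne0 : ∀ g, ρ g ≠ 0 := fun g h => by
    have := hinv1 g
    rw [h, zero_mul] at this
    exact zero_ne_one this
  let Z : Subgroup G :=
    { carrier := {g | ∃ c : L, ρ g = algebraMap L _ c}
      one_mem' := ⟨1, by rw [map_one, map_one]⟩
      mul_mem' := by
        rintro a b ⟨c, hc⟩ ⟨d, hd⟩
        exact ⟨c * d, by rw [map_mul, hc, hd, map_mul]⟩
      inv_mem' := by
        rintro a ⟨c, hc⟩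
        refine ⟨c⁻¹, ?_⟩
        have hc0 : c ≠ 0 := by
          rintro rfl
          exact hne0 a (by rw [hc, map_zero])
        calc ρ a⁻¹ = ρ a⁻¹ * (algebraMap L _ c * algebraMap L _ c⁻¹) := by
              rw [← map_mul, mul_inv_cancel₀ hc0, map_one, mul_one]
          _ = _ := by rw [← mul_assoc, ← hc, hinv2, one_mul] }
  have hZmem : ∀ g, g ∈ Z ↔ ∃ c : L, ρ g = algebraMap L _ c := fun g => Iff.rfl
  have hZn : Z.Normal := ⟨by
    rintro a ⟨c, hc⟩ g
    refine ⟨c, ?_⟩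
    rw [map_mul, map_mul, hc, ← Algebra.commutes, mul_assoc, hinv1, mul_one]⟩
  let π : G →* G ⧸ Z := QuotientGroup.mk' Z
  have hπs : Function.Surjective π := QuotientGroup.mk'_surjective Z
  have hπ : ∀ g, π g = 1 ↔ g ∈ Z := fun g => QuotientGroup.eq_one_iff g
  let N' := N.map π
  have hN'n : N'.Normal := Subgroup.Normal.map inferInstance π hπs
  have hN's : Group.IsSolvable N' := Group.isSolvable_of_surjective (f := π.subgroupMap N) (π.subgroupMap_surjective N)
  have hN'ne : N' ≠ ⊥ := by
    intro h
    apply hN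
    intro a ha
    have : π a ∈ N' := Subgroup.mem_map_of_mem π ha
    rw [h, Subgroup.mem_bot, hπ] at this
    exact this
  obtain ⟨E, hEmin⟩ := (Set.toFinite {M : Subgroup (G ⧸ Z) | M.Normal ∧ M ≤ N' ∧ M ≠ ⊥}).exists_minimal
    ⟨N', hN'n, le_rfl, hN'ne⟩
  obtain ⟨⟨hEn, hEN, hEne⟩, hEmin⟩ := hEmin
  have hmin : ∀ M : Subgroup (G ⧸ Z), M.Normal → M ≤ E → M = ⊥ ∨ M = E := by
    intro M hM hME
    by_cases h : M = ⊥
    · exact Or.inl h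
    · exact Or.inr (le_antisymm hME (hEmin ⟨hM, hME.trans hEN, h⟩ hME))
  have hEs : Group.IsSolvable E := Group.isSolvable_of_isSolvable_injective (Subgroup.inclusion_injective hEN)
  have hcomm : ⁅E, E⁆ = ⊥ := by
    rcases hmin ⁅E, E⁆ inferInstance (Subgroup.commutator_le_left E E) with h | h
    · exact h
    · exact absurd (solv_bot E h) hEne
  have hEc : ∀ a ∈ E, ∀ b ∈ E, a * b = b * a := by
    intro a ha b hb
    rw [← commutatorElement_eq_one_iff_mul_comm, ← Subgroup.mem_bot, ← hcomm]
    exact Subgroup.commutator_mem_commutator ha hb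
  -- the scalar relation
  have hscal : ∀ x b : G, π x * π b = π b * π x →
      ∃ c : L, ρ x * ρ b * ρ x⁻¹ = c • ρ b := by
    intro x b hxb
    have h1 : x * b * x⁻¹ * b⁻¹ ∈ Z := by
      rw [← hπ, map_mul, map_mul, map_mul, hxb, map_inv, map_inv]; group
    obtain ⟨c, hc⟩ := h1
    refine ⟨c, ?_⟩
    have h2 : ρ x * ρ b * ρ x⁻¹ = ρ (x * b * x⁻¹ * b⁻¹) * ρ b := by
      simp only [← map_mul]; congr 1; group
    rw [h2, hc, Algebra.smul_def]
  let B := E.comap π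
  have hBn : B.Normal := hEn.comap π
  let K : Subgroup G :=
    { carrier := {g | g ∈ B ∧ ∀ x ∈ B, ρ x * ρ g = ρ g * ρ x}
      one_mem' := ⟨B.one_mem, fun x _ => by rw [map_one, mul_one, one_mul]⟩
      mul_mem' := by
        rintro a b ⟨ha, ha'⟩ ⟨hb, hb'⟩
        refine ⟨B.mul_mem ha hb, fun x hx => ?_⟩
        rw [map_mul, ← mul_assoc, ha' x hx, mul_assoc, hb' x hx, mul_assoc]
      inv_mem' := by
        rintro a ⟨ha, ha'⟩
        refine ⟨B.inv_mem ha, fun x hx => ?_⟩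
        calc ρ x * ρ a⁻¹ = ρ a⁻¹ * (ρ a * ρ x) * ρ a⁻¹ := by rw [← mul_assoc, hinv2, one_mul]
          _ = _ := by rw [← ha' x hx, mul_assoc, mul_assoc, hinv1, mul_one] }
  have hKn : K.Normal := ⟨by
    rintro a ⟨ha, ha'⟩ g
    refine ⟨hBn.conj_mem a ha g, fun x hx => ?_⟩
    have h1 := ha' _ (hBn.conj_mem x hx g⁻¹)
    rw [← map_mul, ← map_mul] at h1 ⊢
    have h2 := congrArg (fun y => ρ g * y * ρ g⁻¹) h1
    simp only [← map_mul] at h2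
    convert h2 using 2 <;> group⟩
  have hKZ : ∀ a ∈ K, a ∈ Z :=
    comm_scalar hp ρ hirr hschur haut hperm K (fun a ha b hb => hb.2 a ha.1)
  -- linear independence
  choose lift hlift using hπs
  choose! χ hχ using hscal
  have hli : LinearIndependent L (fun e : E => ρ (lift e.1)) := by
    refine indep_eigen (X := B) _ (fun e => hne0 _)
      (fun x => (LinearMap.mulLeft L (ρ x.1)) ∘ₗ (LinearMap.mulRight L (ρ x.1⁻¹)))
      (fun e x => χ x.1 (lift e.1)) ?_ ?_
    · intro e x
      rw [LinearMap.comp_apply, LinearMap.mulRight_apply, LinearMap.mulLeft_apply, ← mul_assoc]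
      exact hχ _ _ (hEc _ x.2 _ (by rw [hlift]; exact e.2))
    · intro e f hef
      have hel : π (lift e.1) ∈ E := by rw [hlift]; exact e.2
      have hfl : π (lift f.1) ∈ E := by rw [hlift]; exact f.2
      have hk : (lift e.1)⁻¹ * lift f.1 ∈ K := by
        refine ⟨?_, fun x hx => ?_⟩
        · change π _ ∈ E
          rw [map_mul, map_inv]
          exact E.mul_mem (E.inv_mem hel) hfl
        · have h1 := hχ x _ (hEc _ hx _ hel)
          have h2 := hχ x _ (hEc _ hx _ hfl)
          rw [← hef ⟨x, hx⟩] at h2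
          simp only at h2
          set c := χ x (lift e.1)
          have h1' : ρ x * ρ (lift e.1) = c • (ρ (lift e.1) * ρ x) := by
            rw [← smul_mul_assoc, ← h1, mul_assoc, hinv2, mul_one]
          have h2' : ρ x * ρ (lift f.1) = c • (ρ (lift f.1) * ρ x) := by
            rw [← smul_mul_assoc, ← h2, mul_assoc, hinv2, mul_one]
          have hc0 : c ≠ 0 := by
            intro hc
            rw [hc, zero_smul, ← map_mul] at h1'
            exact hne0 _ h1'
          have h3 : ρ x * ρ (lift e.1)⁻¹ = c⁻¹ • (ρ (lift e.1)⁻¹ * ρ x) := by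
            rw [eq_inv_smul_iff₀ hc0]
            calc c • (ρ x * ρ (lift e.1)⁻¹)
                = ρ (lift e.1)⁻¹ * (c • (ρ (lift e.1) * ρ x)) * ρ (lift e.1)⁻¹ := by
                  rw [mul_smul_comm, smul_mul_assoc, ← mul_assoc, hinv2, one_mul]
              _ = _ := by rw [← h1', mul_assoc, mul_assoc, hinv1, mul_one]
          rw [map_mul, ← mul_assoc, h3, smul_mul_assoc, mul_assoc, h2', mul_smul_comm, smul_smul,
            inv_mul_cancel₀ hc0, one_smul, mul_assoc]
      have := (hπ _).2 (hKZ _ hk)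
      rw [map_mul, map_inv, hlift, hlift, inv_mul_eq_one] at this
      exact Subtype.ext this
  refine ⟨Z, hZn, E, hEn, hEne, hEc, hmin, ?_, ?_⟩
  · letI := Fintype.ofFinite E
    rw [Nat.card_eq_fintype_card]
    refine hli.fintype_card_le_finrank.trans ?_
    rw [Module.finrank_linearMap, sq]
  · intro hcen
    apply hEne
    rw [eq_bot_iff]
    intro e he
    rw [Subgroup.mem_bot, ← hlift e, hπ, hZmem]
    have hb : ∀ g, ρ g * ρ (lift e) * ρ g⁻¹ = χ g (lift e) • ρ (lift e) := fun g =>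
      hχ g _ (by rw [hlift]; exact hcen _ _ he)
    have hinjs : ∀ c d : L, c • ρ (lift e) = d • ρ (lift e) → c = d := fun c d h =>
      smul_left_injective L (hne0 (lift e)) h
    let f : G →* L :=
      { toFun := fun g => χ g (lift e)
        map_one' := hinjs _ _ (by
          rw [← hb, inv_one, map_one, one_mul, mul_one, one_smul])
        map_mul' := fun g h => hinjs _ _ (by
          rw [← hb, map_mul, _root_.mul_inv_rev, map_mul]
          calc ρ g * ρ h * ρ (lift e) * (ρ h⁻¹ * ρ g⁻¹)
              = ρ g * (ρ h * ρ (lift e) * ρ h⁻¹) * ρ g⁻¹ := by simp only [mul_assoc]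
            _ = _ := by rw [hb, mul_smul_comm, smul_mul_assoc, hb, smul_smul, mul_comm]) }
    apply hschur
    intro g
    have h1 := perfect_trivial hp f (fun a b => mul_comm _ _) g
    have h2 := hb g
    change χ g (lift e) = 1 at h1
    rw [h1, one_smul] at h2
    conv_lhs => rw [← h2]
    rw [mul_assoc, hinv2, mul_one]

lemma aut_fin {L R : Type} [Field L] [Field R] [Finite R] [Algebra L R] (s t : R →ₐ[L] R) :
    s * t = t * s := by
  have hs : Function.Bijective s := Finite.injective_iff_bijective.1 s.toRingHom.injective
  have ht : Function.Bijective t := Finite.injective_iff_bijective.1 t.toRingHom.injective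
  have hc : IsCyclic (R ≃ₐ[L] R) := inferInstance
  have h := hc.isMulCommutative.is_comm.comm (AlgEquiv.ofBijective s hs) (AlgEquiv.ofBijective t ht)
  ext r
  exact congrArg (fun f : R ≃ₐ[L] R => f r) h

lemma exists_field {G V : Type} [Group G] [AddCommGroup V] [Finite V] [Nontrivial V]
    (τ : G →* AddMonoid.End V)
    (hirr : ∀ A : AddSubgroup V, (∀ g, ∀ a ∈ A, τ g a ∈ A) → A = ⊥ ∨ A = ⊤) :
    ∃ (L : Type) (_ : Field L) (_ : Finite L) (_ : Module L V),
      (∀ g (c : L) v, τ g (c • v) = c • τ g v) ∧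
      ∀ f : V →+ V, (∀ g v, f (τ g v) = τ g (f v)) → ∃ c : L, ∀ v, f v = c • v := by
  classical
  let S : Subring (AddMonoid.End V) := Subring.centralizer (Set.range τ)
  have hS : ∀ f ∈ S, ∀ g v, f (τ g v) = τ g (f v) := by
    intro f hf g v
    have := Subring.mem_centralizer_iff.1 hf (τ g) ⟨g, rfl⟩
    exact (congrArg (fun q : AddMonoid.End V => q v) this).symm
  have hfin : Finite (AddMonoid.End V) := Finite.of_injective (fun f : AddMonoid.End V => (f : V → V)) DFunLike.coe_injective
  have hfinS : Finite S := inferInstance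
  have hinj : ∀ f ∈ S, f ≠ 0 → ∀ v, f v = 0 → v = 0 := by
    intro f hf hf0 v hv
    rcases hirr (AddMonoidHom.ker f) (fun g a ha => by
      have ha' : f a = 0 := ha
      change f (τ g a) = 0
      rw [hS f hf, ha', map_zero]) with h | h
    · have : v ∈ AddMonoidHom.ker f := hv
      rw [h] at this
      exact this
    · exfalso; apply hf0
      ext w
      have : w ∈ AddMonoidHom.ker f := h ▸ AddSubgroup.mem_top w
      exact this
  have hnzd : NoZeroDivisors S := ⟨by
    rintro ⟨a, ha⟩ ⟨b, hb⟩ hab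
    by_cases h0 : a = 0
    · exact Or.inl (Subtype.ext h0)
    · right
      apply Subtype.ext
      ext v
      have h1 : a * b = 0 := congrArg Subtype.val hab
      exact hinj a ha h0 _ (congrArg (fun q : AddMonoid.End V => q v) h1)⟩
  have hnt : Nontrivial S := ⟨0, 1, fun h => by
    obtain ⟨v, hv⟩ := exists_ne (0 : V)
    have h1 : (0 : AddMonoid.End V) = 1 := congrArg Subtype.val h
    exact hv (congrArg (fun q : AddMonoid.End V => q v) h1).symm⟩
  have hdom : IsDomain S := NoZeroDivisors.to_isDomain S
  have hF : IsField S := Finite.isDomain_to_isField S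
  refine ⟨S, hF.toField, hfinS, (inferInstance : Module S V), ?_, ?_⟩
  · intro g c v
    exact (hS c.1 c.2 g v).symm
  · intro f hf
    refine ⟨⟨f, ?_⟩, fun v => rfl⟩
    refine Subring.mem_centralizer_iff.2 ?_
    rintro _ ⟨g, rfl⟩
    ext v
    exact (hf g v).symm

lemma pow4 (m : ℕ) (h : 16 ≤ m) : m ^ 4 ≤ 2 ^ m := by
  induction m, h using Nat.le_induction with
  | base => norm_num
  | succ n hn ih =>
    have : (n + 1) ^ 4 ≤ 2 * n ^ 4 := by
      nlinarith [Nat.pow_le_pow_left hn 2, Nat.pow_le_pow_left hn 3, Nat.pow_le_pow_left hn 4,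
        Nat.mul_le_mul_right (n ^ 3) hn, Nat.mul_le_mul_right (n ^ 2) hn, Nat.mul_le_mul_right n hn]
    calc (n + 1) ^ 4 ≤ 2 * n ^ 4 := this
      _ ≤ 2 * 2 ^ n := by omega
      _ = 2 ^ (n + 1) := by ring

lemma pow2 (m : ℕ) : m ^ 2 < 2 ^ (m + 1) := by
  induction m using Nat.strong_induction_on with
  | _ m ih =>
    rcases m with _ | _ | _ | n
    · norm_num
    · norm_num
    · norm_num
    · have := ih (n + 2) (by omega)
      have h2 : (n + 1 + 1 + 1) ^ 2 ≤ (n + 2) ^ 2 * 2 + 1 :=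
        calc _ ≤ (n + 1 + 1 + 1) ^ 2 + (n ^ 2 + 2 * n) := Nat.le_add_right _ _
          _ = _ := by ring
      have h3 : 2 ^ (n + 1 + 1 + 1 + 1) = 2 ^ (n + 2 + 1) * 2 := pow_succ 2 (n + 2 + 1)
      omega

/-- conjugation action as permutations -/
def conjPerm {G : Type} [Group G] (Z : Subgroup G) [Z.Normal] (E : Subgroup (G ⧸ Z)) [E.Normal] :
    G →* Equiv.Perm E :=
  ((MulAut.toPerm E).comp (MulAut.conjNormal)).comp (QuotientGroup.mk' Z)

lemma conjPerm_val {G : Type} [Group G] (Z : Subgroup G) [Z.Normal] (E : Subgroup (G ⧸ Z))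
    [E.Normal] (g : G) (e : E) :
    (conjPerm Z E g e).1 = (QuotientGroup.mk' Z g) * e.1 * (QuotientGroup.mk' Z g)⁻¹ := rfl

lemma conjPerm_ne {G : Type} [Group G] (Z : Subgroup G) [Z.Normal] (E : Subgroup (G ⧸ Z))
    [E.Normal] (h : ¬ (∀ g : G ⧸ Z, ∀ a ∈ E, g * a = a * g)) : ∃ g, conjPerm Z E g ≠ 1 := by
  by_contra! h1
  apply h
  intro g a ha
  obtain ⟨g, rfl⟩ := QuotientGroup.mk'_surjective Z g
  have h2 := congrArg (fun f : Equiv.Perm E => (f ⟨a, ha⟩).1) (h1 g)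
  simp only [conjPerm_val, Equiv.Perm.one_apply] at h2
  rwa [mul_inv_eq_iff_eq_mul] at h2

lemma small_quot {G X : Type} [Group G] [Finite G] [Finite X]
    (hp : ⁅(⊤ : Subgroup G), (⊤ : Subgroup G)⁆ = ⊤) (N : Subgroup G) [N.Normal]
    [Group.IsSolvable N] (φ : G →* Equiv.Perm X) (hφ : ∃ g, φ g ≠ 1) :
    ∃ (Y : Type) (_ : Finite Y) (ψ : G →* Equiv.Perm Y), (∀ n ∈ N, ψ n = 1) ∧ (∃ g, ψ g ≠ 1) ∧
      Nat.card Y ≤ (Nat.card X).factorial := by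
  let Q := N ⊔ φ.ker
  have hQ : Q ≠ ⊤ := by
    intro hQ
    have h1 : N.map φ = φ.range := by
      rw [MonoidHom.range_eq_map, ← hQ, Subgroup.map_sup, (Subgroup.map_eq_bot_iff _).2 le_rfl,
        sup_bot_eq]
    have h2 : Group.IsSolvable (N.map φ) :=
      Group.isSolvable_of_surjective (f := φ.subgroupMap N) (φ.subgroupMap_surjective N)
    rw [h1] at h2
    have h3 : ⁅φ.range, φ.range⁆ = φ.range := by
      rw [MonoidHom.range_eq_map, ← Subgroup.map_commutator, hp]
    have h4 := solv_bot φ.range h3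
    obtain ⟨g, hg⟩ := hφ
    have : φ g ∈ φ.range := ⟨g, rfl⟩
    rw [h4] at this
    exact hg this
  refine ⟨G ⧸ Q, inferInstance, MulAction.toPermHom G (G ⧸ Q), ?_, ?_, ?_⟩
  · intro n hn
    ext y
    obtain ⟨g, rfl⟩ := QuotientGroup.mk_surjective y
    change ((n * g : G) : G ⧸ Q) = (g : G ⧸ Q)
    rw [QuotientGroup.eq]
    have : N ≤ Q := le_sup_left
    apply this
    have h := Subgroup.Normal.conj_mem (inferInstance : N.Normal) n⁻¹ (N.inv_mem hn) g⁻¹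
    convert h using 1
    group
  · by_contra! h
    apply hQ
    rw [eq_top_iff]
    intro g _
    have h1 := congrArg (fun f : Equiv.Perm (G ⧸ Q) => f ((1 : G) : G ⧸ Q)) (h g)
    change ((g * 1 : G) : G ⧸ Q) = ((1 : G) : G ⧸ Q) at h1
    rw [mul_one] at h1
    exact (QuotientGroup.eq_one_iff g).1 h1
  · have h1 : Nat.card (G ⧸ Q) ≤ Nat.card (G ⧸ φ.ker) := by
      refine Nat.card_le_card_of_surjective (QuotientGroup.map φ.ker Q (MonoidHom.id G) ?_) ?_
      · exact (le_sup_right : φ.ker ≤ Q)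
      · intro y
        obtain ⟨g, rfl⟩ := QuotientGroup.mk_surjective y
        exact ⟨(g : G ⧸ φ.ker), rfl⟩
    have h2 : Nat.card (G ⧸ φ.ker) = Nat.card φ.range :=
      Nat.card_congr (QuotientGroup.quotientKerEquivRange φ).toEquiv
    have h3 : Nat.card φ.range ≤ Nat.card (Equiv.Perm X) :=
      Nat.card_le_card_of_injective _ Subtype.val_injective
    rw [Nat.card_perm] at h3
    omega

lemma stage2 {G V : Type} [Group G] [Finite G] [AddCommGroup V] [Finite V] [Nontrivial V]
    (hp : ⁅(⊤ : Subgroup G), (⊤ : Subgroup G)⁆ = ⊤)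
    (τ : G →* AddMonoid.End V)
    (hirr : ∀ A : AddSubgroup V, (∀ g, ∀ a ∈ A, τ g a ∈ A) → A = ⊥ ∨ A = ⊤)
    (hnt : ∃ g, τ g ≠ 1) (D : ℕ) (hD : Nat.card V ≤ D ^ 2)
    (hperm : ∀ (X : Type) [Finite X] (φ : G →* Equiv.Perm X), Nat.card X ≤ D → ∀ g, φ g = 1)
    (N : Subgroup G) [N.Normal] [Group.IsSolvable N] :
    ∃ (Y : Type) (_ : Finite Y) (ψ : G →* Equiv.Perm Y), (∀ n ∈ N, ψ n = 1) ∧ (∃ g, ψ g ≠ 1) ∧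
      (Nat.card Y ≤ D ^ 2 ∨ Nat.card Y ≤ (256).factorial) := by
  classical
  obtain ⟨L, _, _, _, hlin, hcent⟩ := exists_field τ hirr
  let ρ : G →* Module.End L V :=
    { toFun := fun g =>
        { toFun := τ g
          map_add' := map_add _
          map_smul' := hlin g }
      map_one' := by ext v; change τ 1 v = v; rw [map_one]; rfl
      map_mul' := fun g h => by ext v; change τ (g * h) v = τ g (τ h v); rw [map_mul]; rfl }
  have hρ : ∀ g v, ρ g v = τ g v := fun g v => rfl
  have hmul : ∀ g h v, τ (g * h) v = τ g (τ h v) := fun g h v => by rw [map_mul]; rfl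
  have hFD : FiniteDimensional L V := Module.Finite.of_finite
  by_cases hN : ∀ a ∈ N, ∃ c : L, ρ a = algebraMap L _ c
  · -- scalar case
    have hsc : ∀ a ∈ N, ∃ c : L, ∀ v, τ a v = c • v := by
      intro a ha
      obtain ⟨c, hc⟩ := hN a ha
      exact ⟨c, fun v => by rw [← hρ, hc, Module.algebraMap_end_apply]⟩
    let s : Setoid V :=
      { r := fun v w => ∃ n ∈ N, τ n v = w
        iseqv :=
          { refl := fun v => ⟨1, N.one_mem, by rw [map_one]; rfl⟩
            symm := by
              rintro v w ⟨n, hn, rfl⟩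
              exact ⟨n⁻¹, N.inv_mem hn, by rw [← hmul, inv_mul_cancel, map_one]; rfl⟩
            trans := by
              rintro u v w ⟨n, hn, rfl⟩ ⟨m, hm, rfl⟩
              exact ⟨m * n, N.mul_mem hm hn, hmul _ _ _⟩ } }
    letI : MulAction G (Quotient s) :=
      { smul := fun g => Quotient.map (τ g) (by
          rintro v w ⟨n, hn, rfl⟩
          refine ⟨g * n * g⁻¹, Subgroup.Normal.conj_mem inferInstance n hn g, ?_⟩
          rw [← hmul, ← hmul]; congr 2; group)
        one_smul := by
          intro y
          induction y using Quotient.inductionOn with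
          | _ v =>
            change Quotient.mk s (τ 1 v) = Quotient.mk s v
            rw [map_one]; rfl
        mul_smul := by
          intro g h y
          induction y using Quotient.inductionOn with
          | _ v =>
            change Quotient.mk s (τ (g * h) v) = Quotient.mk s (τ g (τ h v))
            rw [hmul] }
    have hsm : ∀ (g : G) (v : V), g • (Quotient.mk s v) = Quotient.mk s (τ g v) := fun g v => rfl
    refine ⟨Quotient s, inferInstance, MulAction.toPermHom G (Quotient s), ?_, ?_, Or.inl ?_⟩
    · intro n hn
      ext y
      induction y using Quotient.inductionOn with
      | _ v =>
        rw [MulAction.toPermHom_apply, MulAction.toPerm_apply, hsm, Equiv.Perm.one_apply]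
        have h1 : ∃ k ∈ N, τ k v = τ n v := ⟨n, hn, rfl⟩
        exact (Quotient.sound (s := s) h1).symm
    · by_contra! h
      have hex : ∀ g v, ∃ n ∈ N, τ n v = τ g v := by
        intro g v
        have h1 := congrArg (fun f : Equiv.Perm (Quotient s) => f (Quotient.mk s v)) (h g)
        simp only [MulAction.toPermHom_apply, MulAction.toPerm_apply, hsm,
          Equiv.Perm.one_apply] at h1
        exact Quotient.exact h1.symm
      obtain ⟨g, hg⟩ := hnt
      apply hg
      refine perfect_trivial hp τ (fun a b => ?_) g
      ext v
      obtain ⟨n, hn, hnv⟩ := hex a v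
      obtain ⟨m, hm, hmv⟩ := hex b v
      obtain ⟨c, hc⟩ := hsc n hn
      obtain ⟨d, hd⟩ := hsc m hm
      change τ a (τ b v) = τ b (τ a v)
      rw [← hnv, ← hmv, hc, hd, hlin, hlin, ← hnv, ← hmv, hc, hd, smul_comm]
    · exact (Nat.card_le_card_of_surjective (Quotient.mk s) Quotient.mk_surjective).trans hD
  · let m := Module.finrank L V
    have hcardV : 2 ^ m ≤ D ^ 2 := by
      letI := Fintype.ofFinite L
      letI := Fintype.ofFinite V
      have h1 : Fintype.card V = Fintype.card L ^ m := Module.card_eq_pow_finrank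
      rw [Nat.card_eq_fintype_card, h1] at hD
      exact (Nat.pow_le_pow_left Fintype.one_lt_card m).trans hD
    have hmD : m ≤ D := by
      by_contra! h
      have h1 := pow2 D
      have h2 : 2 ^ (D + 1) ≤ 2 ^ m := Nat.pow_le_pow_right (by norm_num) h
      omega
    obtain ⟨Z, hZn, E, hEn, hEne, hEc, hmin, hcard, hnc⟩ := stage hp ρ
      (by
        intro W hW
        rcases hirr W.toAddSubgroup hW with h | h
        · left
          exact Submodule.toAddSubgroup_injective h
        · right
          exact Submodule.toAddSubgroup_injective h)
      (by
        intro f hf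
        obtain ⟨c, hc⟩ := hcent f.toAddMonoidHom (fun g v =>
          congrArg (fun q : Module.End L V => q v) (hf g))
        refine ⟨c, ?_⟩
        ext v
        rw [Module.algebraMap_end_apply]
        exact hc v)
      (by
        intro R _ _ _ hR s t
        have : Finite R := Module.finite_of_finite L
        exact @aut_fin L R _ hR.toField _ _ s t)
      (fun X _ φ hX => hperm X φ (hX.trans hmD)) N hN
    have hne := conjPerm_ne Z E hnc
    have hDE : D < m ^ 2 := by
      by_contra! h
      obtain ⟨g, hg⟩ := hne
      exact hg (hperm E (conjPerm Z E) (hcard.trans h) g)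
    have hm16 : m < 16 := by
      by_contra! h
      have h1 := pow4 m h
      have h2 : D ^ 2 < (m ^ 2) ^ 2 := Nat.pow_lt_pow_left hDE (by norm_num)
      have h3 : (m ^ 2) ^ 2 = m ^ 4 := by ring
      omega
    obtain ⟨Y, hY, ψ, h1, h2, h3⟩ := small_quot hp N (conjPerm Z E) hne
    refine ⟨Y, hY, ψ, h1, h2, Or.inr (h3.trans (Nat.factorial_le (hcard.trans ?_)))⟩
    change m ^ 2 ≤ 256
    nlinarith

lemma rep_of_end {G V : Type} [Group G] [AddCommGroup V] [Module ℂ V] [FiniteDimensional ℂ V]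
    (ρ : G →* Module.End ℂ V) (h : ∃ g, ρ g ≠ 1) :
    ∃ φ : G →* GL (Fin (Module.finrank ℂ V)) ℂ, φ.range ≠ ⊥ := by
  let e := LinearMap.toMatrixAlgEquiv (Module.finBasis ℂ V)
  let f : G →* Matrix (Fin (Module.finrank ℂ V)) (Fin (Module.finrank ℂ V)) ℂ :=
    (e : Module.End ℂ V →* _).comp ρ
  refine ⟨f.toHomUnits, fun hb => ?_⟩
  obtain ⟨g, hg⟩ := h
  apply hg
  have h1 : f.toHomUnits g ∈ f.toHomUnits.range := ⟨g, rfl⟩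
  rw [hb, Subgroup.mem_bot] at h1
  have h2 : e (ρ g) = 1 := congrArg Units.val h1
  exact e.injective (h2.trans (map_one e).symm)

/-- permutation representation -/
def permRep {G X : Type} [Group G] (φ : G →* Equiv.Perm X) : G →* Module.End ℂ (X → ℂ) where
  toFun g := LinearMap.funLeft ℂ ℂ (φ g⁻¹)
  map_one' := by ext f x; simp [LinearMap.funLeft]
  map_mul' g h := by
    apply LinearMap.ext; intro f; funext x
    simp [LinearMap.funLeft_apply, _root_.mul_inv_rev, Module.End.mul_apply]

lemma permRep_apply {G X : Type} [Group G] (φ : G →* Equiv.Perm X) (g : G) (f : X → ℂ) (x : X) :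
    permRep φ g f x = f (φ g⁻¹ x) := rfl

lemma permRep_ne {G X : Type} [Group G] (φ : G →* Equiv.Perm X) (h : ∃ g, φ g ≠ 1) :
    ∃ g, permRep φ g ≠ 1 := by
  classical
  obtain ⟨g, hg⟩ := h
  refine ⟨g⁻¹, fun h1 => hg ?_⟩
  ext x
  have h2 := congrArg (fun T : Module.End ℂ (X → ℂ) => T (Pi.single x 1) x) h1
  simp only [permRep_apply, inv_inv, Module.End.one_apply, Pi.single_eq_same] at h2
  by_contra h3
  rw [Equiv.Perm.one_apply] at h3
  rw [Pi.single_eq_of_ne h3] at h2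
  exact zero_ne_one h2

lemma rep_of_perm {G X : Type} [Group G] [Finite X] (φ : G →* Equiv.Perm X) (h : ∃ g, φ g ≠ 1) :
    ∃ φ : G →* GL (Fin (Nat.card X)) ℂ, φ.range ≠ ⊥ := by
  letI := Fintype.ofFinite X
  have := rep_of_end (permRep φ) (permRep_ne φ h)
  rwa [Module.finrank_fintype_fun_eq_card, ← Nat.card_eq_fintype_card] at this

lemma irr_of_min {G V : Type} [Group G] [AddCommGroup V] [Module ℂ V] [FiniteDimensional ℂ V]
    (hp : ⁅(⊤ : Subgroup G), (⊤ : Subgroup G)⁆ = ⊤)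
    (ρ : G →* Module.End ℂ V) (h : ∃ g, ρ g ≠ 1)
    (hmin : ∀ n < Module.finrank ℂ V, ¬ ∃ φ : G →* GL (Fin n) ℂ, φ.range ≠ ⊥)
    (W : Submodule ℂ V) (hW : ∀ g, ∀ w ∈ W, ρ g w ∈ W) : W = ⊥ ∨ W = ⊤ := by
  by_contra! hcon
  obtain ⟨hb, ht⟩ := hcon
  have hmul : ∀ g k v, ρ (g * k) v = ρ g (ρ k v) := fun g k v => by rw [map_mul]; rfl
  let ρ1 : G →* Module.End ℂ W :=
    { toFun := fun g => (ρ g).restrict (hW g)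
      map_one' := by
        ext w; change ρ 1 w.1 = w.1; rw [map_one]; rfl
      map_mul' := fun g k => by
        ext w; exact hmul g k w.1 }
  let ρ2 : G →* Module.End ℂ (V ⧸ W) :=
    { toFun := fun g => W.mapQ W (ρ g) (hW g)
      map_one' := by
        apply Submodule.linearMap_qext; ext v
        change Submodule.Quotient.mk (ρ 1 v) = Submodule.Quotient.mk v
        rw [map_one]; rfl
      map_mul' := fun g k => by
        apply Submodule.linearMap_qext; ext v
        change Submodule.Quotient.mk (ρ (g * k) v) = Submodule.Quotient.mk (ρ g (ρ k v))
        rw [hmul] }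
  have h1 : ∀ g, ρ1 g = 1 := by
    by_contra! h1
    exact hmin _ (Submodule.finrank_lt ht) (rep_of_end ρ1 h1)
  have h2 : ∀ g, ρ2 g = 1 := by
    by_contra! h2
    refine hmin _ ?_ (rep_of_end ρ2 h2)
    have h3 := Submodule.finrank_quotient_add_finrank W
    have h4 : 0 < Module.finrank ℂ W := by
      rw [Nat.pos_iff_ne_zero]
      intro h0
      exact hb (Submodule.finrank_eq_zero.1 h0)
    omega
  have h1' : ∀ g, ∀ w ∈ W, ρ g w = w := fun g w hw =>
    congrArg (fun T : Module.End ℂ W => (T ⟨w, hw⟩).1) (h1 g)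
  have h2' : ∀ g v, ρ g v - v ∈ W := fun g v => by
    have := congrArg (fun T : Module.End ℂ (V ⧸ W) => T (Submodule.Quotient.mk v)) (h2 g)
    exact (Submodule.Quotient.eq W).1 this
  have h3 : ∀ a b v, ρ a (ρ b v) = ρ a v + ρ b v - v := by
    intro a b v
    have := h1' a _ (h2' b v)
    rw [map_sub] at this
    rw [sub_eq_iff_eq_add] at this
    rw [this]; abel
  obtain ⟨g, hg⟩ := h
  apply hg
  refine perfect_trivial hp ρ (fun a b => ?_) g
  ext v
  change ρ a (ρ b v) = ρ b (ρ a v)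
  rw [h3, h3, add_comm]

lemma main_min {G : Type} [Group G] [Finite G]
    (hp : ⁅(⊤ : Subgroup G), (⊤ : Subgroup G)⁆ = ⊤) (N : Subgroup G) [N.Normal]
    [Group.IsSolvable N] (d : ℕ) (φ : G →* GL (Fin d) ℂ) (hφ : φ.range ≠ ⊥)
    (hmin : ∀ n < d, ¬ ∃ φ : G →* GL (Fin n) ℂ, φ.range ≠ ⊥) :
    ∃ e : ℕ, (e ≤ d ^ 2 ∨ e ≤ (256).factorial) ∧ ∃ ψ : G ⧸ N →* GL (Fin e) ℂ, ψ.range ≠ ⊥ := by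
  classical
  let V := Fin d → ℂ
  have hfr : Module.finrank ℂ V = d := by simp [V]
  let ρ : G →* Module.End ℂ V :=
    ((Matrix.toLinAlgEquiv' : Matrix (Fin d) (Fin d) ℂ ≃ₐ[ℂ] _) : _ →* Module.End ℂ V).comp
      ((Units.coeHom _).comp φ)
  have hρ : ∃ g, ρ g ≠ 1 := by
    by_contra! h
    apply hφ
    rw [eq_bot_iff]
    rintro _ ⟨g, rfl⟩
    rw [Subgroup.mem_bot]
    ext1
    have h1 : (Matrix.toLinAlgEquiv' : Matrix (Fin d) (Fin d) ℂ ≃ₐ[ℂ] _) (φ g).1 = 1 := h g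
    exact (Matrix.toLinAlgEquiv' : Matrix (Fin d) (Fin d) ℂ ≃ₐ[ℂ] _).injective
      (h1.trans (map_one _).symm)
  have hVnt : Nontrivial V := by
    by_contra hV
    rw [not_nontrivial_iff_subsingleton] at hV
    obtain ⟨g, hg⟩ := hρ
    exact hg (Subsingleton.elim _ _)
  have hirr := irr_of_min hp ρ hρ (by rwa [hfr])
  have hinv1 : ∀ g, ρ g * ρ g⁻¹ = 1 := fun g => by rw [← map_mul, mul_inv_cancel, map_one]
  have hinv2 : ∀ g, ρ g⁻¹ * ρ g = 1 := fun g => by rw [← map_mul, inv_mul_cancel, map_one]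
  have hschur : ∀ f : Module.End ℂ V, (∀ g, f * ρ g = ρ g * f) →
      ∃ c : ℂ, f = algebraMap ℂ _ c := by
    intro f hf
    obtain ⟨c, hc⟩ := Module.End.exists_eigenvalue f
    refine ⟨c, ?_⟩
    have h1 := (hirr (Module.End.eigenspace f c) (by
      intro g w hw
      rw [Module.End.mem_eigenspace_iff] at hw ⊢
      have := congrArg (fun T : Module.End ℂ V => T w) (hf g)
      simp only [Module.End.mul_apply, hw, map_smul] at this
      exact this)).resolve_left hc
    apply LinearMap.ext; intro v
    have : v ∈ Module.End.eigenspace f c := h1 ▸ Submodule.mem_top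
    rw [Module.End.mem_eigenspace_iff] at this
    rw [this, Module.algebraMap_end_apply]
  have hperm : ∀ (X : Type) [Finite X] (φ : G →* Equiv.Perm X), Nat.card X ≤ d →
      ∀ g, φ g = 1 := by
    intro X _ φ hX
    by_contra! h
    rcases hX.lt_or_eq with h1 | h1
    · exact hmin _ h1 (rep_of_perm φ h)
    · letI := Fintype.ofFinite X
      have hfrX : Module.finrank ℂ (X → ℂ) = d := by
        rw [Module.finrank_fintype_fun_eq_card, ← Nat.card_eq_fintype_card, h1]
      have hX0 : ∃ x y : X, x ≠ y := by
        obtain ⟨g, hg⟩ := h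
        by_contra! hxy
        exact hg (Equiv.ext fun x => hxy _ _)
      obtain ⟨x, y, hxy⟩ := hX0
      let W : Submodule ℂ (X → ℂ) := Submodule.span ℂ {fun _ => 1}
      rcases irr_of_min hp (permRep φ) (permRep_ne φ h) (by rwa [hfrX]) W (by
        intro g w hw
        obtain ⟨c, rfl⟩ := Submodule.mem_span_singleton.1 hw
        exact Submodule.mem_span_singleton.2 ⟨c, by funext z; simp [permRep_apply]⟩) with h2 | h2
      · have := Submodule.span_singleton_eq_bot.1 h2
        exact one_ne_zero (congrFun this x)
      · have h3 : Pi.single x (1 : ℂ) ∈ W := h2 ▸ Submodule.mem_top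
        obtain ⟨c, hc⟩ := Submodule.mem_span_singleton.1 h3
        have h4 := congrFun hc x
        have h5 := congrFun hc y
        simp only [Pi.smul_apply, smul_eq_mul, mul_one, Pi.single_eq_same] at h4 h5
        rw [Pi.single_eq_of_ne hxy.symm] at h5
        rw [h4] at h5
        exact one_ne_zero h5
  by_cases hN : ∀ a ∈ N, ∃ c : ℂ, ρ a = algebraMap ℂ _ c
  · let A : G →* Module.End ℂ (Module.End ℂ V) :=
      { toFun := fun g => (LinearMap.mulLeft ℂ (ρ g)) ∘ₗ (LinearMap.mulRight ℂ (ρ g⁻¹))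
        map_one' := by
          apply LinearMap.ext; intro f
          change ρ 1 * (f * ρ 1⁻¹) = f
          rw [inv_one, map_one, one_mul, mul_one]
        map_mul' := fun g h => by
          apply LinearMap.ext; intro f
          change ρ (g * h) * (f * ρ (g * h)⁻¹) = ρ g * ((ρ h * (f * ρ h⁻¹)) * ρ g⁻¹)
          rw [_root_.mul_inv_rev, map_mul, map_mul]; simp only [mul_assoc] }
    have hA : ∀ g f, A g f = ρ g * (f * ρ g⁻¹) := fun g f => rfl
    let A' : G ⧸ N →* Module.End ℂ (Module.End ℂ V) := QuotientGroup.lift N A (by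
      intro n hn
      obtain ⟨c, hc⟩ := hN n hn
      change A n = 1
      apply LinearMap.ext; intro f
      rw [hA, hc, Algebra.commutes, mul_assoc, ← hc, hinv2, mul_one]; rfl)
    refine ⟨Module.finrank ℂ (Module.End ℂ V), Or.inl ?_, rep_of_end A' ?_⟩
    · rw [Module.finrank_linearMap, hfr, sq]
    · by_contra! h
      obtain ⟨g, hg⟩ := hρ
      apply hg
      refine perfect_trivial hp ρ (fun a b => ?_) g
      have h1 : A a = 1 := h (a : G ⧸ N)
      have h2 := hA a (ρ b)
      rw [h1] at h2
      change ρ b = _ at h2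
      conv_rhs => rw [h2]
      rw [mul_assoc, mul_assoc, hinv2, mul_one]
  · obtain ⟨Z, hZn, E, hEn, hEne, hEc, hminE, hcard, hnc⟩ := stage hp ρ hirr hschur
      (by
        intro R _ _ _ hR s t
        have : IsDomain R := hR.isDomain
        have hb := IsAlgClosed.algebraMap_bijective_of_isIntegral (k := ℂ) (K := R)
        apply AlgHom.ext
        intro r
        obtain ⟨c, rfl⟩ := hb.2 r
        rw [AlgHom.commutes, AlgHom.commutes])
      (by rwa [hfr]) N hN
    rw [hfr] at hcard
    letI : CommGroup E := { (inferInstance : Group E) with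
      mul_comm := fun a b => Subtype.ext (hEc _ a.2 _ b.2) }
    let τ : G →* AddMonoid.End (Additive E) :=
      { toFun := fun g =>
          { toFun := fun v => Additive.ofMul (conjPerm Z E g v.toMul)
            map_zero' := congrArg Additive.ofMul (Subtype.ext (by
              rw [conjPerm_val]; change _ * 1 * _ = (1 : G ⧸ Z); group))
            map_add' := fun v w => congrArg Additive.ofMul (Subtype.ext (by
              rw [conjPerm_val]
              change _ * (v.toMul.1 * w.toMul.1) * _ =
                (conjPerm Z E g v.toMul).1 * (conjPerm Z E g w.toMul).1
              rw [conjPerm_val, conjPerm_val]; group)) }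
        map_one' := by
          apply AddMonoidHom.ext; intro v
          change Additive.ofMul (conjPerm Z E 1 v.toMul) = v
          rw [map_one]; rfl
        map_mul' := fun g h => by
          apply AddMonoidHom.ext; intro v
          change Additive.ofMul (conjPerm Z E (g * h) v.toMul) = Additive.ofMul (conjPerm Z E g (conjPerm Z E h v.toMul))
          rw [map_mul]; rfl }
    have hτ : ∀ g v, τ g v = Additive.ofMul (conjPerm Z E g v.toMul) := fun g v => rfl
    have hEnt : Nontrivial (Additive E) := by
      have := (Subgroup.nontrivial_iff_ne_bot E).2 hEne
      exact (inferInstance : Nontrivial E)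
    obtain ⟨Y, hY, ψ, h1, h2, h3⟩ := stage2 hp τ
      (by
        intro A hA
        let M : Subgroup (G ⧸ Z) := (AddSubgroup.toSubgroup' A).map E.subtype
        have hM : ∀ x (hx : x ∈ E), x ∈ M ↔ Additive.ofMul (⟨x, hx⟩ : E) ∈ A := by
          intro x hx
          constructor
          · rintro ⟨y, hy, rfl⟩
            exact hy
          · intro h
            exact ⟨⟨x, hx⟩, h, rfl⟩
        have hME : M ≤ E := by
          rintro _ ⟨y, hy, rfl⟩
          exact y.2
        have hMn : M.Normal := ⟨by
          intro x hx g
          have hxE := hME hx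
          obtain ⟨g, rfl⟩ := QuotientGroup.mk'_surjective Z g
          have h5 := hA g _ ((hM x hxE).1 hx)
          exact (hM _ (hEn.conj_mem x hxE _)).2 h5⟩
        rcases hminE M hMn hME with h | h
        · left
          rw [eq_bot_iff]
          intro a ha
          have h6 : a.toMul.1 ∈ M := (hM _ a.toMul.2).2 ha
          rw [h, Subgroup.mem_bot] at h6
          exact (AddSubgroup.mem_bot).2 (congrArg Additive.ofMul (Subtype.ext h6))
        · right
          rw [eq_top_iff]
          intro a _
          have h6 : a.toMul.1 ∈ M := h.ge a.toMul.2
          exact (hM _ a.toMul.2).1 h6)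
      (by
        obtain ⟨g, hg⟩ := conjPerm_ne Z E hnc
        refine ⟨g, fun h => hg ?_⟩
        ext1 e
        exact congrArg (fun T : AddMonoid.End (Additive E) => (T (Additive.ofMul e)).toMul) h)
      d hcard hperm N
    obtain ⟨g, hg⟩ := h2
    exact ⟨Nat.card Y, h3, rep_of_perm (QuotientGroup.lift N ψ h1) ⟨(g : G ⧸ N), hg⟩⟩

end MinDeg

/-- For a nontrivial finite perfect group `G` with solvable normal subgroup `N`:
if `G` has a nontrivial complex representation of dimension `d`, then `G/N` has a
nontrivial complex representation of dimension `e ≤ C·d²` for an absolute constant `C`. -/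
theorem min_degree_of_perfect_quotient :
    ∃ C : ℕ, 1 ≤ C ∧
      ∀ (G : Type) [Group G], ∀ (_ : Finite G) (_ : Nontrivial G),
      ⁅(⊤ : Subgroup G), (⊤ : Subgroup G)⁆ = ⊤ →
      ∀ (N : Subgroup G) (_ : N.Normal), IsSolvable ↥N →
      ∀ d : ℕ, (∃ φ : G →* GL (Fin d) ℂ, φ.range ≠ ⊥) →
      ∃ e : ℕ, e ≤ C * d ^ 2 ∧ ∃ ψ : G ⧸ N →* GL (Fin e) ℂ, ψ.range ≠ ⊥ := by
  classical
  refine ⟨Nat.factorial 256, Nat.factorial_pos 256, ?_⟩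
  intro G _ _ _ hp N _ hs d hd
  have hs' : Group.IsSolvable N := hs
  have hex : ∃ n, ∃ φ : G →* GL (Fin n) ℂ, φ.range ≠ ⊥ := ⟨d, hd⟩
  obtain ⟨φ, hφ⟩ := Nat.find_spec hex
  obtain ⟨e, he, hψ⟩ := MinDeg.main_min hp N (Nat.find hex) φ hφ (fun n hn => Nat.find_min hex hn)
  refine ⟨e, ?_, hψ⟩
  have hle : Nat.find hex ≤ d := Nat.find_min' hex hd
  have hd0 : 1 ≤ d := by
    rw [Nat.one_le_iff_ne_zero]
    rintro rfl
    obtain ⟨φ, hφ⟩ := hd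
    apply hφ
    rw [eq_bot_iff]
    rintro x _
    exact (Subgroup.mem_bot).2 (Subsingleton.elim _ _)
  generalize hC : Nat.factorial 256 = C at he
  have hC1 : 1 ≤ C := hC ▸ Nat.factorial_pos 256
  have h1 : 1 ≤ d ^ 2 := Nat.one_le_pow _ _ hd0
  rcases he with he | he
  · calc e ≤ (Nat.find hex) ^ 2 := he
      _ ≤ d ^ 2 := Nat.pow_le_pow_left hle 2
      _ ≤ C * d ^ 2 := Nat.le_mul_of_pos_left _ hC1
  · exact he.trans (Nat.le_mul_of_pos_right _ h1)
end

section
/- Let p be a prime, let U be a finite p-group, and let T be a finite group of order coprime to p acting on U by automorphisms. Let H = [U,T] denote the subgroup of U generated by the set {u⁻¹·(t•u) : u ∈ U, t ∈ T}; this subgroup is T-invariant. Then T has no nontrivial fixed points on the abelianization of H: if x ∈ H satisfies (t•x)·x⁻¹ ∈ [H,H] for all t ∈ T, then x ∈ [H,H]. (In other words, C_{H/[H,H]}(T) = 1.) -/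
set_option synthInstance.maxHeartbeats 400000
set_option maxHeartbeats 1000000

/-- Let `U` be a finite `p`-group and `T` a finite `p'`-group acting on `U` by
automorphisms, and let `H = [U,T]` be the subgroup generated by `{u⁻¹·(t•u)}`.
Then `T` has no nontrivial fixed points on the abelianization of `H`:
if `x ∈ H` and `(t•x)·x⁻¹ ∈ [H,H]` for all `t`, then `x ∈ [H,H]`. -/
theorem no_fixed_points_on_abelianization_of_commutator
    (p : ℕ) (hp : p.Prime)
    (U : Type) [Group U] [Finite U] (hU : IsPGroup p U)
    (T : Type) [Group T] [Finite T] (hT : Nat.Coprime (Nat.card T) p)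
    [MulDistribMulAction T U] :
    ∀ x ∈ Subgroup.closure {y : U | ∃ (t : T) (u : U), y = u⁻¹ * (t • u)},
      (∀ t : T, (t • x) * x⁻¹ ∈
        ⁅Subgroup.closure {y : U | ∃ (t : T) (u : U), y = u⁻¹ * (t • u)},
          Subgroup.closure {y : U | ∃ (t : T) (u : U), y = u⁻¹ * (t • u)}⁆) →
      x ∈ ⁅Subgroup.closure {y : U | ∃ (t : T) (u : U), y = u⁻¹ * (t • u)},
            Subgroup.closure {y : U | ∃ (t : T) (u : U), y = u⁻¹ * (t • u)}⁆ := by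
  classical
  have := Fintype.ofFinite T
  set H := Subgroup.closure {y : U | ∃ (t : T) (u : U), y = u⁻¹ * (t • u)} with hH
  have hc : ∀ (t : T) (u : U), u⁻¹ * (t • u) ∈ H := fun t u =>
    Subgroup.subset_closure ⟨t, u, rfl⟩
  have hcoc : ∀ (s t : T) (u : U),
      s • (u⁻¹ * (t • u)) = (u⁻¹ * (s • u))⁻¹ * (u⁻¹ * ((s * t) • u)) := by
    intro s t u
    rw [smul_mul', smul_inv', mul_smul]
    group
  have hinv : ∀ (s : T), ∀ h ∈ H, s • h ∈ H := by
    intro s h hh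
    have : H ≤ H.comap (MulDistribMulAction.toMonoidHom U s) := by
      rw [hH, Subgroup.closure_le]
      rintro y ⟨t, u, rfl⟩
      change s • (u⁻¹ * (t • u)) ∈ H
      rw [hcoc]
      exact H.mul_mem (H.inv_mem (hc _ _)) (hc _ _)
    exact this hh
  let q : H →* Abelianization H := Abelianization.of
  let N : H →* Abelianization H :=
    { toFun := fun h => ∏ t : T, q ⟨t • (h : U), hinv t h h.2⟩
      map_one' := by
        apply Finset.prod_eq_one
        intro t _
        rw [← map_one q]
        congr 1
        ext
        simp
      map_mul' := by
        intro a b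
        rw [← Finset.prod_mul_distrib]
        refine Finset.prod_congr rfl fun t _ => ?_
        rw [← map_mul]
        congr 1
        ext
        simp }
  have hN : ∀ h : H, N h = 1 := by
    have hle : H ≤ N.ker.map H.subtype := by
      conv_lhs => rw [hH]
      rw [Subgroup.closure_le]
      rintro y ⟨t, u, rfl⟩
      refine ⟨⟨_, hc t u⟩, ?_, rfl⟩
      change (∏ s : T, q ⟨s • (u⁻¹ * (t • u)), _⟩) = 1
      have : ∀ s : T, q ⟨s • (u⁻¹ * (t • u)), hinv s _ (hc t u)⟩
          = (q ⟨_, hc s u⟩)⁻¹ * q ⟨_, hc (s * t) u⟩ := by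
        intro s
        rw [← map_inv, ← map_mul]
        congr 1
        ext
        exact hcoc s t u
      rw [Finset.prod_congr rfl fun s _ => this s, Finset.prod_mul_distrib,
        Finset.prod_inv_distrib]
      rw [inv_mul_eq_one]
      exact (Equiv.prod_comp (Equiv.mulRight t) (fun s => q ⟨_, hc s u⟩)).symm
    rintro ⟨h, hh⟩
    obtain ⟨k, hk, hkh⟩ := hle hh
    have : k = ⟨h, hh⟩ := Subtype.ext hkh
    rw [← this]
    exact hk
  intro x hx hfix
  have hcomm : ⁅H, H⁆ = (commutator H).map H.subtype := (Subgroup.map_subtype_commutator H).symm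
  rw [hcomm] at hfix ⊢
  have hq : ∀ y : H, q y = 1 ↔ y ∈ commutator H := by
    intro y
    rw [← Abelianization.ker_of, MonoidHom.mem_ker]
  have h1 : ∀ t : T, q ⟨t • x, hinv t x hx⟩ = q ⟨x, hx⟩ := by
    intro t
    obtain ⟨k, hk, hkx⟩ := hfix t
    have hk1 := (hq k).2 hk
    have : k = ⟨t • x, hinv t x hx⟩ * ⟨x, hx⟩⁻¹ := Subtype.ext hkx
    rw [this, map_mul, map_inv] at hk1
    exact mul_inv_eq_one.1 hk1
  have h2 : q ⟨x, hx⟩ ^ Nat.card T = 1 := by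
    have h3 := hN ⟨x, hx⟩
    change (∏ t : T, q ⟨t • x, hinv t x hx⟩) = 1 at h3
    rw [Finset.prod_congr rfl fun t _ => h1 t] at h3
    simpa using h3
  obtain ⟨k, hk⟩ := hU x
  have h4 : q ⟨x, hx⟩ ^ p ^ k = 1 := by
    rw [← map_pow, ← map_one q]
    congr 1
    ext
    exact hk
  have h5 : q ⟨x, hx⟩ = 1 := by
    rw [← orderOf_eq_one_iff]
    exact Nat.eq_one_of_dvd_coprimes (hT.pow_right k) (orderOf_dvd_of_pow_eq_one h2)
      (orderOf_dvd_of_pow_eq_one h4)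
  exact ⟨⟨x, hx⟩, (hq _).1 h5, rfl⟩
end

section
/- Let p be a prime, let U be a finite p-group and T a finite group of order coprime to p acting on U by automorphisms, and let n ≥ 1 be a natural number. Define the lower central series of a group X by γ₁(X) = X and γ_{k+1}(X) = [γ_k(X), X]. Assume γ_n(U) = 1 and γ_n(T) = 1. Let G = U ⋊ T be the semidirect product, and let [U,T] denote the subgroup of G generated by the commutators u⁻¹t⁻¹ut with u ∈ U and t ∈ T (regarding U and T as subgroups of G). Then γ_m(G) = [U,T] for every m ≥ n; in particular γ_n(G) = ⋂_{k ≥ 1} γ_k(G) = [U,T]. -/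
set_option synthInstance.maxHeartbeats 400000
set_option maxHeartbeats 1000000

section
open scoped commutatorElement

/-- If the commutator of `x` and `y` commutes with both and `x ^ a = 1`, `y ^ b = 1` with `a`, `b`
coprime, then the commutator is trivial. -/
lemma comm_eq_one_of_coprime {Q : Type*} [Group Q] (x y : Q) (a b : ℕ) (hab : Nat.Coprime a b)
    (hx : x ^ a = 1) (hy : y ^ b = 1) (hc : ∀ z : Q, Commute ⁅x, y⁆ z) : ⁅x, y⁆ = 1 := by
  have h1 : ⁅x, y⁆ ^ b = 1 := by
    have e : x * y * x⁻¹ = ⁅x, y⁆ * y := by simp [commutatorElement_def]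
    have e2 : (x * y * x⁻¹) ^ b = 1 := by rw [conj_pow, hy]; simp
    rwa [e, (hc y).mul_pow, hy, mul_one] at e2
  have h2 : ⁅x, y⁆ ^ a = 1 := by
    have e : y * x⁻¹ * y⁻¹ = x⁻¹ * ⁅x, y⁆ := by simp [commutatorElement_def, mul_assoc]
    have e2 : (y * x⁻¹ * y⁻¹) ^ a = 1 := by rw [conj_pow, inv_pow, hx]; simp
    rwa [e, ((hc x⁻¹).symm).mul_pow, inv_pow, hx, inv_one, one_mul] at e2
  have := pow_gcd_eq_one.mpr ⟨h2, h1⟩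
  rwa [Nat.Coprime.gcd_eq_one hab, pow_one] at this

/-- Elements of coprime orders commute modulo every term of the lower central series. -/
lemma comm_mem_lcs {G : Type*} [Group G] (x y : G) (a b : ℕ) (hab : Nat.Coprime a b)
    (hx : x ^ a = 1) (hy : y ^ b = 1) (k : ℕ) :
    ⁅x, y⁆ ∈ Subgroup.lowerCentralSeries (⊤ : Subgroup G) k := by
  induction k with
  | zero => simp
  | succ k ih =>
    rw [← QuotientGroup.eq_one_iff, ← QuotientGroup.mk'_apply, map_commutatorElement]
    refine comm_eq_one_of_coprime _ _ a b hab (by rw [← map_pow, hx, map_one])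
      (by rw [← map_pow, hy, map_one]) ?_
    intro z
    obtain ⟨z, rfl⟩ := QuotientGroup.mk'_surjective _ z
    rw [← map_commutatorElement, ← commutatorElement_eq_one_iff_commute, ← map_commutatorElement,
      QuotientGroup.mk'_apply, QuotientGroup.eq_one_iff]
    exact Subgroup.commutator_mem_commutator ih (Subgroup.mem_top z)

end

/-- Let `U` be a finite `p`-group and `T` a finite `p'`-group acting on `U`, with
`γ_n(U) = 1` and `γ_n(T) = 1` (where `γ₁(X) = X`, so `γ_n = lowerCentralSeries (n-1)`).
Then in `G = U ⋊ T` we have `γ_m(G) = [U,T]` for all `m ≥ n`; in particular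
`γ_n(G) = ⋂_k γ_k(G) = [U,T]`. -/
theorem lcs_of_semidirect_product
    (p : ℕ) (hp : p.Prime)
    (U : Type) [Group U] [Finite U] (hU : IsPGroup p U)
    (T : Type) [Group T] [Finite T] (hT : Nat.Coprime (Nat.card T) p)
    (φ : T →* MulAut U) (n : ℕ) (hn : 1 ≤ n)
    (hUn : Subgroup.lowerCentralSeries (⊤ : Subgroup U) (n - 1) = ⊥)
    (hTn : Subgroup.lowerCentralSeries (⊤ : Subgroup T) (n - 1) = ⊥) :
    (∀ m : ℕ, n ≤ m →
      Subgroup.lowerCentralSeries (⊤ : Subgroup (U ⋊[φ] T)) (m - 1) =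
        ⁅(SemidirectProduct.inl : U →* U ⋊[φ] T).range,
          (SemidirectProduct.inr : T →* U ⋊[φ] T).range⁆) ∧
    (⨅ k : ℕ, Subgroup.lowerCentralSeries (⊤ : Subgroup (U ⋊[φ] T)) k) =
      ⁅(SemidirectProduct.inl : U →* U ⋊[φ] T).range,
        (SemidirectProduct.inr : T →* U ⋊[φ] T).range⁆ := by
  have hle : ∀ k : ℕ, ⁅(SemidirectProduct.inl : U →* U ⋊[φ] T).range,
      (SemidirectProduct.inr : T →* U ⋊[φ] T).range⁆ ≤
      Subgroup.lowerCentralSeries (⊤ : Subgroup (U ⋊[φ] T)) k := by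
    intro k
    rw [Subgroup.commutator_le]
    rintro _ ⟨u, rfl⟩ _ ⟨t, rfl⟩
    obtain ⟨r, hr⟩ := hU u
    exact comm_mem_lcs _ _ (p ^ r) (Nat.card T) (Nat.Coprime.pow_left r hT.symm)
      (by rw [← map_pow, hr, map_one]) (by rw [← map_pow, pow_card_eq_one', map_one]) k
  have hge : Subgroup.lowerCentralSeries (⊤ : Subgroup (U ⋊[φ] T)) (n - 1) ≤
      ⁅(SemidirectProduct.inl : U →* U ⋊[φ] T).range,
        (SemidirectProduct.inr : T →* U ⋊[φ] T).range⁆ := by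
    set N := ⁅(SemidirectProduct.inl : U →* U ⋊[φ] T).range,
        (SemidirectProduct.inr : T →* U ⋊[φ] T).range⁆ with hN
    have hnorm : N.Normal := by
      rw [← Subgroup.normalizer_eq_top_iff, eq_top_iff]
      intro g _
      rw [← SemidirectProduct.inl_left_mul_inr_right g]
      exact mul_mem (Subgroup.normalizer_commutator_ge_left _ _ ⟨_, rfl⟩)
        (Subgroup.normalizer_commutator_ge_right _ _ ⟨_, rfl⟩)
    let q := QuotientGroup.mk' N
    let f : U × T →* (U ⋊[φ] T) ⧸ N :=
      MonoidHom.noncommCoprod (q.comp SemidirectProduct.inl) (q.comp SemidirectProduct.inr) (by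
        intro u t
        rw [← commutatorElement_eq_one_iff_commute, MonoidHom.comp_apply, MonoidHom.comp_apply,
          ← map_commutatorElement, QuotientGroup.mk'_apply, QuotientGroup.eq_one_iff]
        exact Subgroup.commutator_mem_commutator ⟨_, rfl⟩ ⟨_, rfl⟩)
    have hf : Function.Surjective f := by
      intro z
      obtain ⟨z, rfl⟩ := QuotientGroup.mk'_surjective _ z
      refine ⟨(z.left, z.right), ?_⟩
      change q _ * q _ = q z
      rw [← map_mul, SemidirectProduct.inl_left_mul_inr_right]
    have hq : Subgroup.lowerCentralSeries (⊤ : Subgroup ((U ⋊[φ] T) ⧸ N)) (n - 1) = ⊥ := by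
      rw [← Subgroup.map_top_of_surjective f hf, ← Subgroup.map_lowerCentralSeries,
        Subgroup.top_lowerCentralSeries_prod, hUn, hTn, Subgroup.bot_prod_bot, Subgroup.map_bot]
    intro g hg
    have h1 : q g ∈ (Subgroup.lowerCentralSeries (⊤ : Subgroup (U ⋊[φ] T)) (n - 1)).map q :=
      Subgroup.mem_map_of_mem q hg
    rw [Subgroup.map_lowerCentralSeries,
      Subgroup.map_top_of_surjective q (QuotientGroup.mk'_surjective N), hq,
      Subgroup.mem_bot] at h1
    exact (QuotientGroup.eq_one_iff g).mp h1
  refine ⟨fun m hm => le_antisymm ?_ (hle _), le_antisymm ((iInf_le _ (n - 1)).trans hge)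
    (le_iInf hle)⟩
  exact (Subgroup.lowerCentralSeries_antitone _ (Nat.sub_le_sub_right hm 1)).trans hge
end

section
/- Let Γ be a finite group and m ≥ 0 a natural number. Let Γ^{(m)} denote the m-th term of the derived series of Γ (Γ^{(0)} = Γ and Γ^{(k+1)} = [Γ^{(k)}, Γ^{(k)}]). Then there exists a solvable subgroup S ≤ Γ such that Γ = Γ^{(m)}·S, i.e., every element of Γ can be written as a product x·s with x ∈ Γ^{(m)} and s ∈ S. -/
/-- For any finite group `Γ` and any `m`, there is a solvable subgroup `S ≤ Γ` with
`Γ = Γ^{(m)}·S`, where `Γ^{(m)}` is the `m`-th term of the derived series. -/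
theorem derived_series_solvable_complement
    (Γ : Type) [Group Γ] [Finite Γ] (m : ℕ) :
    ∃ S : Subgroup Γ, IsSolvable ↥S ∧
      ∀ g : Γ, ∃ x ∈ derivedSeries Γ m, ∃ s ∈ S, g = x * s := by
  have hN : (derivedSeries Γ m).Normal := derivedSeries_normal Γ m
  have hq : Group.IsSolvable (Γ ⧸ derivedSeries Γ m) := by
    refine ⟨⟨m, ?_⟩⟩
    rw [← map_derivedSeries_eq (QuotientGroup.mk'_surjective (derivedSeries Γ m)) m,
      Subgroup.map_eq_bot_iff, QuotientGroup.ker_mk']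
  generalize derivedSeries Γ m = N at *
  obtain ⟨S, hS⟩ := (Set.toFinite {S : Subgroup Γ | N ⊔ S = ⊤}).exists_minimal
    ⟨⊤, by simp⟩
  have hST : N ⊔ S = ⊤ := hS.prop
  refine ⟨S, ?_, ?_⟩
  · have key : N.subgroupOf S ≤ frattini S := by
      unfold frattini Order.radical
      refine le_iInf₂ fun M hM => ?_
      by_contra hle
      have h1 : N.subgroupOf S ⊔ M = ⊤ := hM.2 _ (right_lt_sup.2 hle)
      have h2 : S ≤ N ⊔ M.map S.subtype := by
        have h3 := congrArg (Subgroup.map S.subtype) h1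
        rw [Subgroup.map_sup, ← MonoidHom.range_eq_map, Subgroup.range_subtype] at h3
        exact h3.ge.trans (sup_le_sup_right (Subgroup.map_comap_le _ _) _)
      have h4 : N ⊔ M.map S.subtype = ⊤ :=
        top_le_iff.1 (hST ▸ sup_le le_sup_left h2)
      have h5 : S ≤ M.map S.subtype := hS.le_of_le h4 (Subgroup.map_subtype_le M)
      apply hM.1
      rw [eq_top_iff]
      intro x _
      obtain ⟨y, hy, hxy⟩ := h5 x.2
      rwa [← Subtype.ext hxy]
    have hf : Group.IsNilpotent (frattini S) := frattini_nilpotent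
    refine Group.isSolvable_of_ker_le_range (frattini S).subtype
      ((QuotientGroup.mk' N).comp S.subtype) ?_
    rw [Subgroup.range_subtype, ← MonoidHom.comap_ker, QuotientGroup.ker_mk']
    exact key
  · intro g
    have hg : g ∈ N ⊔ S := hST ▸ Subgroup.mem_top g
    obtain ⟨x, hx, s, hs, h⟩ := Subgroup.mem_sup_of_normal_left.1 hg
    exact ⟨x, hx, s, hs, h.symm⟩
end

section
/- There is an absolute constant c with the following property: for every natural number n ≥ 1, every field F, and every finite subgroup Γ of GL_n(F), there exists a natural number m ≤ c·(1 + log n) such that the m-th term Γ^{(m)} of the derived series of Γ is perfect, i.e., Γ^{(m+1)} = Γ^{(m)}. -/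
open Matrix

set_option synthInstance.maxHeartbeats 400000
set_option maxHeartbeats 1000000

namespace PC

open scoped commutatorElement

theorem der_add {G : Type*} [Group G] (K : Subgroup G) (a b : ℕ) (h : derivedSeries G a ≤ K) :
    derivedSeries G (a + b) ≤ (derivedSeries K b).map K.subtype := by
  induction b with
  | zero => simpa [← MonoidHom.range_eq_map] using h
  | succ b ih =>
    rw [← add_assoc, derivedSeries_succ, derivedSeries_succ, Subgroup.map_commutator]
    exact Subgroup.commutator_mono ih ih

theorem der_card {G : Type*} [Group G] [Finite G] [Group.IsSolvable G] (m : ℕ) (hm : Nat.card G ≤ m) :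
    derivedSeries G m = ⊥ := by
  have key : ∀ n, derivedSeries G n = ⊥ ∨ Nat.card (derivedSeries G n) + n ≤ Nat.card G := by
    intro n
    induction n with
    | zero => right; simp
    | succ n ih =>
      by_cases h : derivedSeries G n = ⊥
      · left
        rw [derivedSeries_succ, h]; simp
      · right
        have h1 := ih.resolve_left h
        have h2 : derivedSeries G (n+1) < derivedSeries G n := by
          rw [derivedSeries_succ]
          exact Group.IsSolvable.commutator_lt_of_ne_bot h
        have h3 : Nat.card (derivedSeries G (n+1)) < Nat.card (derivedSeries G n) := by
          apply lt_of_le_of_ne (Subgroup.card_le_of_le h2.le)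
          intro h4
          exact h2.ne (Subgroup.eq_of_le_of_card_ge h2.le h4.ge)
        omega
  rcases key m with h | h
  · exact h
  · have : 0 < Nat.card (derivedSeries G m) := Nat.card_pos
    omega

theorem der_card_hom {G H : Type*} [Group G] [Finite H] [Group H] [Group.IsSolvable G] (f : G →* H)
    (m : ℕ) (hm : Nat.card H ≤ m) : derivedSeries G m ≤ f.ker := by
  have hs : Group.IsSolvable f.range := Group.isSolvable_of_surjective f.rangeRestrict_surjective
  have h := der_card (G := f.range) m ((Subgroup.card_le_card_group _).trans hm)
  have h2 := map_derivedSeries_le_derivedSeries f.rangeRestrict m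
  rw [h] at h2
  intro g hg
  have := h2 (Subgroup.mem_map_of_mem _ hg)
  rw [Subgroup.mem_bot] at this
  have := congrArg Subtype.val this
  simpa using this

/-- lower the question to the range -/
theorem der_hom {G H : Type*} [Group G] [Group H] (f : G →* H) (m : ℕ)
    (h : derivedSeries f.range m = ⊥) : derivedSeries G m ≤ f.ker := by
  have h2 := map_derivedSeries_le_derivedSeries f.rangeRestrict m
  rw [h] at h2
  intro g hg
  have := h2 (Subgroup.mem_map_of_mem _ hg)
  rw [Subgroup.mem_bot] at this
  have := congrArg Subtype.val this
  simpa using this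

theorem chain {α : Type*} [PartialOrder α] [BoundedOrder α] (r : α → ℕ) (hr : StrictMono r)
    (n : ℕ) (hn : r ⊤ ≤ n) : ∃ f : ℕ → α, f 0 = ⊥ ∧ f n = ⊤ ∧ ∀ i, f i ⩿ f (i+1) := by
  have wf : WellFoundedLT α := hr.wellFoundedLT
  have h1 : ∀ a : α, ∃ b, a ⩿ b ∧ (a ≠ ⊤ → a < b) := by
    intro a
    by_cases h : a = ⊤
    · exact ⟨a, WCovBy.refl a, fun h' => absurd h h'⟩
    · obtain ⟨b, hb⟩ := exists_covBy_of_wellFoundedLT (a := a) (fun hm => h (isMax_iff_eq_top.mp hm))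
      exact ⟨b, hb.wcovBy, fun _ => hb.lt⟩
  choose nx h2 h3 using h1
  refine ⟨fun i => nx^[i] ⊥, rfl, ?_, fun i => ?_⟩
  · have : ∀ i, nx^[i] ⊥ = ⊤ ∨ i ≤ r (nx^[i] ⊥) := by
      intro i
      induction i with
      | zero => right; simp
      | succ i ih =>
        rw [Function.iterate_succ_apply']
        by_cases h : nx^[i] ⊥ = ⊤
        · left; rw [h]; exact top_le_iff.mp (h2 ⊤).le
        · right
          have := hr (h3 _ h)
          have := ih.resolve_left h
          omega
    rcases this n with h | h
    · exact h
    · by_contra hne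
      have := hr (lt_top_iff_ne_top.mpr hne)
      simp only at this
      omega
  · simp only [Function.iterate_succ_apply']
    exact h2 _

/-- Invariant submodules. -/
def Inv {k G M : Type*} [CommRing k] [Group G] [AddCommGroup M] [Module k M]
    (ρ : Representation k G M) (W : Submodule k M) : Prop := ∀ g, ∀ x ∈ W, ρ g x ∈ W

section
variable {k G M : Type*} [CommRing k] [Group G] [AddCommGroup M] [Module k M]
    (ρ : Representation k G M)

theorem unip (f : ℕ → Submodule k M) (hf : ∀ i, Inv ρ (f i)) (m : ℕ)
    (h : ∀ i, ∀ u ∈ derivedSeries G m, ∀ x ∈ f (i+1), ρ u x - x ∈ f i) (j : ℕ) :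
    ∀ i, ∀ u ∈ derivedSeries G (m+j), ∀ x ∈ f (i+2^j), ρ u x - x ∈ f i := by
  induction j with
  | zero => simpa [← MonoidHom.range_eq_map] using h
  | succ j ih =>
    intro i
    -- the subgroup acting trivially on f(i+2^(j+1))/f i
    let S : Subgroup G :=
      { carrier := {u | ∀ x ∈ f (i+2^(j+1)), ρ u x - x ∈ f i}
        one_mem' := by intro x hx; simp
        mul_mem' := by
          intro a b ha hb x hx
          have h1 := ha (ρ b x) (hf _ b x hx)
          have h2 := hb x hx
          have := add_mem h1 h2
          simpa using this
        inv_mem' := by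
          intro a ha x hx
          have h1 := ha (ρ a⁻¹ x) (hf _ _ x hx)
          have h2 := neg_mem h1
          simpa using h2 }
    suffices derivedSeries G (m+(j+1)) ≤ S from fun u hu => this hu
    rw [← add_assoc, derivedSeries_succ, Subgroup.commutator_le]
    intro u hu v hv x hx
    have e : i + 2^(j+1) = (i + 2^j) + 2^j := by ring
    obtain ⟨y, hy⟩ : ∃ y, y = ρ (v * u)⁻¹ x := ⟨_, rfl⟩
    have hyx : x = ρ v (ρ u y) := by
      have : ρ (v * u) y = x := by rw [hy, ← Module.End.mul_apply, ← map_mul]; simp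
      rw [← this]; simp
    have hye : y ∈ f ((i+2^j) + 2^j) := by rw [← e, hy]; exact hf _ _ x hx
    have a1 := ih _ u hu y hye
    have b1 := ih _ v hv y hye
    have a2 := ih _ v hv _ a1
    have b2 := ih _ u hu _ b1
    have : ρ ⁅u, v⁆ x = ρ u (ρ v y) := by
      have e1 : u * v = ⁅u, v⁆ * (v * u) := by rw [commutatorElement_def]; group
      have e2 : ρ (u * v) y = ρ (⁅u, v⁆ * (v * u)) y := by rw [← e1]
      rw [hyx]
      simpa using e2.symm
    rw [this]
    have h3 := sub_mem b2 a2
    rw [hyx]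
    convert h3 using 1
    simp only [map_sub]; abel

theorem unip_all {n : ℕ} (r : {W : Submodule k M // Inv ρ W} → ℕ) (hr : StrictMono r)
    (hn : r ⟨⊤, fun _ _ _ => trivial⟩ ≤ n) (m : ℕ)
    (h : ∀ K N : Submodule k M, Inv ρ K → Inv ρ N → K ≤ N →
      (∀ W, Inv ρ W → K ≤ W → W ≤ N → W = K ∨ W = N) →
      ∀ u ∈ derivedSeries G m, ∀ x ∈ N, ρ u x - x ∈ K) :
    derivedSeries G (m + Nat.clog 2 n) ≤ ρ.ker := by
  let _ : BoundedOrder {W : Submodule k M // Inv ρ W} :=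
    { top := ⟨⊤, fun _ _ _ => trivial⟩
      le_top := fun a => by exact le_top (a := a.1)
      bot := ⟨⊥, fun g x hx => by simp_all⟩
      bot_le := fun a => by exact bot_le (a := a.1) }
  obtain ⟨f, f0, fn, fi⟩ := chain r hr (2 ^ Nat.clog 2 n)
    (hn.trans (Nat.le_pow_clog (by norm_num) n))
  have := unip ρ (fun i => (f i).1) (fun i => (f i).2) m (fun i u hu x hx => by
    refine h _ _ (f i).2 (f (i+1)).2 (fi i).le ?_ u hu x hx
    intro W hW h1 h2
    rcases (fi i).eq_or_eq (c := ⟨W, hW⟩) h1 h2 with h | h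
    · left; rw [← h]
    · right; rw [← h]) (Nat.clog 2 n) 0
  intro u hu
  rw [MonoidHom.mem_ker]
  ext x
  have h1 := this u hu x (by
    have : (f (2 ^ Nat.clog 2 n)).1 = ⊤ := by rw [fn]; rfl
    simp [this])
  have h2 : (f 0).1 = ⊥ := by rw [f0]; rfl
  rw [h2, Submodule.mem_bot, sub_eq_zero] at h1
  simpa using h1

/-- restriction -/
def res (N : Submodule k M) (hN : Inv ρ N) : Representation k G N where
  toFun g := (ρ g).restrict (hN g)
  map_one' := by ext x; simp
  map_mul' a b := by ext x; simp

@[simp] theorem res_apply (N : Submodule k M) (hN : Inv ρ N) (g : G) (x : N) :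
    ((res ρ N hN g x : N) : M) = ρ g x := rfl

/-- quotient -/
def quo (K : Submodule k M) (hK : Inv ρ K) : Representation k G (M ⧸ K) where
  toFun g := K.mapQ K (ρ g) (hK g)
  map_one' := by ext x; simp
  map_mul' a b := by ext x; simp

@[simp] theorem quo_apply (K : Submodule k M) (hK : Inv ρ K) (g : G) (x : M) :
    quo ρ K hK g (Submodule.Quotient.mk x) = Submodule.Quotient.mk (ρ g x) := rfl

/-- Irreducible -/
def Irr : Prop := Nontrivial M ∧ ∀ W : Submodule k M, Inv ρ W → W = ⊥ ∨ W = ⊤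

theorem inv_comap (K N : Submodule k M) (hK : Inv ρ K) (hN : Inv ρ N) :
    Inv (res ρ N hN) (K.comap N.subtype) := by
  intro g x hx
  simpa using hK g _ hx

/-- subquotient -/
def sq (K N : Submodule k M) (hK : Inv ρ K) (hN : Inv ρ N) :
    Representation k G (N ⧸ K.comap N.subtype) :=
  quo (res ρ N hN) (K.comap N.subtype) (inv_comap ρ K N hK hN)

theorem sq_irr (K N : Submodule k M) (hK : Inv ρ K) (hN : Inv ρ N) (hne : K < N)
    (hh : ∀ W, Inv ρ W → K ≤ W → W ≤ N → W = K ∨ W = N) : Irr (sq ρ K N hK hN) := by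
  constructor
  · rw [Submodule.Quotient.nontrivial_iff]
    intro h
    rw [Submodule.comap_subtype_eq_top] at h
    exact absurd h hne.not_ge
  · intro W hW
    let W' : Submodule k M := (W.comap (Submodule.mkQ _)).map N.subtype
    have hW' : ∀ x (hx : x ∈ N), x ∈ W' ↔ (Submodule.Quotient.mk ⟨x, hx⟩ : N ⧸ K.comap N.subtype) ∈ W := by
      intro x hx
      simp only [W', Submodule.mem_map, Submodule.mem_comap]
      constructor
      · rintro ⟨y, hy, rfl⟩; exact hy
      · intro h; exact ⟨⟨x, hx⟩, h, rfl⟩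
    have hle : W' ≤ N := by
      rintro x ⟨y, hy, rfl⟩; exact y.2
    have := hh W' (by
      intro g x hx
      rw [hW' _ (hN g x (hle hx))]
      have := hW g _ ((hW' x (hle hx)).1 hx)
      exact this) (by
      intro x hx
      rw [hW' x (hne.le hx)]
      rw [(Submodule.Quotient.mk_eq_zero _).2 (by simpa using hx)]
      exact zero_mem _) hle
    rcases this with h1 | h1
    · left
      rw [eq_bot_iff]
      intro x hx
      obtain ⟨y, rfl⟩ := Submodule.Quotient.mk_surjective _ x
      rw [Submodule.mem_bot, Submodule.Quotient.mk_eq_zero]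
      have := (hW' y.1 y.2).2 hx
      rw [h1] at this
      exact this
    · right
      rw [eq_top_iff]
      intro x _
      obtain ⟨y, rfl⟩ := Submodule.Quotient.mk_surjective _ x
      have := (hW' y.1 y.2).1 (by rw [h1]; exact y.2)
      exact this

theorem sq_ker (K N : Submodule k M) (hK : Inv ρ K) (hN : Inv ρ N) (u : G)
    (hu : u ∈ (sq ρ K N hK hN).ker) : ∀ x ∈ N, ρ u x - x ∈ K := by
  intro x hx
  have h1 : sq ρ K N hK hN u (Submodule.Quotient.mk ⟨x, hx⟩) = Submodule.Quotient.mk ⟨x, hx⟩ := by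
    rw [MonoidHom.mem_ker] at hu
    rw [hu]; rfl
  have h2 := (Submodule.Quotient.eq _).1 (show Submodule.Quotient.mk (res ρ N hN u ⟨x, hx⟩) = _ from h1)
  simpa using h2

end

/-- the main claim in degree n for irreducible groups -/
def T (c n : ℕ) : Prop := ∀ (F : Type) [Field F] [IsAlgClosed F] (V : Type) [AddCommGroup V]
  [Module F V] [FiniteDimensional F V] (G : Type) [Group G] [Finite G] [Group.IsSolvable G]
  (ρ : Representation F G V), Irr ρ → Module.finrank F V = n →
  derivedSeries G (c * Nat.log 2 n + 1) ≤ ρ.ker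

theorem closed_bound (c n : ℕ) (hT : ∀ m ≤ n, T c m) (F : Type) [Field F] [IsAlgClosed F] (V : Type)
    [AddCommGroup V] [Module F V] [FiniteDimensional F V] (G : Type) [Group G] [Finite G]
    [Group.IsSolvable G] (ρ : Representation F G V) (hn : Module.finrank F V ≤ n) :
    derivedSeries G (c * Nat.log 2 n + 1 + Nat.clog 2 n) ≤ ρ.ker := by
  refine unip_all ρ (n := n) (fun W => Module.finrank F W.1) ?_ ?_ _ ?_
  · intro A B hAB
    exact Submodule.finrank_lt_finrank_of_lt hAB
  · simpa using hn
  · intro K N hK hN hle hh u hu x hx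
    rcases hle.eq_or_lt with rfl | hlt
    · exact sub_mem (hN _ _ hx) hx
    · refine sq_ker ρ K N hK hN u ?_ x hx
      have h1 : Module.finrank F (N ⧸ K.comap N.subtype) ≤ n :=
        (Submodule.finrank_quotient_le _).trans ((Submodule.finrank_le _).trans hn)
      refine hT _ h1 F _ G (sq ρ K N hK hN) (sq_irr ρ K N hK hN hlt hh) rfl ?_
      refine derivedSeries_antitone _ ?_ hu
      have := Nat.log_mono_right (b := 2) h1
      gcongr

theorem field_bound (c n : ℕ) (hT : ∀ m ≤ n, T c m) (F : Type) [Field F] (V : Type)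
    [AddCommGroup V] [Module F V] [FiniteDimensional F V] (G : Type) [Group G] [Finite G]
    [Group.IsSolvable G] (ρ : Representation F G V) (hn : Module.finrank F V ≤ n) :
    derivedSeries G (c * Nat.log 2 n + 1 + Nat.clog 2 n) ≤ ρ.ker := by
  let K := AlgebraicClosure F
  let b := Module.finBasis F V
  let φ : Module.End F V →+* Module.End K (Fin (Module.finrank F V) → K) :=
    (Matrix.toLinAlgEquiv' : Matrix (Fin (Module.finrank F V)) (Fin (Module.finrank F V)) K ≃ₐ[K] _).toRingEquiv.toRingHom.comp
     (((algebraMap F K).mapMatrix).comp (LinearMap.toMatrixAlgEquiv b).toRingEquiv.toRingHom)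
  have hφ : Function.Injective φ := by
    intro x y hxy
    have h1 := (Matrix.toLinAlgEquiv' : Matrix (Fin (Module.finrank F V)) (Fin (Module.finrank F V)) K ≃ₐ[K] _).injective hxy
    have h2 := Matrix.map_injective (algebraMap F K).injective h1
    exact (LinearMap.toMatrixAlgEquiv b).injective h2
  have := closed_bound c n hT K (Fin (Module.finrank F V) → K) G ((φ : _ →* _).comp ρ) (by simpa using hn)
  intro g hg
  have h1 := this hg
  rw [MonoidHom.mem_ker] at h1 ⊢
  apply hφ
  rw [map_one]
  exact h1

theorem ab_irr_aux (c n : ℕ) (hT : ∀ m ≤ n, T c m) (p : ℕ) [hp : Fact p.Prime]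
    (S : Type) [AddCommGroup S] [Module ℤ S] [Finite S]
    [Module (ZMod p) S] (G : Type) [Group G] [Finite G]
    [Group.IsSolvable G] (σ : Representation ℤ G S) (hn : Nat.log 2 (Nat.card S) ≤ n) :
    derivedSeries G (c * Nat.log 2 n + 1 + Nat.clog 2 n) ≤ σ.ker := by
  let σ' : G →* Module.End (ZMod p) S :=
    { toFun := fun g => (σ g).toAddMonoidHom.toZModLinearMap p
      map_one' := by ext y; simp
      map_mul' := by intro a b; ext y; simp }
  have hfd : FiniteDimensional (ZMod p) S := Module.Finite.of_finite
  have hcard : Nat.card S = p ^ Module.finrank (ZMod p) S := by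
    rw [Module.natCard_eq_pow_finrank (K := ZMod p), Nat.card_zmod]
  have hr : Module.finrank (ZMod p) S ≤ n := by
    refine le_trans ?_ hn
    apply Nat.le_log_of_pow_le (by norm_num)
    rw [hcard]
    exact Nat.pow_le_pow_left hp.1.two_le _
  have := field_bound c n hT (ZMod p) S G σ' hr
  intro g hg
  have h1 := this hg
  rw [MonoidHom.mem_ker] at h1 ⊢
  ext y
  exact LinearMap.congr_fun h1 y

theorem ab_irr (c n : ℕ) (hT : ∀ m ≤ n, T c m) (S : Type) [AddCommGroup S] [Module ℤ S] [Finite S]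
    (G : Type) [Group G] [Finite G]
    [Group.IsSolvable G] (σ : Representation ℤ G S) (hn : Nat.log 2 (Nat.card S) ≤ n) (hi : Irr σ) :
    derivedSeries G (c * Nat.log 2 n + 1 + Nat.clog 2 n) ≤ σ.ker := by
  obtain ⟨hnt, hW⟩ := hi
  obtain ⟨p, hp, hdvd⟩ := Nat.exists_prime_and_dvd (n := Nat.card S) (Finite.one_lt_card).ne'
  have : Fact p.Prime := ⟨hp⟩
  obtain ⟨x, hx⟩ := exists_prime_addOrderOf_dvd_card' p hdvd
  let W : Submodule ℤ S :=
    { carrier := {x | p • x = 0}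
      add_mem' := by intro a b ha hb; simp_all
      zero_mem' := by simp
      smul_mem' := by
        intro a b hb
        simp only [Set.mem_ofPred_eq] at hb ⊢
        rw [smul_comm, hb, smul_zero] }
  have hWi : Inv σ W := by
    intro g y hy
    show p • _ = _
    rw [← map_nsmul, show p • y = 0 from hy, map_zero]
  have hWt : W = ⊤ := by
    refine (hW W hWi).resolve_left ?_
    intro h
    have : x ∈ W := by
      show p • x = 0
      rw [← hx]; exact addOrderOf_nsmul_eq_zero x
    rw [h, Submodule.mem_bot] at this
    rw [this, addOrderOf_zero] at hx
    exact hp.one_lt.ne hx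
  have hps : ∀ y : S, p • y = 0 := by
    intro y
    have : y ∈ W := hWt ▸ Submodule.mem_top
    exact this
  let _ : Module (ZMod p) S := AddCommGroup.zmodModule hps
  exact ab_irr_aux c n hT p S G σ hn

theorem ab_bound (c n : ℕ) (hT : ∀ m ≤ n, T c m) (X : Type) [AddCommGroup X] [Finite X]
    (G : Type) [Group G] [Finite G]
    [Group.IsSolvable G] (ρ : Representation ℤ G X) (hn : Nat.log 2 (Nat.card X) ≤ n) :
    derivedSeries G (c * Nat.log 2 n + 1 + Nat.clog 2 n + Nat.clog 2 n) ≤ ρ.ker := by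
  refine unip_all ρ (n := n) (fun W => Nat.log 2 (Nat.card W.1)) ?_ ?_ _ ?_
  · intro A B hAB
    have hAB' : A.1 < B.1 := hAB
    have h1 : A.1.toAddSubgroup < B.1.toAddSubgroup := hAB'
    obtain ⟨t, ht⟩ := AddSubgroup.card_dvd_of_le h1.le
    have hpos : 0 < Nat.card B.1 := Nat.card_pos
    have hposA : 0 < Nat.card A.1 := Nat.card_pos
    have ht' : Nat.card B.1 = Nat.card A.1 * t := ht
    have ht2 : 2 ≤ t := by
      rcases t with _ | _ | t
      · omega
      · exfalso
        apply h1.ne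
        apply AddSubgroup.eq_of_le_of_card_ge h1.le
        rw [ht]; simp
      · omega
    show Nat.log 2 (Nat.card A.1) < Nat.log 2 (Nat.card B.1)
    have h3 : Nat.log 2 (Nat.card A.1 * 2) = Nat.log 2 (Nat.card A.1) + 1 :=
      Nat.log_mul_base (by norm_num) (by omega)
    have h4 : Nat.log 2 (Nat.card A.1 * 2) ≤ Nat.log 2 (Nat.card B.1) := by
      apply Nat.log_mono_right
      rw [ht']
      gcongr
    omega
  · have : Nat.card (⊤ : Submodule ℤ X) = Nat.card X := Nat.card_congr (Equiv.Set.univ X)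
    simpa [this] using hn
  · intro K N hK hN hle hh u hu x hx
    rcases hle.eq_or_lt with rfl | hlt
    · exact sub_mem (hN _ _ hx) hx
    · refine sq_ker ρ K N hK hN u ?_ x hx
      have hirr := sq_irr ρ K N hK hN hlt hh
      have h1 : Nat.card (N ⧸ K.comap N.subtype) ≤ Nat.card X :=
        (Nat.card_le_card_of_surjective _ (Submodule.mkQ_surjective _)).trans
          (Nat.card_le_card_of_injective _ N.subtype_injective)
      have hfin : Finite (N ⧸ K.comap N.subtype) := Finite.of_surjective _ (Submodule.mkQ_surjective _)
      exact ab_irr c n hT _ G (sq ρ K N hK hN) ((Nat.log_mono_right h1).trans hn) hirr hu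

theorem log_add_log_le (a b : ℕ) (ha : a ≠ 0) (hb : b ≠ 0) :
    Nat.log 2 a + Nat.log 2 b ≤ Nat.log 2 (a * b) := by
  apply Nat.le_log_of_pow_le (by norm_num)
  rw [pow_add]
  exact Nat.mul_le_mul (Nat.pow_log_le_self 2 ha) (Nat.pow_log_le_self 2 hb)

theorem num_bound (c L : ℕ) (hc : 12 ≤ c) (hL : 3 ≤ L) :
    c * Nat.log 2 (2*L+1) + 1 + Nat.clog 2 (2*L+1) + Nat.clog 2 (2*L+1) ≤ c * L - 1 := by
  have h1 : Nat.clog 2 (2*L+1) ≤ Nat.log 2 (2*L+1) + 1 := by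
    apply Nat.clog_le_of_le_pow
    exact (Nat.lt_pow_succ_log_self (by norm_num) _).le
  have h2 : 2 ^ Nat.log 2 (2*L+1) ≤ 2*L+1 := Nat.pow_log_le_self 2 (by omega)
  generalize Nat.log 2 (2*L+1) = l at *
  have h3 : 4 * l ≤ 3 * L := by
    by_contra hcon
    have h4 : 3 * 2^l ≤ 8 * l + 1 := by omega
    by_cases hl : l < 4
    · interval_cases l <;> omega
    · have : ∀ j, 8 * (j+4) + 1 < 3 * 2^(j+4) := by
        intro j
        induction j with
        | zero => norm_num
        | succ j ih => rw [show j + 1 + 4 = (j+4) + 1 by ring, pow_succ]; omega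
      have := this (l - 4)
      rw [Nat.sub_add_cancel (by omega)] at this
      omega
  have h5 : 4 * (c * l) ≤ 3 * (c * L) := by nlinarith
  have h6 : 12 * L ≤ c * L := Nat.mul_le_mul_right _ hc
  omega

theorem two_mul_add_one_lt (n : ℕ) (hn : 3 ≤ Nat.log 2 n) : 2 * Nat.log 2 n + 1 < n := by
  have hn0 : n ≠ 0 := by rintro rfl; simp at hn
  have h2 : 2 ^ Nat.log 2 n ≤ n := Nat.pow_log_le_self 2 hn0
  have : ∀ j, 2 * (j+3) + 1 < 2^(j+3) := by
    intro j
    induction j with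
    | zero => norm_num
    | succ j ih => rw [show j + 1 + 3 = (j+3) + 1 by ring, pow_succ]; omega
  have := this (Nat.log 2 n - 3)
  rw [Nat.sub_add_cancel (by omega)] at this
  omega

theorem aut_bound (c n : ℕ) (hc : 12 ≤ c) (hc1 : Nat.factorial 64 + 1 ≤ c)
    (hT : ∀ m < n, T c m) (hn : 1 ≤ Nat.log 2 n)
    (X : Type) [CommGroup X] [Finite X] (hX : Nat.log 2 (Nat.card X) ≤ 2 * Nat.log 2 n + 1)
    (G : Type) [Group G] [Finite G] [Group.IsSolvable G] (φ : G →* MulAut X) :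
    derivedSeries G (c * Nat.log 2 n - 1) ≤ φ.ker := by
  by_cases h3 : 3 ≤ Nat.log 2 n
  · let ρ : G →* Module.End ℤ (Additive X) :=
      { toFun := fun g => (MonoidHom.toAdditive (φ g).toMonoidHom).toIntLinearMap
        map_one' := by ext x; simp
        map_mul' := by intro a b; ext x; simp }
    have h := ab_bound c (2 * Nat.log 2 n + 1) (fun m hm => hT m (by
      have := two_mul_add_one_lt n h3; omega)) (Additive X) G ρ hX
    intro g hg
    have h1 := h (derivedSeries_antitone _ (num_bound c _ hc h3) hg)
    rw [MonoidHom.mem_ker] at h1 ⊢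
    ext x
    exact LinearMap.congr_fun h1 (Additive.ofMul x)
  · have hlt : Nat.card X < 64 := by
      have h1 := Nat.lt_pow_succ_log_self (b := 2) (by norm_num) (Nat.card X)
      have h2 : 2 ^ (Nat.log 2 (Nat.card X) + 1) ≤ 2 ^ 6 := Nat.pow_le_pow_right (by norm_num) (by omega)
      have h3 : (2:ℕ) ^ 6 = 64 := by norm_num
      rw [h3] at h2
      exact h1.trans_le h2
    have h := der_card_hom ((MulAut.toPerm X).comp φ) (c * Nat.log 2 n - 1) (by
      rw [Nat.card_perm]
      have h1 := Nat.factorial_le hlt.le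
      have h2 : c * 1 ≤ c * Nat.log 2 n := Nat.mul_le_mul_left _ hn
      generalize Nat.factorial 64 = z at *
      omega)
    intro g hg
    have h1 := h hg
    rw [MonoidHom.mem_ker] at h1 ⊢
    ext x
    exact congrArg (fun f : Equiv.Perm X => f x) h1

theorem exists_abelian_normal {G : Type*} [Group G] [Group.IsSolvable G] (D : Subgroup G) [D.Normal]
    (Z : Subgroup G) (hD : ¬ D ≤ Z) :
    ∃ N : Subgroup G, N.Normal ∧ N ≤ D ∧ ¬ N ≤ Z ∧ ⁅N, N⁆ ≤ Z := by
  classical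
  have hN : ∀ i, ((derivedSeries D i).map D.subtype).Normal := fun i => inferInstance
  have hex : ∃ i, (derivedSeries D i).map D.subtype ≤ Z := by
    obtain ⟨n, hn⟩ := (inferInstance : Group.IsSolvable D).solvable
    exact ⟨n, by rw [hn]; simp⟩
  have h0 : Nat.find hex ≠ 0 := by
    intro h
    have := Nat.find_spec hex
    rw [h] at this
    apply hD
    simpa [← MonoidHom.range_eq_map] using this
  obtain ⟨i, hi⟩ := Nat.exists_eq_succ_of_ne_zero h0
  refine ⟨(derivedSeries D i).map D.subtype, hN i, Subgroup.map_subtype_le _, ?_, ?_⟩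
  · exact Nat.find_min hex (by omega)
  · rw [← Subgroup.map_commutator, ← derivedSeries_succ, ← Nat.succ_eq_add_one, ← hi]
    exact Nat.find_spec hex

open MulAction in
theorem prim_bound (c n : ℕ) (hc : 12 ≤ c) (hc1 : Nat.factorial 64 + 1 ≤ c)
    (hT : ∀ m < n, T c m)
    (G : Type) [Group G] [Finite G] [Group.IsSolvable G] (Ω : Type) [Finite Ω] [MulAction G Ω]
    [FaithfulSMul G Ω] [IsPreprimitive G Ω] (hn : Nat.card Ω = n) (h2 : 2 ≤ n) :
    derivedSeries G (c * Nat.log 2 n) = ⊥ := by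
  have hnt : Nontrivial Ω := by
    rw [← Finite.one_lt_card_iff_nontrivial]; omega
  obtain ⟨x, y, hxy⟩ := exists_pair_ne Ω
  have hG : ¬ (⊤ : Subgroup G) ≤ ⊥ := by
    intro h
    obtain ⟨g, hg⟩ := exists_smul_eq G x y
    have : g = 1 := by simpa using h (Subgroup.mem_top g)
    rw [this, one_smul] at hg
    exact hxy hg
  obtain ⟨N, hN, -, hN1, hN2⟩ := exists_abelian_normal (⊤ : Subgroup G) ⊥ hG
  have hcomm : ∀ a ∈ N, ∀ b ∈ N, a * b = b * a := by
    intro a ha b hb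
    have := hN2 (Subgroup.commutator_mem_commutator ha hb)
    rw [Subgroup.mem_bot, commutatorElement_eq_one_iff_mul_comm] at this
    exact this
  have htr : IsPretransitive N Ω := by
    apply IsQuasiPreprimitive.isPretransitive_of_normal (G := G)
    intro h
    apply hN1
    intro a ha
    rw [Subgroup.mem_bot]
    apply FaithfulSMul.eq_of_smul_eq_smul (α := Ω)
    intro ω
    have : ω ∈ fixedPoints N Ω := h ▸ Set.mem_univ _
    rw [one_smul]
    exact this ⟨a, ha⟩
  have hfix : ∀ g : G, (∀ a ∈ N, a * g = g * a) → ∀ ω : Ω, g • ω = ω → g = 1 := by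
    intro g hg ω hω
    apply FaithfulSMul.eq_of_smul_eq_smul (α := Ω)
    intro ω'
    obtain ⟨a, rfl⟩ := exists_smul_eq N ω ω'
    rw [one_smul]
    show g • (a : G) • ω = (a : G) • ω
    rw [← mul_smul, ← hg a a.2, mul_smul, hω]
  let _ : CommGroup N := { (inferInstance : Group N) with
    mul_comm := fun a b => Subtype.ext (hcomm a a.2 b b.2) }
  have hcard : Nat.card N = n := by
    rw [← hn]
    apply Nat.card_eq_of_bijective (fun a : N => a • x)
    constructor
    · intro a b hab
      have hab' : (a : G) • x = (b : G) • x := hab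
      have := hfix ((b : G)⁻¹ * a) (fun d hd => hcomm d hd _ (mul_mem (inv_mem b.2) a.2)) x (by
        rw [mul_smul, hab', inv_smul_smul])
      exact (Subtype.ext (inv_mul_eq_one.1 this)).symm
    · exact fun y => exists_smul_eq N x y
  have hlog : 1 ≤ Nat.log 2 n := Nat.le_log_of_pow_le (by norm_num) (by simpa using h2)
  have key := aut_bound c n hc hc1 hT hlog N (by rw [hcard]; omega) G (MulAut.conjNormal (H := N))
  have hker : (MulAut.conjNormal (H := N) : G →* MulAut N).ker ≤ N := by
    intro g hg
    rw [MonoidHom.mem_ker] at hg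
    have hg1 : ∀ a ∈ N, a * g = g * a := by
      intro a ha
      have := congrArg Subtype.val (congrArg (fun f : MulAut N => f ⟨a, ha⟩) hg)
      rw [MulAut.conjNormal_apply] at this
      have h : g * a * g⁻¹ = a := this
      rw [mul_inv_eq_iff_eq_mul] at h
      exact h.symm
    obtain ⟨a, ha⟩ := exists_smul_eq N (g • x) x
    have := hfix ((a : G) * g) (fun d hd => by
      rw [← mul_assoc, hcomm d hd a a.2, mul_assoc, hg1 d hd, mul_assoc]) x (by
      rw [mul_smul]; exact ha)
    rw [mul_eq_one_iff_eq_inv'] at this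
    rw [this]
    exact inv_mem a.2
  have h5 : c * Nat.log 2 n = (c * Nat.log 2 n - 1) + 1 := by
    have : c * 1 ≤ c * Nat.log 2 n := Nat.mul_le_mul_left _ hlog
    omega
  rw [h5, derivedSeries_succ, eq_bot_iff]
  exact (Subgroup.commutator_mono (key.trans hker) (key.trans hker)).trans hN2

open MulAction Pointwise in
theorem perm_bound (c n : ℕ) (hc : 12 ≤ c) (hc1 : Nat.factorial 64 + 1 ≤ c)
    (hT : ∀ m < n, T c m) (k : ℕ) : k ≤ n →
    ∀ (G : Type) [Group G] [Finite G] [Group.IsSolvable G] (Ω : Type) [Finite Ω] [MulAction G Ω],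
      Nat.card Ω = k → ∀ u ∈ derivedSeries G (c * Nat.log 2 k), ∀ ω : Ω, u • ω = ω := by
  induction k using Nat.strong_induction_on with
  | _ k ih =>
  intro hk G _ _ _ Ω _ _ hcard u hu ω
  have hmono : ∀ {a b : ℕ}, a ≤ b → c * Nat.log 2 a ≤ c * Nat.log 2 b := fun h =>
    Nat.mul_le_mul_left _ (Nat.log_mono_right h)
  by_cases hk2 : k < 2
  · have : Subsingleton Ω := by
      rw [← Finite.card_le_one_iff_subsingleton]; omega
    exact Subsingleton.elim _ _
  by_cases htr : IsPretransitive G Ω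
  swap
  · have hlt : Nat.card (orbit G ω) < k := by
      rw [← hcard]
      apply lt_of_le_of_ne (Nat.card_le_card_of_injective _ Subtype.val_injective)
      intro h
      apply htr
      have : orbit G ω = Set.univ := by
        apply Set.eq_of_subset_of_ncard_le (Set.subset_univ _)
        rw [Set.ncard_univ, ← h, Nat.card_coe_set_eq]
      exact isPretransitive_iff_orbit_eq_univ ω |>.2 this
    have := ih _ hlt (by omega) G (orbit G ω) rfl u
      (derivedSeries_antitone _ (hmono hlt.le) hu) ⟨ω, mem_orbit_self ω⟩
    exact congrArg Subtype.val this
  by_cases hprim : IsPreprimitive G Ω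
  · let f := MulAction.toPermHom G Ω
    have hs : Group.IsSolvable f.range := Group.isSolvable_of_surjective f.rangeRestrict_surjective
    have hp : IsPreprimitive f.range Ω :=
      IsPreprimitive.of_surjective (φ := f.rangeRestrict) (f := ⟨id, fun g x => rfl⟩) Function.surjective_id
    have hf := prim_bound c k hc hc1 (fun m hm => hT m (by omega)) f.range Ω hcard (by omega)
    have := der_hom f _ hf hu
    exact congrArg (fun f : Equiv.Perm Ω => f ω) this
  · have hb : ∃ B : Set Ω, IsBlock G B ∧ ¬ IsTrivialBlock B := by
      by_contra hcon
      push Not at hcon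
      exact hprim ⟨fun {B} hB => hcon B hB⟩
    obtain ⟨B0, hB0, hnt0⟩ := hb
    have hB0ne : B0.Nonempty := by
      by_contra h
      rw [Set.not_nonempty_iff_eq_empty] at h
      exact hnt0 (Or.inl (by simp [h]))
    obtain ⟨b, hb⟩ := hB0ne
    obtain ⟨g, rfl⟩ := exists_smul_eq G b ω
    have hB : IsBlock G (g • B0) := hB0.translate g
    have hnt : ¬ IsTrivialBlock (g • B0) := by rwa [IsTrivialBlock.smul_iff]
    have hω : g • b ∈ g • B0 := Set.smul_mem_smul_set hb
    generalize g • b = ω at *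
    generalize g • B0 = B at *
    have hmul := hB.ncard_block_mul_ncard_orbit_eq ⟨ω, hω⟩
    rw [hcard] at hmul
    have hB1 : 1 < B.ncard := by
      by_contra h
      apply hnt; left
      have := (Set.ncard_le_one (Set.toFinite B)).1 (by omega)
      intro x hx y hy
      exact this x hx y hy
    have ht1 : (orbit G B).ncard ≠ 1 := by
      intro h
      apply hnt; right
      apply Set.eq_of_subset_of_ncard_le (Set.subset_univ _)
      rw [Set.ncard_univ, hcard, ← hmul, h, mul_one]
    have ht0 : (orbit G B).ncard ≠ 0 := by
      intro h; rw [h] at hmul; omega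
    have hBlt : B.ncard < k := by nlinarith [Nat.one_lt_iff_ne_zero_and_ne_one.2 ⟨ht0, ht1⟩]
    have htlt : (orbit G B).ncard < k := by nlinarith [Nat.pos_of_ne_zero ht0]
    have hlog := log_add_log_le (orbit G B).ncard B.ncard ht0 (by omega)
    rw [mul_comm _ B.ncard, hmul] at hlog
    have hle : c * Nat.log 2 (orbit G B).ncard + c * Nat.log 2 B.ncard ≤ c * Nat.log 2 k := by
      rw [← mul_add]; exact Nat.mul_le_mul_left _ hlog
    have hst : derivedSeries G (c * Nat.log 2 (orbit G B).ncard) ≤ stabilizer G B := by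
      intro v hv
      have := ih _ htlt (by omega) G (orbit G B) (Nat.card_coe_set_eq _) v hv ⟨B, mem_orbit_self B⟩
      exact congrArg Subtype.val this
    obtain ⟨v, hv, rfl⟩ := der_add _ _ _ hst (derivedSeries_antitone _ hle hu)
    have := ih _ hBlt (by omega) (stabilizer G B) B (Nat.card_coe_set_eq _) v hv ⟨ω, hω⟩
    exact congrArg Subtype.val this

theorem indep_weight {F V ι : Type*} [Field F] [AddCommGroup V] [Module F V] [FiniteDimensional F V]
    (f : ι → Module.End F V) (hf : ∀ i j, Commute (f i) (f j)) :
    iSupIndep (fun χ : ι → F => ⨅ i, (f i).eigenspace (χ i)) := by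
  have h := Module.End.independent_iInf_maxGenEigenspace_of_forall_mapsTo f
    (fun i j φ => Module.End.mapsTo_maxGenEigenspace_of_comm (hf j i) φ)
  refine h.mono ?_
  intro χ
  exact iInf_mono fun i => Module.End.eigenspace_le_maxGenEigenspace

theorem exists_irr {F V G : Type*} [Field F] [AddCommGroup V] [Module F V] [FiniteDimensional F V]
    [Group G] (ρ : Representation F G V) [Nontrivial V] :
    ∃ (W : Submodule F V) (hW : Inv ρ W), W ≠ ⊥ ∧ Irr (res ρ W hW) := by
  have hwf : WellFounded ((· < ·) : Submodule F V → Submodule F V → Prop) := wellFounded_lt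
  obtain ⟨W, ⟨hW, hW0⟩, hmin⟩ := hwf.has_min {W | Inv ρ W ∧ W ≠ ⊥}
    ⟨⊤, fun g x _ => Submodule.mem_top, top_ne_bot⟩
  refine ⟨W, hW, hW0, (Submodule.nontrivial_iff_ne_bot).2 hW0, ?_⟩
  intro U hU
  by_cases h : U.map W.subtype = ⊥
  · left
    exact Submodule.map_injective_of_injective W.subtype_injective (by rw [h, Submodule.map_bot])
  · right
    have h1 : Inv ρ (U.map W.subtype) := by
      rintro g _ ⟨x, hx, rfl⟩
      exact ⟨_, hU g x hx, by simp⟩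
    have h2 := hmin _ ⟨h1, h⟩
    have h3 : U.map W.subtype = W := by
      have h4 : U.map W.subtype ≤ W := Submodule.map_subtype_le W U
      exact (h4.eq_or_lt).resolve_right h2
    rw [eq_top_iff]
    rintro ⟨x, hx⟩ -
    rw [← h3] at hx
    obtain ⟨y, hy, rfl⟩ := hx
    exact hy

theorem exists_weight {F V G : Type*} [Field F] [IsAlgClosed F] [AddCommGroup V] [Module F V]
    [FiniteDimensional F V] [Nontrivial V]
    [Group G] (ρ : Representation F G V) (hc : ∀ a b, Commute (ρ a) (ρ b)) :
    ∃ χ : G → F, ⨅ a, Module.End.eigenspace (ρ a) (χ a) ≠ ⊥ := by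
  obtain ⟨W, hW, hW0, hnt, hi⟩ := exists_irr ρ
  have h1 : ∀ a, ∃ r : F, ∀ x ∈ W, ρ a x = r • x := by
    intro a
    obtain ⟨r, hr⟩ := Module.End.exists_eigenvalue (res ρ W hW a)
    refine ⟨r, ?_⟩
    have h2 : (Module.End.eigenspace (res ρ W hW a) r) = ⊤ := by
      refine (hi _ ?_).resolve_left hr
      intro g x hx
      rw [Module.End.mem_eigenspace_iff] at hx ⊢
      ext
      have h3 := congrArg Subtype.val hx
      simp only [res_apply, Submodule.coe_smul] at h3 ⊢
      have h4 := LinearMap.congr_fun (hc a g).eq x.1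
      simp only [Module.End.mul_apply] at h4
      rw [h4, h3, map_smul]
    intro x hx
    have h3 : (⟨x, hx⟩ : W) ∈ (Module.End.eigenspace (res ρ W hW a) r) := h2 ▸ Submodule.mem_top
    rw [Module.End.mem_eigenspace_iff] at h3
    simpa using congrArg Subtype.val h3
  choose χ hχ using h1
  refine ⟨χ, fun h => hW0 ?_⟩
  rw [eq_bot_iff, ← h, le_iInf_iff]
  intro a x hx
  rw [Module.End.mem_eigenspace_iff]
  exact hχ a x hx

theorem sum_le {F V ι : Type*} [Field F] [AddCommGroup V] [Module F V] [FiniteDimensional F V]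
    [Finite ι] (p : ι → Submodule F V) (hp : iSupIndep p) (d : ℕ) (hd : ∀ i, d ≤ Module.finrank F (p i)) :
    Nat.card ι * d ≤ Module.finrank F V := by
  classical
  have := Fintype.ofFinite ι
  have h1 := hp.dfinsupp_lsum_injective
  have h2 := LinearMap.finrank_le_finrank_of_injective h1
  have h3 := Module.finrank_directSum F (fun i => p i)
  have h4 : Module.finrank F (Π₀ i, p i) = ∑ i, Module.finrank F (p i) := h3
  rw [h4] at h2
  refine le_trans ?_ h2
  rw [Nat.card_eq_fintype_card, ← Finset.card_univ, ← smul_eq_mul]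
  exact Finset.card_nsmul_le_sum _ _ _ fun i _ => hd i

theorem imprim (c n : ℕ) (hc : 12 ≤ c) (hc1 : Nat.factorial 64 + 1 ≤ c)
    (hT : ∀ m < n, T c m) (F : Type) [Field F] [IsAlgClosed F] (V : Type) [AddCommGroup V]
    [Module F V] [FiniteDimensional F V] (G : Type) [Group G] [Finite G] [Group.IsSolvable G]
    (ρ : Representation F G V) (hirr : Irr ρ) (hn : Module.finrank F V = n)
    (A : Subgroup G) (hA : A.Normal) (hAc : ∀ a b : A, Commute (ρ a) (ρ b))
    (hns : ¬ ∀ a ∈ A, ∃ r : F, ∀ x, ρ a x = r • x) :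
    derivedSeries G (c * Nat.log 2 n + 1) ≤ ρ.ker := by
  obtain ⟨hnt, hi⟩ := hirr
  let Wt : (A → F) → Submodule F V := fun χ => ⨅ a : A, Module.End.eigenspace (ρ a) (χ a)
  have hmem : ∀ χ x, x ∈ Wt χ ↔ ∀ a : A, ρ a x = χ a • x := by
    intro χ x
    simp [Wt, Submodule.mem_iInf]
  have hind : iSupIndep Wt := indep_weight (fun a : A => ρ a) hAc
  let act : G → (A → F) → (A → F) := fun g χ a => χ ⟨g⁻¹ * a * g, by simpa using hA.conj_mem a a.2 g⁻¹⟩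
  have hmap : ∀ g χ x, x ∈ Wt χ → ρ g x ∈ Wt (act g χ) := by
    intro g χ x hx
    rw [hmem] at hx ⊢
    intro a
    have h1 := hx ⟨g⁻¹ * a * g, by simpa using hA.conj_mem a a.2 g⁻¹⟩
    have h2 : ρ a (ρ g x) = ρ g (ρ (g⁻¹ * a * g) x) := by
      rw [← Module.End.mul_apply, ← Module.End.mul_apply, ← map_mul, ← map_mul]
      refine congrArg (fun g => ρ g _) ?_; group
    rw [h2, h1, map_smul]
  have hne : ∀ g χ, Wt χ ≠ ⊥ → Wt (act g χ) ≠ ⊥ := by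
    intro g χ h
    obtain ⟨x, hx, hx0⟩ := (Submodule.ne_bot_iff _).1 h
    refine (Submodule.ne_bot_iff _).2 ⟨_, hmap g χ x hx, ?_⟩
    intro h0
    apply hx0
    have : ρ g⁻¹ (ρ g x) = x := by
      rw [← Module.End.mul_apply, ← map_mul]; simp
    rw [← this, h0, map_zero]
  let Ω : Type := {χ : A → F // Wt χ ≠ ⊥}
  have hfin : Finite Ω := WellFoundedGT.finite_ne_bot_of_iSupIndep hind
  let _ : MulAction G Ω :=
    { smul := fun g χ => ⟨act g χ.1, hne g _ χ.2⟩
      one_smul := by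
        intro χ; apply Subtype.ext; funext a
        show χ.1 _ = χ.1 _
        refine congrArg χ.1 (Subtype.ext ?_); simp
      mul_smul := by
        intro g h χ; apply Subtype.ext; funext a
        show χ.1 _ = χ.1 _
        refine congrArg χ.1 (Subtype.ext ?_); simp [mul_assoc] }
  have hsm : ∀ (g : G) (χ : Ω), (g • χ).1 = act g χ.1 := fun _ _ => rfl
  have hΩ : Nonempty Ω := by
    obtain ⟨χ, hχ⟩ := exists_weight (ρ.comp A.subtype) hAc
    exact ⟨⟨χ, hχ⟩⟩
  obtain ⟨χ₀, hmin⟩ := Finite.exists_min (fun χ : Ω => Module.finrank F (Wt χ.1))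
  set d := Module.finrank F (Wt χ₀.1) with hd
  have hkd : Nat.card Ω * d ≤ n := by
    rw [← hn]
    exact sum_le (fun χ : Ω => Wt χ.1) (hind.comp Subtype.val_injective) d hmin
  have hd0 : 0 < d := by
    have : Nontrivial (Wt χ₀.1) := (Submodule.nontrivial_iff_ne_bot).2 χ₀.2
    exact Module.finrank_pos
  have hk0 : 0 < Nat.card Ω := Nat.card_pos
  have hdn : d < n := by
    have h1 : d ≤ n := hn ▸ Submodule.finrank_le _
    rcases h1.eq_or_lt with h | h
    · exfalso
      apply hns
      have h2 : Wt χ₀.1 = ⊤ := Submodule.eq_top_of_finrank_eq (by rw [← hd, h, hn])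
      intro a ha
      refine ⟨χ₀.1 ⟨a, ha⟩, fun x => ?_⟩
      exact (hmem χ₀.1 x).1 (h2 ▸ Submodule.mem_top) ⟨a, ha⟩
    · exact h
  have hkn : Nat.card Ω ≤ n := by nlinarith
  have hperm := perm_bound c n hc hc1 hT (Nat.card Ω) hkn G Ω rfl
  let K : Subgroup G := (MulAction.toPermHom G Ω).ker
  have hK : derivedSeries G (c * Nat.log 2 (Nat.card Ω)) ≤ K := by
    intro u hu
    rw [MonoidHom.mem_ker]
    ext1 ω
    exact hperm u hu ω
  have hKinv : Inv (ρ.comp K.subtype) (Wt χ₀.1) := by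
    intro g x hx
    have h1 := hmap g χ₀.1 x hx
    have h2 : (g : G) • χ₀ = χ₀ := by
      have := g.2
      rw [MonoidHom.mem_ker] at this
      exact congrArg (fun σ : Equiv.Perm Ω => σ χ₀) this
    rw [← hsm, h2] at h1
    exact h1
  have hnt2 : Nontrivial (Wt χ₀.1) := (Submodule.nontrivial_iff_ne_bot).2 χ₀.2
  obtain ⟨W, hW, hW0, hWi⟩ := exists_irr (res (ρ.comp K.subtype) (Wt χ₀.1) hKinv)
  have hWd : Module.finrank F W ≤ d := Submodule.finrank_le W
  have hTW := hT _ (hWd.trans_lt hdn) F W K _ hWi rfl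
  obtain ⟨x, hxW, hx0⟩ := (Submodule.ne_bot_iff _).1 hW0
  have hle : derivedSeries G (c * Nat.log 2 n + 1) ≤
      (derivedSeries K (c * Nat.log 2 (Module.finrank F W) + 1)).map K.subtype := by
    refine le_trans (derivedSeries_antitone _ ?_) (der_add K _ _ hK)
    have h1 := log_add_log_le (Nat.card Ω) d hk0.ne' hd0.ne'
    have h2 : Nat.log 2 (Nat.card Ω * d) ≤ Nat.log 2 n := Nat.log_mono_right hkd
    have h3 : Nat.log 2 (Module.finrank F W) ≤ Nat.log 2 d := Nat.log_mono_right hWd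
    have h4 : Nat.log 2 (Nat.card Ω) + Nat.log 2 (Module.finrank F W) ≤ Nat.log 2 n := by omega
    nlinarith
  have hfix : ∀ u ∈ derivedSeries G (c * Nat.log 2 n + 1), ρ u x.1 = x.1 := by
    intro u hu
    obtain ⟨v, hv, rfl⟩ := hle hu
    have h1 := hTW hv
    rw [MonoidHom.mem_ker] at h1
    have h2 := LinearMap.congr_fun h1 ⟨x, hxW⟩
    have h3 := congrArg (fun y => y.1.1) h2
    simpa using h3
  let Fx : Submodule F V :=
    { carrier := {v | ∀ u ∈ derivedSeries G (c * Nat.log 2 n + 1), ρ u v = v}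
      add_mem' := by
        intro a b ha hb u hu
        rw [map_add, ha u hu, hb u hu]
      zero_mem' := by intro u hu; simp
      smul_mem' := by
        intro r a ha u hu
        rw [map_smul, ha u hu] }
  have hFx : Inv ρ Fx := by
    intro g v hv u hu
    have h1 := hv (g⁻¹ * u * g) (by
      simpa using (inferInstance : (derivedSeries G (c * Nat.log 2 n + 1)).Normal).conj_mem u hu g⁻¹)
    have h2 : ρ u (ρ g v) = ρ g (ρ (g⁻¹ * u * g) v) := by
      rw [← Module.End.mul_apply, ← Module.End.mul_apply, ← map_mul, ← map_mul]
      refine congrArg (fun g => ρ g _) ?_; group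
    rw [h2, h1]
  have htop : Fx = ⊤ := by
    refine (hi Fx hFx).resolve_left ?_
    intro h
    have h1 : x.1 ∈ Fx := hfix
    rw [h, Submodule.mem_bot] at h1
    exact hx0 (Subtype.ext h1)
  intro u hu
  rw [MonoidHom.mem_ker]
  ext v
  have : v ∈ Fx := htop ▸ Submodule.mem_top
  exact this u hu

section
variable {F V G : Type*} [Field F] [AddCommGroup V] [Module F V] [Group G]
  (ρ : Representation F G V)

theorem rinv_l (g : G) (T : Module.End F V) : ρ g⁻¹ * (ρ g * T) = T := by
  rw [← mul_assoc, ← map_mul]; simp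

theorem rinv_l' (g : G) (T : Module.End F V) : ρ g * (ρ g⁻¹ * T) = T := by
  rw [← mul_assoc, ← map_mul]; simp

theorem rinv_r (g : G) (T : Module.End F V) : T * ρ g * ρ g⁻¹ = T := by
  rw [mul_assoc, ← map_mul]; simp

theorem rinv_r' (g : G) (T : Module.End F V) : T * ρ g⁻¹ * ρ g = T := by
  rw [mul_assoc, ← map_mul]; simp

theorem r_ne [Nontrivial V] (g : G) : ρ g ≠ 0 := by
  intro h
  have := rinv_l ρ g 1
  rw [h] at this
  simp at this

/-- elements acting by scalars -/
def scal : Subgroup G where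
  carrier := {g | ∃ r : F, ρ g = r • 1}
  one_mem' := ⟨1, by simp⟩
  mul_mem' := by
    rintro a b ⟨r, hr⟩ ⟨s, hs⟩
    exact ⟨r * s, by rw [map_mul, hr, hs, smul_mul_smul_comm, one_mul]⟩
  inv_mem' := by
    rintro a ⟨r, hr⟩
    refine ⟨r⁻¹, ?_⟩
    by_cases h : r = 0
    · have h1 := rinv_l ρ a 1
      rw [hr, h] at h1
      simp only [zero_smul, zero_mul, mul_zero] at h1
      have h2 : ∀ T : Module.End F V, T = 0 := fun T => by rw [← mul_one T, ← h1, mul_zero]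
      rw [h2 (ρ a⁻¹), h2 (_ • _)]
    · have h1 := rinv_l ρ a 1
      rw [hr] at h1
      simp only [mul_one, mul_smul_comm] at h1
      rw [← h1, smul_smul, inv_mul_cancel₀ h, one_smul]

theorem mem_scal (g : G) : g ∈ scal ρ ↔ ∃ r : F, ρ g = r • 1 := Iff.rfl

instance scal_normal : (scal ρ).Normal := by
  constructor
  rintro a ⟨r, hr⟩ g
  refine ⟨r, ?_⟩
  rw [map_mul, map_mul, hr]
  simp only [mul_smul_comm, smul_mul_assoc, mul_one]
  rw [← map_mul]; simp

/-- from commutator to scalar relation -/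
theorem rel_of_scal {g a : G} (h : ⁅g, a⁆ ∈ scal ρ) :
    ∃ r : F, ρ g * ρ a = r • (ρ a * ρ g) := by
  obtain ⟨r, hr⟩ := h
  refine ⟨r, ?_⟩
  have : g * a = ⁅g, a⁆ * (a * g) := by rw [commutatorElement_def]; group
  rw [← map_mul, this, map_mul, hr, map_mul]
  simp

theorem scal_of_comm {g a : G} (h : Commute (ρ g) (ρ a)) : ⁅g, a⁆ ∈ scal ρ := by
  refine ⟨1, ?_⟩
  rw [commutatorElement_def, map_mul, map_mul, map_mul, h.eq, rinv_r]
  rw [← map_mul]; simp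

/-- centralizer of the image -/
def cent (A : Subgroup G) : Subgroup G where
  carrier := {g | ∀ a ∈ A, Commute (ρ g) (ρ a)}
  one_mem' := by intro a _; simp
  mul_mem' := by
    intro x y hx hy a ha
    rw [map_mul]
    exact (hx a ha).mul_left (hy a ha)
  inv_mem' := by
    intro x hx a ha
    have h := (hx a ha).eq
    show _ * _ = _ * _
    calc ρ x⁻¹ * ρ a = ρ x⁻¹ * (ρ a * ρ x) * ρ x⁻¹ := by rw [← mul_assoc, rinv_r]
      _ = ρ a * ρ x⁻¹ := by rw [← h, rinv_l]

theorem mem_cent (A : Subgroup G) (g : G) : g ∈ cent ρ A ↔ ∀ a ∈ A, Commute (ρ g) (ρ a) := Iff.rfl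

instance cent_normal (A : Subgroup G) [hA : A.Normal] : (cent ρ A).Normal := by
  constructor
  intro x hx g a ha
  have h := (hx (g⁻¹ * a * g) (by simpa using hA.conj_mem a ha g⁻¹)).eq
  show _ * _ = _ * _
  rw [← map_mul, ← map_mul] at h ⊢
  have h1 := congrArg (fun T => ρ g * T * ρ g⁻¹) h
  simp only [← map_mul] at h1
  convert h1 using 2 <;> group

theorem cent_comm [Nontrivial V] (A C : Subgroup G) (hC : ∀ g ∈ C, ∀ a ∈ A, ⁅g, a⁆ ∈ scal ρ) :
    ⁅C, C⁆ ≤ cent ρ A := by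
  rw [Subgroup.commutator_le]
  intro g hg h hh a ha
  obtain ⟨s, hs⟩ := rel_of_scal ρ (hC g hg a ha)
  obtain ⟨t, ht⟩ := rel_of_scal ρ (hC h hh a ha)
  set u := ⁅g, h⁆ with hu
  have hgh : g * h = u * (h * g) := by rw [hu, commutatorElement_def]; group
  have e1 : ρ (g * h) * ρ a = (s * t) • (ρ a * ρ (g * h)) := by
    rw [map_mul, mul_assoc, ht, mul_smul_comm, ← mul_assoc, hs, smul_mul_assoc, smul_smul, mul_assoc,
      mul_comm t s]
  have e2 : ρ (h * g) * ρ a = (s * t) • (ρ a * ρ (h * g)) := by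
    rw [map_mul, mul_assoc, hs, mul_smul_comm, ← mul_assoc, ht, smul_mul_assoc, smul_smul, mul_assoc]
  have hst : s * t ≠ 0 := by
    intro h0
    rw [h0, zero_smul, ← map_mul] at e1
    exact r_ne ρ _ e1
  rw [hgh, map_mul, mul_assoc, e2, mul_smul_comm] at e1
  have e3 := smul_right_injective _ hst e1
  have e4 := congrArg (fun T => T * ρ (h * g)⁻¹) e3
  simp only [← mul_assoc, rinv_r] at e4
  exact e4

theorem card_le [FiniteDimensional F V] [Nontrivial V] (A : Subgroup G) (X : Type*) [Finite X]
    (s : X → G) (hs : ∀ x, s x ∈ A)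
    (hA : ∀ a ∈ A, ∀ b ∈ A, ∃ r : F, ρ a * ρ b = r • (ρ b * ρ a))
    (hinj : ∀ x y, (∀ a ∈ A, Commute (ρ ((s x)⁻¹ * s y)) (ρ a)) → x = y) :
    Nat.card X ≤ Module.finrank F V * Module.finrank F V := by
  let f : A → Module.End F (Module.End F V) := fun b =>
    LinearMap.mulLeft F (ρ b) ∘ₗ LinearMap.mulRight F (ρ (b : G)⁻¹)
  have hf : ∀ b T, f b T = ρ b * (T * ρ (b : G)⁻¹) := fun b T => rfl
  have hcomm : ∀ b b', Commute (f b) (f b') := by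
    intro b b'
    obtain ⟨r, hr⟩ := hA b b.2 b' b'.2
    have h1 : ρ (b : G)⁻¹ * ρ (b' : G)⁻¹ = r • (ρ (b' : G)⁻¹ * ρ (b : G)⁻¹) := by
      have h2 := congrArg (fun T => ρ (b : G)⁻¹ * (ρ (b' : G)⁻¹ * T * ρ (b' : G)⁻¹) * ρ (b : G)⁻¹) hr
      simp only [mul_smul_comm, smul_mul_assoc, ← map_mul] at h2
      rw [← map_mul, ← map_mul]
      convert h2 using 2
      · group
      · refine congrArg ρ ?_; group
    refine LinearMap.ext fun T => ?_
    rw [Module.End.mul_apply, Module.End.mul_apply, hf, hf, hf, hf]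
    calc ρ b * (ρ b' * (T * ρ (b' : G)⁻¹) * ρ (b : G)⁻¹)
        = (ρ b * ρ b') * T * (ρ (b' : G)⁻¹ * ρ (b : G)⁻¹) := by simp only [mul_assoc]
      _ = (ρ b' * ρ b) * T * (ρ (b : G)⁻¹ * ρ (b' : G)⁻¹) := by
        rw [hr, h1]; simp only [smul_mul_assoc, mul_smul_comm]
      _ = _ := by simp only [mul_assoc]
  choose χ hχ using fun (x : X) (b : A) => hA b b.2 (s x) (hs x)
  have hχ0 : ∀ x b, χ x b ≠ 0 := by
    intro x b h0
    have := hχ x b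
    rw [h0, zero_smul, ← map_mul] at this
    exact r_ne ρ _ this
  have hχi : Function.Injective χ := by
    intro x y hxy
    apply hinj
    intro a ha
    have h1 := hχ x ⟨a, ha⟩
    have h2 := hχ y ⟨a, ha⟩
    have h0 := hχ0 x ⟨a, ha⟩
    rw [← hxy] at h2
    simp only at h1 h2
    generalize χ x ⟨a, ha⟩ = r at h0 h1 h2
    have h3 : ρ (s y) = ρ (s x) * ρ ((s x)⁻¹ * s y) := by rw [← map_mul]; simp
    rw [h3, ← mul_assoc, h1, smul_mul_assoc, mul_assoc, mul_assoc] at h2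
    have h4 := smul_right_injective _ h0 h2
    have h5 := congrArg (fun T => ρ (s x)⁻¹ * T) h4
    simp only [rinv_l] at h5
    exact h5.symm
  have hind := (indep_weight f hcomm).comp hχi
  have := sum_le _ hind 1 (by
    intro x
    have hm : ρ (s x) ∈ ⨅ i, Module.End.eigenspace (f i) (χ x i) := by
      rw [Submodule.mem_iInf]
      intro b
      rw [Module.End.mem_eigenspace_iff, hf, ← mul_assoc, hχ, smul_mul_assoc, rinv_r]
    have : Nontrivial (⨅ i, Module.End.eigenspace (f i) (χ x i) : Submodule F (Module.End F V)) :=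
      (Submodule.nontrivial_iff_ne_bot).2 ((Submodule.ne_bot_iff _).2 ⟨_, hm, r_ne ρ _⟩)
    exact Nat.succ_le_of_lt (Module.finrank_pos (R := F)
      (M := (⨅ i, Module.End.eigenspace (f i) (χ x i) : Submodule F (Module.End F V)))))
  rw [mul_one] at this
  refine this.trans ?_
  rw [Module.finrank_linearMap]

end

theorem scal_ker {F V G : Type*} [Field F] [AddCommGroup V] [Module F V] [Group G]
    (ρ : Representation F G V) : ⁅scal ρ, scal ρ⁆ ≤ ρ.ker := by
  rw [Subgroup.commutator_le]
  rintro g ⟨r, hr⟩ h ⟨s, hs⟩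
  have : g * h = ⁅g, h⁆ * (h * g) := by rw [commutatorElement_def]; group
  have h1 : ρ (g * h) = ρ (h * g) := by
    rw [map_mul, map_mul, hr, hs, smul_mul_smul_comm, smul_mul_smul_comm, mul_comm r s]
  rw [MonoidHom.mem_ker, commutatorElement_def, mul_assoc, ← _root_.mul_inv_rev, map_mul, h1, ← map_mul]
  simp

theorem prim_case (c n : ℕ) (hc : 12 ≤ c) (hc1 : Nat.factorial 64 + 1 ≤ c)
    (hT : ∀ m < n, T c m) (F : Type) [Field F] [IsAlgClosed F] (V : Type) [AddCommGroup V]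
    [Module F V] [FiniteDimensional F V] (G : Type) [Group G] [Finite G] [Group.IsSolvable G]
    (ρ : Representation F G V) (hirr : Irr ρ) (hn : Module.finrank F V = n)
    (hp : ∀ A : Subgroup G, A.Normal → (∀ a b : A, Commute (ρ a) (ρ b)) → A ≤ scal ρ) :
    derivedSeries G (c * Nat.log 2 n + 1) ≤ ρ.ker := by
  obtain ⟨hnt, hi⟩ := hirr
  suffices h : derivedSeries G (c * Nat.log 2 n) ≤ scal ρ by
    rw [derivedSeries_succ]
    exact (Subgroup.commutator_mono h h).trans (scal_ker ρ)
  have hn0 : 0 < n := hn ▸ Module.finrank_pos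
  by_cases hL : Nat.log 2 n = 0
  · have h1 : n = 1 := by
      rcases Nat.log_eq_zero_iff.1 hL with h | h <;> omega
    intro g _
    obtain ⟨r, hr, -⟩ := LinearMap.existsUnique_eq_smul_id_of_finrank_eq_one (hn.trans h1) (ρ g)
    exact ⟨r, hr⟩
  have hL1 : 1 ≤ Nat.log 2 n := by omega
  let Z := scal ρ
  let Q := G ⧸ Z
  let π : G →* Q := QuotientGroup.mk' Z
  have hπ : Function.Surjective π := QuotientGroup.mk'_surjective Z
  have hπZ : ∀ g, π g = 1 ↔ g ∈ Z := fun g => QuotientGroup.eq_one_iff g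
  obtain ⟨B, ⟨hBn, hBc⟩, hBmax⟩ := (wellFounded_gt (α := Subgroup Q)).has_min
    {B : Subgroup Q | B.Normal ∧ B ≤ Subgroup.centralizer B} ⟨⊥, inferInstance, bot_le⟩
  let A : Subgroup G := B.comap π
  have hAn : A.Normal := hBn.comap π
  have hA : ∀ a, a ∈ A ↔ π a ∈ B := fun a => Iff.rfl
  have hAZ : ∀ a ∈ A, ∀ b ∈ A, ⁅a, b⁆ ∈ Z := by
    intro a ha b hb
    rw [← hπZ, map_commutatorElement, commutatorElement_eq_one_iff_mul_comm]
    exact (Subgroup.mem_centralizer_iff.1 (hBc ha) _ hb).symm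
  have hAD : A ⊓ cent ρ A ≤ Z := by
    have hnn := cent_normal ρ A
    refine hp _ inferInstance ?_
    intro a b
    exact a.2.2 b b.2.1
  let _ : CommGroup B :=
    { (inferInstance : Group B) with
      mul_comm := fun a b => Subtype.ext (Subgroup.mem_centralizer_iff.1 (hBc b.2) _ a.2) }
  have hcard : Nat.card B ≤ n * n := by
    rw [← hn]
    choose s hs using fun x : B => hπ x
    refine card_le ρ A B s (fun x => by rw [hA, hs]; exact x.2)
      (fun a ha b hb => rel_of_scal ρ (hAZ a ha b hb)) ?_
    intro x y hxy
    have h1 : (s x)⁻¹ * s y ∈ A := A.mul_mem (A.inv_mem (by rw [hA, hs]; exact x.2))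
      (by rw [hA, hs]; exact y.2)
    have h2 : (s x)⁻¹ * s y ∈ Z := hAD ⟨h1, hxy⟩
    rw [← hπZ, map_mul, map_inv, hs, hs, inv_mul_eq_one] at h2
    exact Subtype.ext h2
  have hlog : Nat.log 2 (Nat.card B) ≤ 2 * Nat.log 2 n + 1 := by
    have h1 : n < 2 ^ (Nat.log 2 n + 1) := Nat.lt_pow_succ_log_self (by norm_num) n
    have h2 : Nat.card B < 2 ^ (2 * Nat.log 2 n + 1 + 1) := by
      calc Nat.card B ≤ n * n := hcard
        _ < 2 ^ (Nat.log 2 n + 1) * 2 ^ (Nat.log 2 n + 1) := Nat.mul_self_lt_mul_self h1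
        _ = _ := by rw [← pow_add]; congr 1; ring
    exact Nat.le_of_lt_succ (Nat.log_lt_of_lt_pow Nat.card_pos.ne' h2)
  let φ : G →* MulAut B := (MulAut.conjNormal (H := B)).comp π
  have haut := aut_bound c n hc hc1 hT hL1 B hlog G φ
  have hC : ∀ g ∈ φ.ker, ∀ a ∈ A, ⁅g, a⁆ ∈ scal ρ := by
    intro g hg a ha
    rw [MonoidHom.mem_ker] at hg
    have h1 := congrArg (fun σ : MulAut B => ((σ ⟨π a, ha⟩ : B) : Q)) hg
    have h2 : π g * π a * (π g)⁻¹ = π a := h1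
    rw [← hπZ, map_commutatorElement, commutatorElement_def, h2, mul_inv_cancel]
  have hD : cent ρ A ≤ Z := by
    by_contra hD
    have hnn := cent_normal ρ A
    obtain ⟨N, hN, hND, hNZ, hNc⟩ := exists_abelian_normal (cent ρ A) Z hD
    apply hNZ
    have hNB : N.map π ≤ B := by
      by_contra hlt
      refine hBmax (B ⊔ N.map π) ⟨?_, ?_⟩ ?_
      · have : (N.map π).Normal := hN.map π hπ
        infer_instance
      · have h1 : B ≤ Subgroup.centralizer (N.map π : Subgroup Q) := by
          intro b hb
          rw [Subgroup.mem_centralizer_iff]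
          rintro _ ⟨x, hx, rfl⟩
          obtain ⟨a, rfl⟩ := hπ b
          have h2 := scal_of_comm ρ (hND hx a hb)
          rw [← commutatorElement_eq_one_iff_mul_comm, ← map_commutatorElement, hπZ]
          exact h2
        have h2 : N.map π ≤ Subgroup.centralizer (N.map π : Subgroup Q) := by
          rintro _ ⟨y, hy, rfl⟩
          rw [Subgroup.mem_centralizer_iff]
          rintro _ ⟨x, hx, rfl⟩
          rw [← commutatorElement_eq_one_iff_mul_comm, ← map_commutatorElement, hπZ]
          exact hNc (Subgroup.commutator_mem_commutator hx hy)
        have h3 : B ⊔ N.map π ≤ Subgroup.centralizer B :=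
          sup_le hBc (Subgroup.le_centralizer_iff.1 h1)
        have h4 : B ⊔ N.map π ≤ Subgroup.centralizer (N.map π : Subgroup Q) := sup_le h1 h2
        exact sup_le (Subgroup.le_centralizer_iff.1 h3) (Subgroup.le_centralizer_iff.1 h4)
      · exact left_lt_sup.2 hlt
    intro x hx
    exact hAD ⟨hNB ⟨x, hx, rfl⟩, hND hx⟩
  have hpos : c * Nat.log 2 n = c * Nat.log 2 n - 1 + 1 := by
    have : 1 ≤ c * Nat.log 2 n := Nat.mul_pos (by omega) (by omega)
    omega
  rw [hpos, derivedSeries_succ]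
  exact (Subgroup.commutator_mono haut haut).trans ((cent_comm ρ A _ hC).trans hD)

theorem T_all (c : ℕ) (hc : 12 ≤ c) (hc1 : Nat.factorial 64 + 1 ≤ c) (n : ℕ) : T c n := by
  induction n using Nat.strong_induction_on with
  | _ n hT =>
  intro F _ _ V _ _ _ G _ _ _ ρ hirr hn
  by_cases h : ∀ A : Subgroup G, A.Normal → (∀ a b : A, Commute (ρ a) (ρ b)) → A ≤ scal ρ
  · exact prim_case c n hc hc1 hT F V G ρ hirr hn h
  · push Not at h
    obtain ⟨A, hA, hAc, hAs⟩ := h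
    refine imprim c n hc hc1 hT F V G ρ hirr hn A hA hAc ?_
    intro h1
    apply hAs
    intro a ha
    obtain ⟨r, hr⟩ := h1 a ha
    exact ⟨r, LinearMap.ext fun x => by simpa using hr x⟩

theorem solv_bound (c : ℕ) (hc : 12 ≤ c) (hc1 : Nat.factorial 64 + 1 ≤ c) (n : ℕ)
    (F : Type) [Field F] (H : Subgroup (GL (Fin n) F)) [Finite H] [Group.IsSolvable H] :
    derivedSeries H (c * Nat.log 2 n + 1 + Nat.clog 2 n) = ⊥ := by
  let ρ : Representation F H (Fin n → F) :=
    (Matrix.toLinAlgEquiv' : Matrix (Fin n) (Fin n) F ≃ₐ[F] _).toRingEquiv.toRingHom.toMonoidHom.comp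
      ((Units.coeHom _).comp H.subtype)
  have := field_bound c n (fun m _ => T_all c hc hc1 m) F (Fin n → F) H ρ (by simp)
  rw [eq_bot_iff]
  refine this.trans ?_
  intro h hh
  rw [MonoidHom.mem_ker] at hh
  have h1 : (Matrix.toLinAlgEquiv' : Matrix (Fin n) (Fin n) F ≃ₐ[F] _) ((h : GL (Fin n) F) : Matrix _ _ F) = 1 := hh
  rw [← map_one (Matrix.toLinAlgEquiv' : Matrix (Fin n) (Fin n) F ≃ₐ[F] _)] at h1
  have h2 := (Matrix.toLinAlgEquiv' : Matrix (Fin n) (Fin n) F ≃ₐ[F] _).injective h1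
  rw [Subgroup.mem_bot]
  exact Subtype.ext (Units.ext h2)

/-- Frattini reduction -/
theorem reduction {G : Type*} [Group G] [Finite G] (m : ℕ)
    (h : ∀ H : Subgroup G, Group.IsSolvable H → derivedSeries H m = ⊥) :
    derivedSeries G (m + 1) = derivedSeries G m := by
  obtain ⟨N, hN⟩ : ∃ N, ∀ k ≥ N, derivedSeries G N = derivedSeries G k := by
    obtain ⟨N, hN⟩ := WellFoundedGT.monotone_chain_condition (α := (Subgroup G)ᵒᵈ)
      ⟨fun k => OrderDual.toDual (derivedSeries G k), fun a b hab => derivedSeries_antitone G hab⟩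
    exact ⟨N, fun k hk => hN k hk⟩
  let R := derivedSeries G N
  have hRp : ⁅R, R⁆ = R := (hN (N+1) (by omega)).symm
  have hRle : ∀ k, R ≤ derivedSeries G k := by
    intro k
    rcases le_total N k with hk | hk
    · exact (hN k hk).le
    · exact derivedSeries_antitone G hk
  suffices hm : derivedSeries G m ≤ R by
    have h1 : derivedSeries G m = R := le_antisymm hm (hRle m)
    rw [derivedSeries_succ, h1, hRp]
  have hRn : R.Normal := inferInstance
  obtain ⟨H, hH, hmin⟩ := (wellFounded_lt (α := Subgroup G)).has_min
    {H : Subgroup G | H ⊔ R = ⊤} ⟨⊤, by simp⟩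
  -- H ∩ R is in the Frattini subgroup
  have hfr : R.subgroupOf H ≤ frattini H := by
    rw [frattini, Order.radical]
    refine le_iInf₂ fun M hM => ?_
    by_contra hle
    have h1 : M ⊔ R.subgroupOf H = ⊤ := hM.2 _ (left_lt_sup.2 hle)
    have h2 : M.map H.subtype ⊔ R = ⊤ := by
      rw [eq_top_iff, ← hH]
      refine sup_le ?_ le_sup_right
      have h3 : H = (⊤ : Subgroup H).map H.subtype := by
        rw [← MonoidHom.range_eq_map, Subgroup.range_subtype]
      refine h3.le.trans ?_
      rw [← h1, Subgroup.map_sup]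
      refine sup_le_sup_left ?_ _
      rw [Subgroup.subgroupOf_map_subtype]
      exact inf_le_left
    refine hmin _ h2 (lt_of_le_of_ne (Subgroup.map_subtype_le M) ?_)
    intro h3
    apply hM.1
    rw [eq_top_iff]
    rintro ⟨x, hx⟩ -
    rw [← h3] at hx
    obtain ⟨y, hy, rfl⟩ := hx
    exact hy
  -- the quotient map
  let q : H →* G ⧸ R := (QuotientGroup.mk' R).comp H.subtype
  have hqk : q.ker ≤ frattini H := by
    intro x hx
    apply hfr
    rw [Subgroup.mem_subgroupOf]
    exact (QuotientGroup.eq_one_iff _).1 hx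
  have hq : Function.Surjective q := by
    intro y
    obtain ⟨g, rfl⟩ := QuotientGroup.mk'_surjective R y
    have : g ∈ H ⊔ R := hH ▸ Subgroup.mem_top g
    rw [Subgroup.mem_sup_of_normal_right] at this
    obtain ⟨a, ha, b, hb, rfl⟩ := this
    refine ⟨⟨a, ha⟩, ?_⟩
    show QuotientGroup.mk' R a = QuotientGroup.mk' R (a * b)
    have hb1 : QuotientGroup.mk' R b = 1 := (QuotientGroup.eq_one_iff b).2 hb
    rw [map_mul, hb1, mul_one]
  have hfs : Group.IsSolvable (frattini H) := by
    have := frattini_nilpotent (G := H)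
    infer_instance
  have hQs : Group.IsSolvable (G ⧸ R) := by
    refine ⟨N, ?_⟩
    rw [← map_derivedSeries_eq (QuotientGroup.mk'_surjective R)]
    rw [Subgroup.map_eq_bot_iff, QuotientGroup.ker_mk']
  have hHs : Group.IsSolvable H := by
    refine Group.isSolvable_of_ker_le_range (frattini H).subtype q ?_
    rw [Subgroup.range_subtype]
    exact hqk
  have h1 := h H hHs
  have h2 : (derivedSeries G m).map (QuotientGroup.mk' R) = ⊥ := by
    rw [map_derivedSeries_eq (QuotientGroup.mk'_surjective R), ← map_derivedSeries_eq hq, h1,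
      Subgroup.map_bot]
  rwa [Subgroup.map_eq_bot_iff, QuotientGroup.ker_mk'] at h2

end PC

/-- There is an absolute constant `c` such that for every `n ≥ 1`, every field `F` and
every finite subgroup `Γ ≤ GL_n(F)`, some term `Γ^{(m)}` of the derived series with
`m ≤ c·(1 + log n)` is perfect. -/
theorem perfect_core_bounded_derived_length :
    ∃ c : ℝ, ∀ n : ℕ, 1 ≤ n → ∀ (F : Type) [Field F],
      ∀ Γ : Subgroup (GL (Fin n) F), Finite ↥Γ →
      ∃ m : ℕ, (m : ℝ) ≤ c * (1 + Real.log n) ∧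
        derivedSeries ↥Γ (m + 1) = derivedSeries ↥Γ m := by
  obtain ⟨c, hc, hc1⟩ : ∃ c : ℕ, 12 ≤ c ∧ Nat.factorial 64 + 1 ≤ c :=
    ⟨Nat.factorial 64 + 12, Nat.le_add_left _ _, Nat.add_le_add_left (by norm_num) _⟩
  refine ⟨(c + 1) * 2 + 2, ?_⟩
  intro n hn F _ Γ hΓ
  refine ⟨c * Nat.log 2 n + 1 + Nat.clog 2 n, ?_, ?_⟩
  · have h1 : Nat.clog 2 n ≤ Nat.log 2 n + 1 := by
      apply Nat.clog_le_of_le_pow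
      exact (Nat.lt_pow_succ_log_self (by norm_num) _).le
    have h2 : (Nat.log 2 n : ℝ) ≤ 2 * Real.log n := by
      have h3 : 2 ^ Nat.log 2 n ≤ n := Nat.pow_log_le_self 2 (by omega)
      have h4 : ((2 : ℝ) ^ Nat.log 2 n) ≤ n := by exact_mod_cast h3
      have h5 := Real.log_le_log (by positivity) h4
      rw [Real.log_pow] at h5
      have h6 := Real.log_two_gt_d9
      have h7 : (0 : ℝ) ≤ Nat.log 2 n := Nat.cast_nonneg _
      nlinarith
    have h8 : (Nat.clog 2 n : ℝ) ≤ Nat.log 2 n + 1 := by exact_mod_cast h1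
    have h9 : (0 : ℝ) ≤ c := Nat.cast_nonneg _
    have h10 : (0 : ℝ) ≤ Real.log n := Real.log_natCast_nonneg n
    push_cast
    nlinarith [mul_le_mul_of_nonneg_left h2 h9]
  · apply PC.reduction
    intro H hH
    let H' : Subgroup (GL (Fin n) F) := H.map Γ.subtype
    let e : H ≃* H' := H.equivMapOfInjective Γ.subtype Γ.subtype_injective
    have hs : Group.IsSolvable H' := Group.isSolvable_of_surjective (f := e.toMonoidHom) e.surjective
    have hf : Finite H' := Finite.of_equiv _ e.toEquiv
    have h1 := PC.solv_bound c hc hc1 n F H'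
    rw [← map_derivedSeries_eq (f := e.toMonoidHom) e.surjective] at h1
    exact (Subgroup.map_eq_bot_iff_of_injective _ e.injective).1 h1
end

section
/- Let F be an algebraically closed field of characteristic p > 0 and let G be a finite subgroup of GL_n(F). Then the following are equivalent: (i) G is trigonalizable, i.e., there exists g ∈ GL_n(F) such that g·x·g⁻¹ is an upper triangular matrix (all entries below the diagonal are zero) for every x ∈ G; (ii) G is p-by-abelian, i.e., there is a normal subgroup U of G such that U is a p-group and the quotient G/U is abelian. -/
open Matrix
open scoped commutatorElement

set_option synthInstance.maxHeartbeats 400000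
set_option maxHeartbeats 1000000


lemma upper_mul_diag {n : ℕ} {F : Type*} [Field F] (A B : Matrix (Fin n) (Fin n) F)
    (hA : ∀ i j, j < i → A i j = 0) (hB : ∀ i j, j < i → B i j = 0) (i : Fin n) :
    (A * B) i i = A i i * B i i := by
  rw [Matrix.mul_apply]
  apply Finset.sum_eq_single i
  · intro j _ hj
    rcases lt_or_gt_of_ne hj with h | h
    · rw [hA _ _ h, zero_mul]
    · rw [hB _ _ h, mul_zero]
  · simp

lemma unitri_pow {n p : ℕ} {F : Type*} [Field F] (hp : p.Prime) [CharP F p]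
    (A : Matrix (Fin n) (Fin n) F)
    (hA : ∀ i j, j < i → A i j = 0) (h1 : ∀ i, A i i = 1) : A ^ p ^ n = 1 := by
  have := Fact.mk hp
  rcases Nat.eq_zero_or_pos n with rfl | hn
  · exact Subsingleton.elim _ _
  have : Nonempty (Fin n) := ⟨⟨0, hn⟩⟩
  have hN : (A - 1) ^ n = 0 := by
    have ht : (A - 1).BlockTriangular id := by
      intro i j hij
      have hij' : j < i := hij
      simp [hA i j hij', Matrix.one_apply_ne hij'.ne']
    have := Matrix.aeval_self_charpoly (A - 1)
    rw [Matrix.charpoly_of_isUpperTriangular _ ht] at this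
    simpa [h1] using this
  have h2 : (A - 1) ^ p ^ n = 0 :=
    pow_eq_zero_of_le (Nat.lt_pow_self hp.one_lt).le hN
  rw [sub_pow_char_pow_of_commute _ _ (Commute.one_right A), one_pow, sub_eq_zero] at h2
  exact h2

lemma trig_forward
    (n : ℕ) (F : Type) [Field F]
    (p : ℕ) (hp : p.Prime) [CharP F p]
    (G : Subgroup (GL (Fin n) F)) 
    (h : ∃ g : GL (Fin n) F, ∀ x ∈ G, ∀ i j : Fin n, j < i →
        ((g * x * g⁻¹ : GL (Fin n) F) : Matrix (Fin n) (Fin n) F) i j = 0) :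
    (∃ U : Subgroup ↥G, U.Normal ∧ IsPGroup p ↥U ∧ ∀ a b : ↥G, ⁅a, b⁆ ∈ U) := by
  obtain ⟨g, hg⟩ := h
  let φ : G →* (Fin n → F) :=
    { toFun := fun x i => ((g * x * g⁻¹ : GL (Fin n) F) : Matrix (Fin n) (Fin n) F) i i
      map_one' := by ext i; simp
      map_mul' := by
        intro x y
        ext i
        have := upper_mul_diag _ _ (hg x x.2) (hg y y.2) i
        rw [← Units.val_mul] at this
        rw [Pi.mul_apply, ← this]
        simp [mul_assoc] }
  refine ⟨φ.ker, inferInstance, ?_, ?_⟩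
  · rintro ⟨x, hx⟩
    refine ⟨n, ?_⟩
    have h1 := unitri_pow hp _ (hg x x.2) (fun i => congrFun (MonoidHom.mem_ker.1 hx) i)
    rw [← Units.val_pow_eq_pow_val, Units.val_eq_one, conj_pow] at h1
    have h2 := conj_eq_one_iff.1 h1
    ext1
    ext1
    simpa using h2
  · intro a b
    rw [MonoidHom.mem_ker, commutatorElement_def]
    simp only [map_mul]
    rw [show φ a * φ b * φ a⁻¹ * φ b⁻¹ = (φ a * φ a⁻¹) * (φ b * φ b⁻¹) by ring, ← map_mul, ← map_mul]
    simp

lemma pgroup_fixed {G F V : Type*} [Group G] [Finite G] [Field F] [AddCommGroup V] [Module F V]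
    (p : ℕ) (hp : p.Prime) [CharP F p] (hG : IsPGroup p G) (ρ : G →* Module.End F V)
    (v : V) (hv : v ≠ 0) :
    ∃ w ∈ AddSubgroup.closure (Set.range fun u => ρ u v), w ≠ 0 ∧ ∀ u, ρ u w = w := by
  have := Fact.mk hp
  set S := AddSubgroup.closure (Set.range fun u => ρ u v) with hS
  have hpV : ∀ w : V, p • w = 0 := fun w => by
    rw [← Nat.cast_smul_eq_nsmul F, CharP.cast_eq_zero, zero_smul]
  have hinv : ∀ u, ∀ w ∈ S, ρ u w ∈ S := by
    intro u w hw
    have : S ≤ S.comap (ρ u).toAddMonoidHom := by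
      rw [hS, AddSubgroup.closure_le]
      rintro _ ⟨t, rfl⟩
      refine AddSubgroup.subset_closure ⟨u * t, ?_⟩
      simp
    exact this hw
  have : AddGroup.FG S := by
    rw [AddGroup.fg_iff_addSubgroup_fg]
    exact (AddSubgroup.fg_iff _).2 ⟨_, rfl, Set.finite_range _⟩
  have : Finite S := by
    apply AddCommGroup.finite_of_fg_isAddTorsion
    intro s
    rw [isOfFinAddOrder_iff_nsmul_eq_zero]
    exact ⟨p, hp.pos, Subtype.ext (by simpa using hpV s)⟩
  let : MulAction G S :=
    { smul := fun u s => ⟨ρ u s, hinv u s s.2⟩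
      one_smul := fun s => Subtype.ext (by change ρ 1 (s : V) = s; simp)
      mul_smul := fun a b s => Subtype.ext (by change ρ (a * b) (s : V) = ρ a (ρ b s); simp) }
  have hvS : v ∈ S := AddSubgroup.subset_closure ⟨1, by simp⟩
  have hd : p ∣ Nat.card S := by
    have : addOrderOf (⟨v, hvS⟩ : S) = p :=
      addOrderOf_eq_prime (Subtype.ext (hpV v)) (fun h => hv (congrArg Subtype.val h))
    rw [← this]
    exact addOrderOf_dvd_natCard _
  have h0 : (0 : S) ∈ MulAction.fixedPoints G S := fun u => Subtype.ext (map_zero (ρ u))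
  obtain ⟨b, hb, hb0⟩ := hG.exists_fixed_point_of_prime_dvd_card_of_fixed_point S hd h0
  exact ⟨b, b.2, fun h => hb0 (Subtype.ext h.symm), fun u => congrArg Subtype.val (hb u)⟩

lemma common_eig {G F V : Type*} [Group G] [Finite G] [Field F] [IsAlgClosed F]
    [AddCommGroup V] [Module F V] [FiniteDimensional F V] [Nontrivial V]
    (p : ℕ) (hp : p.Prime) [CharP F p] (ρ : G →* Module.End F V)
    (U : Subgroup G) [hUn : U.Normal] (hU : IsPGroup p U) (hc : ∀ a b : G, ⁅a, b⁆ ∈ U) :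
    ∃ v : V, v ≠ 0 ∧ ∀ x, ∃ c : F, ρ x v = c • v := by
  obtain ⟨W, ⟨hW0, hWi⟩, hmin⟩ := WellFounded.has_min (wellFounded_lt (α := Submodule F V))
    {W | W ≠ ⊥ ∧ ∀ x, ∀ w ∈ W, ρ x w ∈ W} ⟨⊤, top_ne_bot, by simp⟩
  have key : ∀ W' : Submodule F V, (∃ w ∈ W, w ∈ W' ∧ w ≠ 0) →
      (∀ x, ∀ w ∈ W, w ∈ W' → ρ x w ∈ W') → W ≤ W' := by
    rintro W' ⟨w, hw, hw', h0⟩ hi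
    have h1 := hmin (W ⊓ W') ⟨fun h => h0 (by
      have : w ∈ W ⊓ W' := ⟨hw, hw'⟩
      rw [h] at this; simpa using this), fun x w hw => ⟨hWi x w hw.1, hi x w hw.1 hw.2⟩⟩
    by_contra hn
    exact h1 (lt_of_le_of_ne inf_le_left (fun h => hn (inf_eq_left.1 h)))
  obtain ⟨v, hv, hv0⟩ := Submodule.exists_mem_ne_zero_of_ne_bot hW0
  have hfix : ∀ u ∈ U, ∀ w ∈ W, ρ u w = w := by
    let W' : Submodule F V := ⨅ u : U, LinearMap.ker (ρ u - 1)
    have hm : ∀ w, w ∈ W' ↔ ∀ u ∈ U, ρ u w = w := by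
      intro w
      simp [W', Submodule.mem_iInf, sub_eq_zero]
    have : W ≤ W' := by
      apply key
      · obtain ⟨w, hw, h0, hf⟩ := pgroup_fixed p hp hU (ρ.comp U.subtype) v hv0
        refine ⟨w, ?_, (hm w).2 fun u hu => hf ⟨u, hu⟩, h0⟩
        have : AddSubgroup.closure (Set.range fun u => (ρ.comp U.subtype) u v) ≤
            W.toAddSubgroup := by
          rw [AddSubgroup.closure_le]
          rintro _ ⟨u, rfl⟩
          exact hWi _ _ hv
        exact this hw
      · intro x w _ hw
        rw [hm] at hw ⊢
        intro u hu
        have h2 := hw _ (hUn.conj_mem u hu x⁻¹)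
        have h3 := congrArg (ρ x) h2
        rw [← Module.End.mul_apply, ← map_mul] at h3 ⊢
        rw [← h3]
        congr 2
        group
    intro u hu w hw
    exact (hm w).1 (this hw) u hu
  have hcomm : ∀ x y, ∀ w ∈ W, ρ x (ρ y w) = ρ y (ρ x w) := by
    intro x y w hw
    have h3 := congrArg (ρ (y * x)) (hfix _ (hc x⁻¹ y⁻¹) w hw)
    rw [← Module.End.mul_apply, ← Module.End.mul_apply, ← map_mul, ← map_mul]
    rw [← Module.End.mul_apply, ← map_mul] at h3
    rw [← h3]
    congr 2
    rw [commutatorElement_def]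
    group
  refine ⟨v, hv0, fun x => ?_⟩
  have : Nontrivial W := Submodule.nontrivial_iff_ne_bot.2 hW0
  obtain ⟨c, hcc⟩ := Module.End.exists_eigenvalue ((ρ x).restrict (hWi x))
  obtain ⟨w, hw⟩ := hcc.exists_hasEigenvector
  have hw1 : ρ x (w : V) = c • (w : V) := congrArg Subtype.val hw.apply_eq_smul
  refine ⟨c, ?_⟩
  have : W ≤ LinearMap.ker (ρ x - c • 1) := by
    apply key
    · exact ⟨w, w.2, by simp [hw1], fun h => hw.2 (Subtype.ext h)⟩
    · intro y z hz hz'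
      simp [sub_eq_zero] at hz' ⊢
      rw [hcomm x y z hz, hz', map_smul]
  simpa [sub_eq_zero] using this hv

lemma lower_basis {G F : Type*} [Group G] [Finite G] [Field F] [IsAlgClosed F]
    (p : ℕ) (hp : p.Prime) [CharP F p] 
    (U : Subgroup G) [hUn : U.Normal] (hU : IsPGroup p U) (hc : ∀ a b : G, ⁅a, b⁆ ∈ U) (n : ℕ) :
    ∀ (V : Type*) [AddCommGroup V] [Module F V] [FiniteDimensional F V]
    (ρ : G →* Module.End F V), Module.finrank F V = n →
    ∃ b : Module.Basis (Fin n) F V, ∀ x i j, i < j → b.repr (ρ x (b j)) i = 0 := by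
  induction n with
  | zero =>
    intro V _ _ _ ρ h
    exact ⟨Module.finBasisOfFinrankEq F V h, fun x i => i.elim0⟩
  | succ n ih =>
    intro V _ _ _ ρ h
    have : Nontrivial V := Module.nontrivial_of_finrank_pos (R := F) (by omega)
    let σ : G →* Module.End F (Module.Dual F V) := Representation.dual ρ
    obtain ⟨f, hf0, hf⟩ := common_eig p hp σ U hU hc
    let W := LinearMap.ker f
    have hWi : ∀ x, ∀ w ∈ W, ρ x w ∈ W := by
      intro x w hw
      obtain ⟨c, hcx⟩ := hf x⁻¹
      have h1 := LinearMap.congr_fun hcx w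
      have h2 : f (ρ x w) = c * f w := by
        have h4 : f (ρ x⁻¹⁻¹ w) = c * f w := h1
        rwa [inv_inv] at h4
      have hw' : f w = 0 := hw
      change f (ρ x w) = 0
      rw [h2, hw', mul_zero]
    have hWd : Module.finrank F W = n := by
      have := Module.Dual.finrank_ker_add_one_of_ne_zero hf0
      have h3 : Module.finrank F W + 1 = Module.finrank F V := this
      omega
    let τ : G →* Module.End F W :=
      { toFun := fun x => (ρ x).restrict (hWi x)
        map_one' := by ext w; simp
        map_mul' := by intro x y; ext w; simp }
    obtain ⟨b, hb⟩ := ih W τ hWd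
    obtain ⟨y, hy⟩ : ∃ y, f y ≠ 0 := by
      by_contra! hh
      exact hf0 (LinearMap.ext hh)
    let B := Module.Basis.mkFinCons y b
      (by
        intro c x hx hcx
        have h1 := congrArg f hcx
        have hx' : f x = 0 := hx
        simpa [hx', hy] using h1)
      (by
        intro z
        refine ⟨-(f z / f y), ?_⟩
        change f _ = 0
        simp [hy])
    have hB : ∀ i : Fin n, B i.succ = (b i : V) := by
      intro i
      simp [B]
    have hrep : ∀ (w : W) (i : Fin (n+1)),
        B.repr (w : V) i = Fin.cons (α := fun _ => F) 0 (fun k => b.repr w k) i := by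
      intro w i
      have : (w : V) = ∑ k, (Fin.cons (α := fun _ => F) 0 (fun k => b.repr w k) : Fin (n+1) → F) k • B k := by
        rw [Fin.sum_univ_succ]
        simp only [Fin.cons_zero, zero_smul, zero_add, Fin.cons_succ, hB]
        have h6 := congrArg W.subtype (b.sum_repr w)
        rw [map_sum] at h6
        exact h6.symm
      conv_lhs => rw [this]
      rw [B.repr_sum_self]
    refine ⟨B, fun x i j hij => ?_⟩
    obtain ⟨j, rfl⟩ := Fin.exists_succ_eq.2 (Fin.ne_zero_of_lt hij)
    rw [hB]
    have := hrep (τ x (b j)) i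
    have h5 : ((τ x (b j) : W) : V) = ρ x (b j) := rfl
    rw [h5] at this
    rw [this]
    refine Fin.cases ?_ (fun i hij => ?_) i hij
    · intro; simp
    · simpa using hb x i j (by simpa using hij)

lemma trig_backward
    (n : ℕ) (F : Type) [Field F] [IsAlgClosed F]
    (p : ℕ) (hp : p.Prime) [CharP F p]
    (G : Subgroup (GL (Fin n) F)) (hG : Finite ↥G) 
    (h : ∃ U : Subgroup ↥G, U.Normal ∧ IsPGroup p ↥U ∧ ∀ a b : ↥G, ⁅a, b⁆ ∈ U) :
    (∃ g : GL (Fin n) F, ∀ x ∈ G, ∀ i j : Fin n, j < i →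
        ((g * x * g⁻¹ : GL (Fin n) F) : Matrix (Fin n) (Fin n) F) i j = 0) := by
  obtain ⟨U, hUn, hU, hc⟩ := h
  let ρ : G →* Module.End F (Fin n → F) :=
    ((Matrix.toLinAlgEquiv' : Matrix (Fin n) (Fin n) F ≃ₐ[F] _) : _ →* _).comp
      ((Units.coeHom _).comp G.subtype)
  have hρ : ∀ x : G, ρ x = Matrix.toLin' ((x : GL (Fin n) F) : Matrix (Fin n) (Fin n) F) :=
    fun x => rfl
  obtain ⟨b, hb⟩ := lower_basis p hp U hU hc n (Fin n → F) ρ (by simp)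
  let B := b.reindex Fin.revPerm
  let e := Pi.basisFun F (Fin n)
  let g : GL (Fin n) F := ⟨B.toMatrix e, e.toMatrix B, B.toMatrix_mul_toMatrix_flip e,
    e.toMatrix_mul_toMatrix_flip B⟩
  refine ⟨g, fun x hx i j hij => ?_⟩
  have h1 : ((g * x * g⁻¹ : GL (Fin n) F) : Matrix (Fin n) (Fin n) F) =
      LinearMap.toMatrix B B (ρ ⟨x, hx⟩) := by
    rw [← basis_toMatrix_mul_linearMap_toMatrix_mul_basis_toMatrix B e B e]
    rw [hρ, LinearMap.toMatrix_eq_toMatrix', LinearMap.toMatrix'_toLin']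
    rfl
  rw [h1, LinearMap.toMatrix_apply]
  simpa [B] using hb ⟨x, hx⟩ i.rev j.rev (Fin.rev_lt_rev.2 hij)

/-- Over an algebraically closed field `F` of characteristic `p > 0`, a finite subgroup
`G ≤ GL_n(F)` is trigonalizable (conjugate into the upper triangular matrices) if and
only if it is `p`-by-abelian (it has a normal `p`-subgroup with abelian quotient). -/
theorem trigonalizable_iff_p_by_abelian
    (n : ℕ) (F : Type) [Field F] [IsAlgClosed F]
    (p : ℕ) (hp : p.Prime) [CharP F p]
    (G : Subgroup (GL (Fin n) F)) (hG : Finite ↥G) :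
    (∃ g : GL (Fin n) F, ∀ x ∈ G, ∀ i j : Fin n, j < i →
        ((g * x * g⁻¹ : GL (Fin n) F) : Matrix (Fin n) (Fin n) F) i j = 0) ↔
    (∃ U : Subgroup ↥G, U.Normal ∧ IsPGroup p ↥U ∧ ∀ a b : ↥G, ⁅a, b⁆ ∈ U) := by
  exact ⟨trig_forward n F p hp G, trig_backward n F p hp G hG⟩
end

section
/- Let F be a field and let T be a finite abelian subgroup of GL_n(F) whose order is not divisible by the characteristic of F. Let N = N_{GL_n(F)}(T) be the normalizer of T in GL_n(F) and let C = C_{GL_n(F)}(T) be the centralizer of T in GL_n(F) (note C ≤ N). Then the index of C in N is at most n!, i.e., [N_{GL_n(F)}(T) : C_{GL_n(F)}(T)] ≤ n!. -/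
open Matrix

set_option synthInstance.maxHeartbeats 400000
set_option maxHeartbeats 1000000

open Module Module.End in
theorem weights_aux {G K V : Type} [Group G] [Field K] [IsAlgClosed K] [AddCommGroup V]
    [Module K V] [FiniteDimensional K V] (ρ : G →* Module.End K V)
    (hρ : Function.Injective ρ) (T : Subgroup G) (hfin : Finite T)
    (hab : ∀ a ∈ T, ∀ b ∈ T, a * b = b * a) (hc : (Nat.card T : K) ≠ 0) :
    (Subgroup.centralizer (T : Set G)).relIndex (Subgroup.normalizer (T : Set G)) ≤
      Nat.factorial (finrank K V) := by
  classical
  let f : T → Module.End K V := fun t => ρ t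
  have hcomm : ∀ s t, Commute (f s) (f t) := fun s t => by
    simp only [f, Commute, SemiconjBy, ← map_mul, hab _ s.2 _ t.2]
  have hss : ∀ t, (f t).IsSemisimple := by
    intro t
    refine isSemisimple_of_squarefree_aeval_eq_zero
      (p := (Polynomial.X ^ (Nat.card T) - 1 : Polynomial K))
      (Polynomial.X_pow_sub_one_separable_iff.2 hc).squarefree ?_
    have h1 : (t : G) ^ Nat.card T = 1 := by
      have := pow_card_eq_one' (x := t)
      exact congrArg (Subtype.val) this
    rw [map_sub, map_pow, Polynomial.aeval_X, map_one, ← map_pow, h1, map_one, sub_self]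
  have heig : ∀ t μ, (f t).maxGenEigenspace μ = (f t).eigenspace μ := fun t μ =>
    (hss t).isFinitelySemisimple.maxGenEigenspace_eq_eigenspace μ
  let W : (T → K) → Submodule K V := fun χ => ⨅ t, (f t).eigenspace (χ t)
  have hmemW : ∀ χ v, v ∈ W χ ↔ ∀ t, f t v = χ t • v := by
    intro χ v; simp [W, Submodule.mem_iInf, mem_eigenspace_iff]
  have htop : ⨆ χ, W χ = ⊤ := by
    have := iSup_iInf_maxGenEigenspace_eq_top_of_iSup_maxGenEigenspace_eq_top_of_commute f
      (fun s t _ => hcomm s t) (fun t => iSup_maxGenEigenspace_eq_top _)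
    simpa only [heig] using this
  have hind : iSupIndep W := by
    have := independent_iInf_maxGenEigenspace_of_forall_mapsTo f
      (fun s t => mapsTo_maxGenEigenspace_of_comm (hcomm t s))
    simpa only [heig] using this
  let X := {χ // W χ ≠ ⊥}
  haveI : Fintype X := hind.fintypeNeBotOfFiniteDimensional
  have hX : Nat.card X ≤ finrank K V := by
    rw [Nat.card_eq_fintype_card]; exact hind.subtype_ne_bot_le_finrank
  have key : ∀ α ∈ T.normalizerMonoidHom.range, ∀ χ, W χ ≠ ⊥ → W (χ ∘ α) ≠ ⊥ := by
    rintro _ ⟨g, rfl⟩ χ hχ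
    obtain ⟨v, hv, hv0⟩ := (Submodule.ne_bot_iff _).1 hχ
    rw [hmemW] at hv
    refine (Submodule.ne_bot_iff _).2 ⟨ρ (g : G)⁻¹ v, ?_, ?_⟩
    · rw [hmemW]
      intro t
      have h := hv (T.normalizerMonoidHom g t)
      have h2 : ((T.normalizerMonoidHom g t : T) : G) = g * t * (g : G)⁻¹ := by
        simp
      simp only [f, h2] at h ⊢
      rw [Function.comp_apply, ← map_smul, ← h, ← Module.End.mul_apply, ← Module.End.mul_apply,
        ← map_mul, ← map_mul]
      congr 2; group
    · intro h0
      apply hv0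
      have : ρ (g : G) (ρ (g : G)⁻¹ v) = v := by
        rw [← Module.End.mul_apply, ← map_mul]; simp
      rw [← this, h0, map_zero]
  let Φ : T.normalizerMonoidHom.range → X → X := fun α χ => ⟨χ.1 ∘ α.1, key α.1 α.2 χ.1 χ.2⟩
  have hΦ : ∀ α, Function.Bijective (Φ α) := by
    intro α
    refine Finite.injective_iff_bijective.1 fun χ ψ h => Subtype.ext ?_
    exact (α.1.surjective.injective_comp_right) (congrArg Subtype.val h)
  rw [Subgroup.relIndex, ← Subgroup.normalizerMonoidHom_ker, Subgroup.index_ker]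
  refine le_trans (Nat.card_le_card_of_injective
    (fun α => (Equiv.ofBijective (Φ α) (hΦ α) : Equiv.Perm X)) ?_)
    (Nat.card_perm.trans_le (Nat.factorial_le hX))
  intro α β h
  have h' : ∀ χ : X, χ.1 ∘ α.1 = χ.1 ∘ β.1 := fun χ =>
    congrArg Subtype.val (DFunLike.congr_fun h χ)
  refine Subtype.ext (MulEquiv.ext fun t => Subtype.ext (hρ ?_))
  change f (α.1 t) = f (β.1 t)
  have hle : (⊤ : Submodule K V) ≤ LinearMap.eqLocus (f (α.1 t)) (f (β.1 t)) := by
    rw [← htop]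
    refine iSup_le fun χ v hv => ?_
    by_cases hχ : W χ = ⊥
    · rw [hχ, Submodule.mem_bot] at hv
      simp [hv]
    · rw [hmemW] at hv
      rw [LinearMap.mem_eqLocus, hv, hv]
      have := congrFun (h' ⟨χ, hχ⟩) t
      simp only [Function.comp_apply] at this
      rw [this]
  exact LinearMap.ext fun v => hle (Submodule.mem_top (x := v))

/-- If `T` is a finite abelian subgroup of `GL_n(F)` of order not divisible by the
characteristic of `F`, then the index of the centralizer of `T` in the normalizer of `T`
is at most `n!`. -/
theorem normalizer_centralizer_index_le
    (n : ℕ) (F : Type) [Field F]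
    (T : Subgroup (GL (Fin n) F)) (hfin : Finite ↥T)
    (hab : ∀ a ∈ T, ∀ b ∈ T, a * b = b * a)
    (hchar : ¬ (ringChar F ∣ Nat.card ↥T)) :
    (Subgroup.centralizer (T : Set (GL (Fin n) F))).relIndex
      (Subgroup.normalizer (T : Set (GL (Fin n) F))) ≤ Nat.factorial n := by
  classical
  let K := AlgebraicClosure F
  let ρ : GL (Fin n) F →* Module.End K (Fin n → K) :=
    ((Matrix.toLinAlgEquiv' : Matrix (Fin n) (Fin n) K ≃ₐ[K] _) : _ →* _).comp
      (((algebraMap F K).mapMatrix : Matrix (Fin n) (Fin n) F →+* _).toMonoidHom.comp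
        (Units.coeHom _))
  have hρ : Function.Injective ρ := by
    intro a b h
    have h1 : (algebraMap F K).mapMatrix (a : Matrix (Fin n) (Fin n) F) =
        (algebraMap F K).mapMatrix (b : Matrix (Fin n) (Fin n) F) :=
      Matrix.toLinAlgEquiv'.injective h
    exact Units.ext (Matrix.map_injective (algebraMap F K).injective h1)
  have hc : (Nat.card T : K) ≠ 0 := by
    intro h
    apply hchar
    rw [← ringChar.spec]
    apply (algebraMap F K).injective
    simpa using h
  simpa using weights_aux ρ hρ T hfin hab hc
end
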